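/- arXiv:1709.00159 — 4 statements merged into one kernel-verified Lean document; each statement's English description precedes it below -/
import Mathlib

section
/- In the discrete Laplace setup of the context, assume balancedness, boundedness, admissibility, and (when r₁ = +∞) continuity at infinity and the convergence condition; assume moreover that the sum g(n) is regular, i.e. I₀ ∪ I₁ ∪ J₀ ∪ J₁ = ∅. Then there exist a constant C₁ > 0 and an integer N₀ ∈ ℕ such that |g(n)| ≤ C₁ · n^{Re γ(n) + 1} · Φ_max^n for all n ≥ N₀, where Φ_max := max_{r₀ ≤ x ≤ r₁} Φ(x) (with Φ extended continuously to x = +∞ when r₁ = +∞). -/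
/-!
Write `x = k / n`, so that the arguments of the Gamma functions are `n l_i(x) + α_i(n)` and
`n m_j(x) + β_j(n)`. By regularity the forms `l_i`, `m_j` are bounded below by a positive constant
on the range of `x`, so all arguments have large real part and Stirling's formula applies to every
factor, uniformly over the bounded complex shifts (`log_norm_Gamma_bound`). For the numerators
`|Γ(z)| ≤ Γ(Re z)` gives the upper bound; for the denominators the lower bound comes from
`|Γ(v)| Γ(u + Re v) ≤ Γ(Re v) |Γ(u + v)|` (`u > 0`, `Re v > 0`), a consequence of the Beta integral,
and compactness of the set of shifts. Balancedness cancels the terms `n log n` and `-n`, leaving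
`|G(k; n)| ≤ C n ^ (Re γ) exp (Re γ * w(x)) Φ(x) ^ n` for any `w` within bounded distance of all
`log l_i` and `log m_j` (`norm_dlG_le`).

For finite `r₁` take `w = 0`; there are `O(n)` summands, which gives the claim
(`dlSum_bound_finite`). For `r₁ = ∞` take `w(x) = log (1 + x)`. Here `log Φ(x) ≤ x D + O(1)` with
`D = log (∏ σ ^ σ / ∏ τ ^ τ) ≤ 0`. In either case
`(1 + x) ^ (Re γ) Φ(x) ^ n ≤ K (1 + x) ^ (-p) Φ_max ^ n` for some `p > 1`: by the convergence condition
if `D = 0`, and by exponential decay of `Φ` if `D < 0`. Since `∑ (1 + k / n) ^ (-p) = O(n)`, the claim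
follows (`dlSum_bound_infinite`).
-/

open Complex

/-- The gamma-product summand
`G(k;n) = ∏_i Γ(σ_i k + λ_i n + α_i(n)) / ∏_j Γ(τ_j k + μ_j n + β_j(n))`. -/
noncomputable def dlG {ι κ : Type*} [Fintype ι] [Fintype κ]
    (σv lv : ι → ℝ) (τv mv : κ → ℝ) (α : ι → ℕ → ℂ) (β : κ → ℕ → ℂ)
    (k : ℤ) (n : ℕ) : ℂ :=
  (∏ i, Complex.Gamma (((σv i * k + lv i * n : ℝ) : ℂ) + α i n)) /
    ∏ j, Complex.Gamma (((τv j * k + mv j * n : ℝ) : ℂ) + β j n)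

/-- The sum `g(n) = Σ_{k=⌈r₀n⌉}^{⌈r₁n⌉−1} G(k;n)` (an infinite sum when `r₁ = ∞`). -/
noncomputable def dlSum {ι κ : Type*} [Fintype ι] [Fintype κ]
    (σv lv : ι → ℝ) (τv mv : κ → ℝ) (α : ι → ℕ → ℂ) (β : κ → ℕ → ℂ)
    (r0 : ℝ) (r1 : EReal) (n : ℕ) : ℂ :=
  if r1 = ⊤ then ∑' k : ℕ, dlG σv lv τv mv α β (⌈r0 * n⌉ + k) n
  else ∑ k ∈ Finset.Ico ⌈r0 * n⌉ ⌈r1.toReal * n⌉, dlG σv lv τv mv α β k n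

/-- The multiplicative phase `Φ(x) = ∏_i l_i(x)^{l_i(x)} · ∏_j m_j(x)^{−m_j(x)}`
(`rpow` convention `0⁰ = 1`). -/
noncomputable def dlPhi {ι κ : Type*} [Fintype ι] [Fintype κ]
    (σv lv : ι → ℝ) (τv mv : κ → ℝ) (x : ℝ) : ℝ :=
  (∏ i, (σv i * x + lv i) ^ (σv i * x + lv i)) *
    ∏ j, (τv j * x + mv j) ^ (-(τv j * x + mv j))

/-- `Φ_max = max_{r₀ ≤ x ≤ r₁} Φ(x)` (with `Φ` extended continuously at `+∞`
when `r₁ = ∞`, in which case the supremum over `[r₀, ∞)` already accounts for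
the boundary value at infinity). -/
noncomputable def dlPhiMax {ι κ : Type*} [Fintype ι] [Fintype κ]
    (σv lv : ι → ℝ) (τv mv : κ → ℝ) (r0 : ℝ) (r1 : EReal) : ℝ :=
  if r1 = ⊤ then sSup (dlPhi σv lv τv mv '' Set.Ici r0)
  else sSup (dlPhi σv lv τv mv '' Set.Icc r0 r1.toReal)

/-- `γ(n) = Σ_i α_i(n) − Σ_j β_j(n) + (|J|−|I|)/2`. -/
noncomputable def dlGamma {ι κ : Type*} [Fintype ι] [Fintype κ]
    (α : ι → ℕ → ℂ) (β : κ → ℕ → ℂ) (n : ℕ) : ℂ :=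
  ∑ i, α i n - ∑ j, β j n + ((((Fintype.card κ : ℝ) - (Fintype.card ι : ℝ)) / 2 : ℝ) : ℂ)

/-! ### Stirling bounds for `Γ` -/

/-- The exponent `(x - 1/2) log x - x` of Stirling's approximation to `Γ(x)`, without the
constant `log √(2π)`. -/
noncomputable def stirlingExp (x : ℝ) : ℝ := (x - 1 / 2) * Real.log x - x

lemma stirlingExp_shift {R : ℝ} (hR : 0 ≤ R) {a t : ℝ} (ha : |a| ≤ R) (ht : 2 * R + 1 ≤ t) :
    |stirlingExp (t + a) - stirlingExp t - a * Real.log t| ≤ 5 * R := by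
  obtain ⟨ha1, ha2⟩ := abs_le.mp ha
  have ht0 : 0 < t := by linarith
  have hta : 0 < t + a := by linarith
  have hid : stirlingExp (t + a) - stirlingExp t - a * Real.log t
      = (t + a - 1 / 2) * Real.log ((t + a) / t) - a := by
    rw [Real.log_div hta.ne' ht0.ne']
    unfold stirlingExp
    ring
  have hlog : |Real.log ((t + a) / t)| ≤ 2 * R / t := by
    rw [abs_le]
    constructor
    · have h := Real.one_sub_inv_le_log_of_pos (div_pos hta ht0)
      refine le_trans ?_ h
      rw [inv_div, neg_le_iff_add_nonneg, one_sub_div hta.ne', div_add_div _ _ hta.ne' ht0.ne']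
      apply div_nonneg _ (by positivity)
      nlinarith
    · have h := Real.log_le_sub_one_of_pos (div_pos hta ht0)
      refine le_trans h ?_
      rw [div_sub_one ht0.ne']
      gcongr
      linarith
  have hfac : |t + a - 1 / 2| ≤ 2 * t := by rw [abs_le]; constructor <;> linarith
  rw [hid]
  calc |(t + a - 1 / 2) * Real.log ((t + a) / t) - a|
      ≤ |t + a - 1 / 2| * |Real.log ((t + a) / t)| + |a| := by
        rw [← abs_mul]; exact abs_sub _ _
    _ ≤ 2 * t * (2 * R / t) + R := by gcongr
    _ = 5 * R := by field_simp; ring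

/-- At the integers, Stirling's approximation is the boundedness of Mathlib's `stirlingSeq`. -/
lemma log_Gamma_nat_bound : ∃ C : ℝ, ∀ n : ℕ, 1 ≤ n →
    |Real.log (Real.Gamma n) - stirlingExp n| ≤ C := by
  refine ⟨4, fun n hn => ?_⟩
  obtain ⟨m, rfl⟩ : ∃ m, n = m + 1 := ⟨n - 1, by omega⟩
  have hlo := Stirling.log_stirlingSeq_bounded_by_constant m
  have hhi : Real.log (Stirling.stirlingSeq (m + 1)) ≤ Real.log (Stirling.stirlingSeq 1) :=
    Stirling.log_stirlingSeq'_antitone (Nat.zero_le m)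
  rw [Stirling.stirlingSeq_one, Real.log_div (by positivity) (by positivity), Real.log_exp,
    Real.log_sqrt (by norm_num)] at hhi
  have h2 := Real.log_two_gt_d9
  have h2' := Real.log_two_lt_d9
  have hpos : (0 : ℝ) < ((m + 1 : ℕ) : ℝ) := by positivity
  have hG : Real.Gamma ((m + 1 : ℕ) : ℝ) = (m.factorial : ℝ) := by
    push_cast; exact Real.Gamma_nat_eq_factorial m
  have hf : Real.log ((m + 1).factorial : ℝ)
      = Real.log ((m + 1 : ℕ) : ℝ) + Real.log (m.factorial : ℝ) := by
    rw [Nat.factorial_succ, Nat.cast_mul, Real.log_mul (by positivity) (by positivity)]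
  have hst := Stirling.log_stirlingSeq_formula (m + 1)
  rw [Real.log_div hpos.ne' (by positivity), Real.log_exp,
    Real.log_mul (by norm_num) hpos.ne', hf] at hst
  rw [hG]
  unfold stirlingExp
  rw [abs_le]
  constructor <;> nlinarith

/-- Log-convexity of `Γ` interpolates Stirling's approximation between integers. -/
lemma log_Gamma_bound : ∃ C : ℝ, ∀ x : ℝ, 4 ≤ x →
    |Real.log (Real.Gamma x) - stirlingExp x| ≤ C := by
  obtain ⟨C, hC⟩ := log_Gamma_nat_bound
  refine ⟨C + 6, fun x hx => ?_⟩
  obtain ⟨n, a, hn, ha0, ha1, rfl⟩ : ∃ (n : ℕ) (a : ℝ), 3 ≤ n ∧ 0 < a ∧ a ≤ 1 ∧ x = n + a := by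
    have h4 : 4 ≤ ⌈x⌉₊ := by
      have := Nat.ceil_mono hx
      simpa using this
    have h1 := Nat.ceil_lt_add_one (show 0 ≤ x by linarith)
    have h2 := Nat.le_ceil x
    refine ⟨⌈x⌉₊ - 1, x - (⌈x⌉₊ - 1), by omega, by linarith, by linarith, ?_⟩
    rw [Nat.cast_sub (by omega)]; push_cast; ring
  have hn' : (3 : ℝ) ≤ n := by exact_mod_cast hn
  have hfeq : ∀ {y : ℝ}, 0 < y → (Real.log ∘ Real.Gamma) (y + 1)
      = (Real.log ∘ Real.Gamma) y + Real.log y := by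
    intro y hy
    simp only [Function.comp]
    rw [Real.Gamma_add_one hy.ne', Real.log_mul hy.ne' (Real.Gamma_pos_of_pos hy).ne', add_comm]
  have hle := Real.BohrMollerup.f_add_nat_le Real.convexOn_log_Gamma hfeq
    (show n ≠ 0 by omega) ha0 ha1
  have hge := Real.BohrMollerup.f_add_nat_ge Real.convexOn_log_Gamma hfeq
    (show 2 ≤ n by omega) ha0
  simp only [Function.comp] at hle hge
  have hlog : Real.log n - 1 ≤ Real.log ((n : ℝ) - 1) := by
    have h := Real.log_le_sub_one_of_pos (show 0 < (n : ℝ) / (n - 1) by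
      apply div_pos <;> linarith)
    rw [Real.log_div (by linarith) (by linarith)] at h
    have : (n : ℝ) / (n - 1) ≤ 2 := by rw [div_le_iff₀] <;> linarith
    linarith
  have hs := stirlingExp_shift (R := 1) (a := a) (t := n) zero_le_one
    (by rw [abs_le]; constructor <;> linarith) (by linarith)
  have hCn := hC n (by omega)
  rw [abs_le] at hs hCn ⊢
  constructor <;> nlinarith

/-- `|B(u, v)| ≤ B(u, Re v)` for real `u`. No positivity is needed: the norm of the integrand of
`B(u, v)` is the integrand of `B(u, Re v)`, so if one integral diverges both are the junk value `0`.
-/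
lemma norm_betaIntegral_le (u : ℝ) (v : ℂ) :
    ‖betaIntegral u v‖ ≤ ‖betaIntegral u v.re‖ := by
  have hpt : ∀ w : ℂ, ∀ x ∈ Set.Ioo (0 : ℝ) 1,
      ‖(x : ℂ) ^ ((u : ℂ) - 1) * (1 - (x : ℂ)) ^ (w - 1)‖
        = x ^ (u - 1) * (1 - x) ^ (w.re - 1) := by
    intro w x hx
    rw [norm_mul, norm_cpow_eq_rpow_re_of_pos hx.1,
      show (1 - (x : ℂ)) = ((1 - x : ℝ) : ℂ) by push_cast; rfl,
      norm_cpow_eq_rpow_re_of_pos (by linarith [hx.2])]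
    simp
  have hreal : betaIntegral u v.re
      = ((∫ x in (0 : ℝ)..1, x ^ (u - 1) * (1 - x) ^ (v.re - 1) : ℝ) : ℂ) := by
    rw [betaIntegral, ← intervalIntegral.integral_ofReal]
    refine intervalIntegral.integral_congr fun x hx => ?_
    rw [Set.uIcc_of_le zero_le_one] at hx
    push_cast [ofReal_cpow hx.1, ofReal_cpow (show 0 ≤ 1 - x by linarith [hx.2])]
    rfl
  have hint : ∀ w : ℂ, ∫ x in (0 : ℝ)..1, ‖(x : ℂ) ^ ((u : ℂ) - 1) * (1 - (x : ℂ)) ^ (w - 1)‖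
      = ∫ x in (0 : ℝ)..1, x ^ (u - 1) * (1 - x) ^ (w.re - 1) := by
    intro w
    rw [intervalIntegral.integral_of_le zero_le_one, intervalIntegral.integral_of_le zero_le_one,
      MeasureTheory.integral_Ioc_eq_integral_Ioo, MeasureTheory.integral_Ioc_eq_integral_Ioo]
    exact MeasureTheory.setIntegral_congr_fun measurableSet_Ioo (hpt w)
  calc ‖betaIntegral u v‖
      ≤ ∫ x in (0 : ℝ)..1, ‖(x : ℂ) ^ ((u : ℂ) - 1) * (1 - (x : ℂ)) ^ (v - 1)‖ :=
        intervalIntegral.norm_integral_le_integral_norm zero_le_one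
    _ = ∫ x in (0 : ℝ)..1, x ^ (u - 1) * (1 - x) ^ (v.re - 1) := hint v
    _ ≤ ‖betaIntegral u v.re‖ := by
        rw [hreal, norm_real]
        exact le_abs_self _

lemma norm_Gamma_le_Gamma_re {z : ℂ} (hz : 0 < z.re) : ‖Gamma z‖ ≤ Real.Gamma z.re := by
  rw [Gamma_eq_integral hz, Real.Gamma_eq_integral hz, GammaIntegral]
  refine (MeasureTheory.norm_integral_le_integral_norm _).trans_eq ?_
  refine MeasureTheory.setIntegral_congr_fun measurableSet_Ioi fun x hx => ?_
  simp only [norm_mul, norm_real, Real.norm_eq_abs, Real.abs_exp]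
  rw [norm_cpow_eq_rpow_re_of_pos hx]
  simp

/-- The ratio `|Γ(z)| / Γ(Re z)` does not decrease under real translation to the right: in
`Γ(u) Γ(v) = B(u, v) Γ(u + v)` with `u` real, `|B(u, v)| ≤ B(u, Re v)`. -/
lemma norm_Gamma_ratio_mono {u : ℝ} (hu : 0 < u) {v : ℂ} (hv : 0 < v.re) :
    ‖Gamma v‖ * Real.Gamma (u + v.re) ≤ Real.Gamma v.re * ‖Gamma (u + v)‖ := by
  have h1 := Gamma_mul_Gamma_eq_betaIntegral (s := u) (t := v) (by simpa using hu) hv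
  have h2 := Gamma_mul_Gamma_eq_betaIntegral (s := u) (t := v.re) (by simpa using hu)
    (by simpa using hv)
  have hb := norm_betaIntegral_le u v
  have e1 := congrArg norm h1
  have e2 := congrArg norm h2
  rw [← ofReal_add] at e2
  simp only [norm_mul, Gamma_ofReal, norm_real, Real.norm_eq_abs] at e1 e2
  have p1 := Real.Gamma_pos_of_pos hu
  have p2 := Real.Gamma_pos_of_pos hv
  have p3 := Real.Gamma_pos_of_pos (add_pos hu hv)
  rw [abs_of_pos p1] at e1 e2
  rw [abs_of_pos p2, abs_of_pos p3] at e2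
  refine le_of_mul_le_mul_left ?_ p1
  calc Real.Gamma u * (‖Gamma v‖ * Real.Gamma (u + v.re))
      = Real.Gamma (u + v.re) * (‖Gamma (u + v)‖ * ‖betaIntegral u v‖) := by rw [← e1]; ring
    _ ≤ Real.Gamma (u + v.re) * (‖Gamma (u + v)‖ * ‖betaIntegral u v.re‖) := by gcongr
    _ = ‖Gamma (u + v)‖ * (Real.Gamma u * Real.Gamma v.re) := by rw [e2]; ring
    _ = Real.Gamma u * (Real.Gamma v.re * ‖Gamma (u + v)‖) := by ring

/-- Two-sided Stirling bound, uniform for bounded complex shifts `a` of a large real `t`. -/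
lemma log_norm_Gamma_bound {R : ℝ} (hR : 0 ≤ R) : ∃ C T : ℝ, 0 < T ∧ ∀ t : ℝ, T ≤ t → ∀ a : ℂ,
    ‖a‖ ≤ R → Gamma (t + a) ≠ 0 ∧
      |Real.log ‖Gamma (t + a)‖ - (stirlingExp t + a.re * Real.log t)| ≤ C := by
  obtain ⟨C, hC⟩ := log_Gamma_bound
  obtain ⟨c, hc0, hc⟩ : ∃ c : ℝ, 0 < c ∧ ∀ a : ℂ, ‖a‖ ≤ R →
      c ≤ ‖Gamma ((R + 1 : ℝ) + a)‖ / Real.Gamma ((R + 1 : ℝ) + a).re := by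
    have hre : ∀ a ∈ Metric.closedBall (0 : ℂ) R, 0 < ((R + 1 : ℝ) + a).re := by
      intro a ha
      have h1 : ‖a‖ ≤ R := by simpa using ha
      have h2 := (abs_le.mp (abs_re_le_norm a)).1
      rw [add_re, ofReal_re]
      linarith
    have hcont : ContinuousOn (fun a : ℂ => ‖Gamma ((R + 1 : ℝ) + a)‖
        / Real.Gamma ((R + 1 : ℝ) + a).re) (Metric.closedBall 0 R) := by
      intro a ha
      have h := hre a ha
      apply ContinuousAt.continuousWithinAt
      apply ContinuousAt.div
      · apply ContinuousAt.norm
        refine ContinuousAt.comp (g := Gamma) (f := fun a : ℂ => ((R + 1 : ℝ) : ℂ) + a) ?_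
          (by fun_prop)
        refine (differentiableAt_Gamma _ fun m hm => ?_).continuousAt
        rw [hm] at h
        simp only [neg_re, natCast_re] at h
        linarith [(Nat.cast_nonneg m : (0 : ℝ) ≤ m)]
      · refine ContinuousAt.comp (g := Real.Gamma)
          (f := fun a : ℂ => (((R + 1 : ℝ) : ℂ) + a).re) ?_ (by fun_prop)
        refine (Real.differentiableAt_Gamma fun m hm => ?_).continuousAt
        rw [hm] at h
        linarith [(Nat.cast_nonneg m : (0 : ℝ) ≤ m)]
      · exact (Real.Gamma_pos_of_pos h).ne'
    obtain ⟨a0, ha0, hmin⟩ := (isCompact_closedBall (0 : ℂ) R).exists_isMinOn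
      ⟨0, by simpa using hR⟩ hcont
    refine ⟨_, div_pos (norm_pos_iff.mpr (Gamma_ne_zero_of_re_pos (hre a0 ha0)))
      (Real.Gamma_pos_of_pos (hre a0 ha0)), fun a ha => hmin (by simpa using ha)⟩
  refine ⟨C + 5 * R + |Real.log c|, 2 * R + 4, by linarith, fun t ht a ha => ?_⟩
  have hare : |a.re| ≤ R := (abs_re_le_norm a).trans ha
  obtain ⟨h1, h2⟩ := abs_le.mp hare
  have hre : 0 < ((t : ℂ) + a).re := by rw [add_re, ofReal_re]; linarith
  have hne := Gamma_ne_zero_of_re_pos hre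
  refine ⟨hne, ?_⟩
  have hup := norm_Gamma_le_Gamma_re hre
  rw [add_re, ofReal_re] at hup
  have hre' : 0 < (((R + 1 : ℝ) : ℂ) + a).re := by rw [add_re, ofReal_re]; linarith
  have hlow := norm_Gamma_ratio_mono (u := t - (R + 1)) (by linarith) hre'
  have e1 : ((t - (R + 1) : ℝ) : ℂ) + (((R + 1 : ℝ) : ℂ) + a) = t + a := by push_cast; ring
  have e2 : t - (R + 1) + (((R + 1 : ℝ) : ℂ) + a).re = t + a.re := by
    rw [add_re, ofReal_re]; ring
  rw [e1, e2] at hlow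
  have hGp := Real.Gamma_pos_of_pos (show 0 < t + a.re by linarith)
  have hlow' : c * Real.Gamma (t + a.re) ≤ ‖Gamma (t + a)‖ := by
    have := hc a ha
    rw [le_div_iff₀ (Real.Gamma_pos_of_pos hre')] at this
    refine le_of_mul_le_mul_left ?_ (Real.Gamma_pos_of_pos hre')
    refine le_trans ?_ hlow
    nlinarith
  have l1 := Real.log_le_log (norm_pos_iff.mpr hne) hup
  have l2 := Real.log_le_log (mul_pos hc0 hGp) hlow'
  rw [Real.log_mul hc0.ne' hGp.ne'] at l2
  have hs := abs_le.mp (stirlingExp_shift hR hare (show 2 * R + 1 ≤ t by linarith))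
  have hCx := abs_le.mp (hC (t + a.re) (by linarith))
  have hlc := neg_abs_le (Real.log c)
  have hlc' := abs_nonneg (Real.log c)
  rw [abs_le]
  constructor <;> linarith [hs.1, hs.2, hCx.1, hCx.2]

/-! ### The size of a single summand -/

/-- Stirling's bound for one factor `Γ(n l + a)`, with `log l` replaced by a nearby `w` in the
part of the exponent that does not carry a factor `n`. -/
lemma log_norm_Gamma_scaled {R : ℝ} (hR : 0 ≤ R) : ∃ C T : ℝ, 0 < T ∧ ∀ (n : ℕ), 1 ≤ n →
    ∀ (l w M : ℝ) (a : ℂ), 0 < l → T ≤ l * n → |Real.log l - w| ≤ M → ‖a‖ ≤ R →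
      Gamma ((l * n : ℝ) + a) ≠ 0 ∧
      |Real.log ‖Gamma ((l * n : ℝ) + a)‖ - ((n * l + a.re - 1 / 2) * Real.log n
        + n * (l * Real.log l) + (a.re - 1 / 2) * w - n * l)| ≤ C + (R + 1 / 2) * M := by
  obtain ⟨C, T, hT, h⟩ := log_norm_Gamma_bound hR
  refine ⟨C, T, hT, fun n hn l w M a hl hlT hw ha => ?_⟩
  obtain ⟨h0, h1⟩ := h (l * n) hlT a ha
  refine ⟨h0, ?_⟩
  have hn' : (0 : ℝ) < n := by exact_mod_cast hn
  have hM : 0 ≤ M := (abs_nonneg _).trans hw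
  have hare : |a.re - 1 / 2| ≤ R + 1 / 2 := by
    refine (abs_sub _ _).trans ?_
    rw [abs_of_pos (show (0 : ℝ) < 1 / 2 by norm_num)]
    gcongr
    exact (abs_re_le_norm a).trans ha
  have hw' : |(a.re - 1 / 2) * (Real.log l - w)| ≤ (R + 1 / 2) * M := by
    rw [abs_mul]; gcongr
  unfold stirlingExp at h1
  rw [Real.log_mul hl.ne' hn'.ne'] at h1
  rw [abs_le] at h1 hw' ⊢
  constructor <;> linarith [h1.1, h1.2, hw'.1, hw'.2]

section
variable {ι κ : Type*} [Fintype ι] [Fintype κ]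
  {σv lv : ι → ℝ} {τv mv : κ → ℝ} {α : ι → ℕ → ℂ} {β : κ → ℕ → ℂ}

lemma dlPhi_pos {x : ℝ} (hl : ∀ i, 0 < σv i * x + lv i) (hm : ∀ j, 0 < τv j * x + mv j) :
    0 < dlPhi σv lv τv mv x :=
  mul_pos (Finset.prod_pos fun i _ => Real.rpow_pos_of_pos (hl i) _)
    (Finset.prod_pos fun j _ => Real.rpow_pos_of_pos (hm j) _)

lemma log_dlPhi {x : ℝ} (hl : ∀ i, 0 < σv i * x + lv i) (hm : ∀ j, 0 < τv j * x + mv j) :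
    Real.log (dlPhi σv lv τv mv x)
      = ∑ i, (σv i * x + lv i) * Real.log (σv i * x + lv i)
        - ∑ j, (τv j * x + mv j) * Real.log (τv j * x + mv j) := by
  have h1 : ∀ i, (σv i * x + lv i) ^ (σv i * x + lv i) ≠ 0 := fun i =>
    (Real.rpow_pos_of_pos (hl i) _).ne'
  have h2 : ∀ j, (τv j * x + mv j) ^ (-(τv j * x + mv j)) ≠ 0 := fun j =>
    (Real.rpow_pos_of_pos (hm j) _).ne'
  unfold dlPhi
  rw [Real.log_mul (Finset.prod_ne_zero_iff.mpr fun i _ => h1 i)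
    (Finset.prod_ne_zero_iff.mpr fun j _ => h2 j), Real.log_prod (fun i _ => h1 i),
    Real.log_prod (fun j _ => h2 j), sub_eq_add_neg, ← Finset.sum_neg_distrib]
  congr 1
  · exact Finset.sum_congr rfl fun i _ => Real.log_rpow (hl i) _
  · refine Finset.sum_congr rfl fun j _ => ?_
    rw [Real.log_rpow (hm j)]; ring

lemma dlGamma_re (n : ℕ) : (dlGamma α β n).re
    = ∑ i, ((α i n).re - 1 / 2) - ∑ j, ((β j n).re - 1 / 2) := by
  simp only [dlGamma, add_re, sub_re, re_sum, ofReal_re, Finset.sum_sub_distrib,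
    Finset.sum_const, Finset.card_univ, nsmul_eq_mul]
  ring

lemma sum_lin_eq (hbalσ : ∑ i, σv i = ∑ j, τv j) (hbalL : ∑ i, lv i = ∑ j, mv j) (x : ℝ) :
    ∑ i, (σv i * x + lv i) = ∑ j, (τv j * x + mv j) := by
  simp only [Finset.sum_add_distrib, ← Finset.sum_mul, hbalσ, hbalL]

/-- Uniform bound for a single summand when `x = k / n` stays in a set `S` on which all linear
forms are bounded below and have logarithms within bounded distance of a common function `w`.
Balancedness cancels the powers `n ^ (n l)` and the exponentials `exp (-n l)` of Stirling's
formula. -/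
lemma norm_dlG_le (hbalσ : ∑ i, σv i = ∑ j, τv j) (hbalL : ∑ i, lv i = ∑ j, mv j)
    {R : ℝ} (hR : 0 ≤ R) (hα : ∀ i n, ‖α i n‖ ≤ R) (hβ : ∀ j n, ‖β j n‖ ≤ R)
    {S : Set ℝ} {w : ℝ → ℝ} {c M : ℝ} (hc : 0 < c)
    (hl : ∀ i, ∀ x ∈ S, c ≤ σv i * x + lv i) (hm : ∀ j, ∀ x ∈ S, c ≤ τv j * x + mv j)
    (hlw : ∀ i, ∀ x ∈ S, |Real.log (σv i * x + lv i) - w x| ≤ M)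
    (hmw : ∀ j, ∀ x ∈ S, |Real.log (τv j * x + mv j) - w x| ≤ M) :
    ∃ C : ℝ, 0 < C ∧ ∃ N0 : ℕ, 1 ≤ N0 ∧ ∀ n : ℕ, N0 ≤ n → ∀ k : ℤ, (k : ℝ) / n ∈ S →
      ‖dlG σv lv τv mv α β k n‖ ≤ C * (n : ℝ) ^ (dlGamma α β n).re *
        (Real.exp ((dlGamma α β n).re * w (k / n)) * dlPhi σv lv τv mv (k / n) ^ n) := by
  obtain ⟨C, T, hT, h⟩ := log_norm_Gamma_scaled hR
  obtain ⟨B, hBdef⟩ : ∃ B, B = C + (R + 1 / 2) * M := ⟨_, rfl⟩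
  refine ⟨Real.exp (Fintype.card ι * B + Fintype.card κ * B), Real.exp_pos _,
    max 1 ⌈T / c⌉₊, le_max_left _ _, fun n hn k hk => ?_⟩
  have hn1 : 1 ≤ n := (le_max_left _ _).trans hn
  have hn0 : (0 : ℝ) < n := by exact_mod_cast hn1
  have hnT : T ≤ c * n := by
    have h1 : T / c ≤ n := (Nat.le_ceil _).trans (by exact_mod_cast (le_max_right _ _).trans hn)
    rwa [div_le_iff₀ hc, mul_comm] at h1
  set x : ℝ := k / n with hx
  have hkx : (k : ℝ) = x * n := by rw [hx]; field_simp
  have hl0 : ∀ i, 0 < σv i * x + lv i := fun i => hc.trans_le (hl i x hk)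
  have hm0 : ∀ j, 0 < τv j * x + mv j := fun j => hc.trans_le (hm j x hk)
  have hA : ∀ i, _ := fun i => h n hn1 (σv i * x + lv i) (w x) M (α i n) (hl0 i)
    (hnT.trans (by gcongr; exact hl i x hk)) (hlw i x hk) (hα i n)
  have hB : ∀ j, _ := fun j => h n hn1 (τv j * x + mv j) (w x) M (β j n) (hm0 j)
    (hnT.trans (by gcongr; exact hm j x hk)) (hmw j x hk) (hβ j n)
  have hG : dlG σv lv τv mv α β k n
      = (∏ i, Gamma (((σv i * x + lv i) * n : ℝ) + α i n)) /
        ∏ j, Gamma (((τv j * x + mv j) * n : ℝ) + β j n) := by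
    unfold dlG
    rw [hkx]
    congr 1
    · refine Finset.prod_congr rfl fun i _ => ?_
      congr 3; ring
    · refine Finset.prod_congr rfl fun j _ => ?_
      congr 3; ring
  have hGne : dlG σv lv τv mv α β k n ≠ 0 := by
    rw [hG]
    exact div_ne_zero (Finset.prod_ne_zero_iff.mpr fun i _ => (hA i).1)
      (Finset.prod_ne_zero_iff.mpr fun j _ => (hB j).1)
  have hlogG : Real.log ‖dlG σv lv τv mv α β k n‖
      = ∑ i, Real.log ‖Gamma (((σv i * x + lv i) * n : ℝ) + α i n)‖
        - ∑ j, Real.log ‖Gamma (((τv j * x + mv j) * n : ℝ) + β j n)‖ := by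
    have h1 : ∀ i, ‖Gamma (((σv i * x + lv i) * n : ℝ) + α i n)‖ ≠ 0 := fun i =>
      norm_ne_zero_iff.mpr (hA i).1
    have h2 : ∀ j, ‖Gamma (((τv j * x + mv j) * n : ℝ) + β j n)‖ ≠ 0 := fun j =>
      norm_ne_zero_iff.mpr (hB j).1
    rw [hG, norm_div, norm_prod, norm_prod,
      Real.log_div (Finset.prod_ne_zero_iff.mpr fun i _ => h1 i)
        (Finset.prod_ne_zero_iff.mpr fun j _ => h2 j), Real.log_prod (fun i _ => h1 i),
      Real.log_prod (fun j _ => h2 j)]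
  have hS1 : ∑ i, Real.log ‖Gamma (((σv i * x + lv i) * n : ℝ) + α i n)‖
      ≤ ∑ i, ((n * (σv i * x + lv i) + (α i n).re - 1 / 2) * Real.log n
        + n * ((σv i * x + lv i) * Real.log (σv i * x + lv i))
        + ((α i n).re - 1 / 2) * w x - n * (σv i * x + lv i) + B) :=
    Finset.sum_le_sum fun i _ => by linarith [(abs_le.mp (hA i).2).2, hBdef]
  have hS2 : ∑ j, ((n * (τv j * x + mv j) + (β j n).re - 1 / 2) * Real.log n
        + n * ((τv j * x + mv j) * Real.log (τv j * x + mv j))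
        + ((β j n).re - 1 / 2) * w x - n * (τv j * x + mv j) - B)
      ≤ ∑ j, Real.log ‖Gamma (((τv j * x + mv j) * n : ℝ) + β j n)‖ :=
    Finset.sum_le_sum fun j _ => by linarith [(abs_le.mp (hB j).2).1, hBdef]
  have hbal := sum_lin_eq hbalσ hbalL x
  have hPhi := log_dlPhi hl0 hm0
  have hg := dlGamma_re (α := α) (β := β) n
  simp only [add_sub_assoc] at hS1 hS2
  simp only [add_mul _ _ (Real.log n), Finset.sum_add_distrib, Finset.sum_sub_distrib,
    ← Finset.sum_mul, ← Finset.mul_sum, Finset.sum_const, Finset.card_univ,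
    nsmul_eq_mul] at hS1 hS2 hg hbal hPhi
  have hP := dlPhi_pos hl0 hm0
  have key : Real.log ‖dlG σv lv τv mv α β k n‖ ≤
      Fintype.card ι * B + Fintype.card κ * B + (dlGamma α β n).re * Real.log n
        + ((dlGamma α β n).re * w x + n * Real.log (dlPhi σv lv τv mv x)) := by
    rw [hlogG, hg, hPhi]
    rw [hbal] at hS1
    linarith
  calc ‖dlG σv lv τv mv α β k n‖
      = Real.exp (Real.log ‖dlG σv lv τv mv α β k n‖) :=
        (Real.exp_log (norm_pos_iff.mpr hGne)).symm
    _ ≤ _ := Real.exp_le_exp.mpr key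
    _ = _ := by
        rw [Real.exp_add, Real.exp_add _ ((dlGamma α β n).re * Real.log n),
          Real.exp_add ((dlGamma α β n).re * w x), Real.rpow_def_of_pos hn0,
          Real.exp_nat_mul (Real.log _), Real.exp_log hP, mul_comm (Real.log n)]

end

/-! ### Linear forms on intervals and half-lines -/

lemma exists_pos_forall_le {ι : Type*} [Finite ι] {f : ι → ℝ} (hf : ∀ i, 0 < f i) :
    ∃ c, 0 < c ∧ ∀ i, c ≤ f i := by
  cases isEmpty_or_nonempty ι
  · exact ⟨1, one_pos, fun i => isEmptyElim i⟩
  · obtain ⟨i, hi⟩ := Finite.exists_min f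
    exact ⟨f i, hf i, hi⟩

lemma exists_forall_le {ι : Type*} [Fintype ι] (f : ι → ℝ) : ∃ M, 0 ≤ M ∧ ∀ i, f i ≤ M :=
  ⟨∑ i, |f i|, Finset.sum_nonneg fun _ _ => abs_nonneg _, fun i => (le_abs_self _).trans
    (Finset.single_le_sum (f := fun i => |f i|) (fun _ _ => abs_nonneg _) (Finset.mem_univ i))⟩

lemma lin_bounds_Icc {s l a b : ℝ} (ha : 0 < s * a + l) (hb : 0 < s * b + l) :
    ∃ c M : ℝ, 0 < c ∧ ∀ x ∈ Set.Icc a b, c ≤ s * x + l ∧ |Real.log (s * x + l)| ≤ M := by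
  refine ⟨min (s * a + l) (s * b + l), |Real.log (s * a + l)| + |Real.log (s * b + l)|,
    lt_min ha hb, fun x hx => ?_⟩
  have hA := abs_le.mp (le_refl |Real.log (s * a + l)|)
  have hB := abs_le.mp (le_refl |Real.log (s * b + l)|)
  rcases le_total 0 s with hs | hs
  · have h1 : s * a + l ≤ s * x + l := by gcongr; exact hx.1
    have h2 : s * x + l ≤ s * b + l := by gcongr; exact hx.2
    refine ⟨min_le_of_left_le h1, ?_⟩
    have l1 := Real.log_le_log ha h1
    have l2 := Real.log_le_log (ha.trans_le h1) h2
    rw [abs_le]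
    constructor <;> linarith [hA.1, hA.2, hB.1, hB.2]
  · have h1 : s * b + l ≤ s * x + l := by nlinarith [hx.2]
    have h2 : s * x + l ≤ s * a + l := by nlinarith [hx.1]
    refine ⟨min_le_of_right_le h1, ?_⟩
    have l1 := Real.log_le_log hb h1
    have l2 := Real.log_le_log (hb.trans_le h1) h2
    rw [abs_le]
    constructor <;> linarith [hA.1, hA.2, hB.1, hB.2]

/-- On a half-line where `s x + l` stays positive with `s > 0`, it is comparable to `1 + x`, and
`(s x + l) log (s x + l)` equals `(s x + l) log (1 + x) + x s log s` up to a bounded error. -/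
lemma lin_bounds_Ici {s l a : ℝ} (hs : 0 < s) (ha0 : 0 ≤ a) (ha : 0 < s * a + l) :
    ∃ c M : ℝ, 0 < c ∧ ∀ x ∈ Set.Ici a, c ≤ s * x + l ∧
      |Real.log (s * x + l) - Real.log (1 + x)| ≤ M ∧
      |(s * x + l) * Real.log (s * x + l)
        - ((s * x + l) * Real.log (1 + x) + x * (s * Real.log s))| ≤ M := by
  set c := min ((s * a + l) / (1 + a)) s with hc
  have hc0 : 0 < c := lt_min (by positivity) hs
  set M1 := |Real.log c| + |Real.log (s + |l|)|
  set M2 := |l - s| * (1 + |l| / s) + |l * Real.log s|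
  have hM1 : 0 ≤ M1 := by positivity
  have hM2 : 0 ≤ M2 := by positivity
  refine ⟨c, M1 + M2, hc0, fun x hx => ?_⟩
  have hx : a ≤ x := hx
  have hx0 : 0 ≤ x := ha0.trans hx
  have hlow : c * (1 + x) ≤ s * x + l := by
    have h1 : c * (1 + a) ≤ s * a + l := by
      rw [← le_div_iff₀ (by positivity)]; exact min_le_left _ _
    have h2 : c ≤ s := min_le_right _ _
    nlinarith
  have hhigh : s * x + l ≤ (s + |l|) * (1 + x) := by
    have := le_abs_self l
    nlinarith [mul_nonneg (abs_nonneg l) hx0]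
  have hcl : c ≤ s * x + l := by nlinarith
  have hlpos : 0 < s * x + l := hc0.trans_le hcl
  have h1x : 0 < 1 + x := by linarith
  have hsl : 0 < s + |l| := by positivity
  refine ⟨hcl, ?_, ?_⟩
  · have l1 := Real.log_le_log (by positivity) hlow
    have l2 := Real.log_le_log hlpos hhigh
    rw [Real.log_mul hc0.ne' h1x.ne'] at l1
    rw [Real.log_mul hsl.ne' h1x.ne'] at l2
    have hA := abs_le.mp (le_refl |Real.log c|)
    have hB := abs_le.mp (le_refl |Real.log (s + |l|)|)
    rw [abs_le]
    constructor <;> linarith [hA.1, hA.2, hB.1, hB.2]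
  · -- The error is `A log (A / B) + l log s`, where `A = s x + l` and `B = s (1 + x)`.
    set A := s * x + l with hA
    set B := s * (1 + x) with hB
    have hBpos : 0 < B := by positivity
    have hAB : A - B = l - s := by rw [hA, hB]; ring
    have hid : A * Real.log A - (A * Real.log (1 + x) + x * (s * Real.log s))
        = A * Real.log (A / B) + l * Real.log s := by
      rw [Real.log_div hlpos.ne' hBpos.ne', hB, Real.log_mul hs.ne' h1x.ne', hA]
      ring
    have hr : A / B ≤ 1 + |l| / s := by
      rw [div_le_iff₀ hBpos, hA, hB]
      have e : (1 + |l| / s) * (s * (1 + x)) = (s + |l|) * (1 + x) := by field_simp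
      rw [e]; exact hhigh
    have hup : A * Real.log (A / B) ≤ |l - s| * (1 + |l| / s) := by
      calc A * Real.log (A / B) ≤ A * (A / B - 1) := by
            gcongr; exact Real.log_le_sub_one_of_pos (div_pos hlpos hBpos)
        _ = (l - s) * (A / B) := by rw [← hAB]; field_simp
        _ ≤ |l - s| * (A / B) := by gcongr; exact le_abs_self _
        _ ≤ |l - s| * (1 + |l| / s) := by gcongr
    have hdn : -(|l - s| * (1 + |l| / s)) ≤ A * Real.log (A / B) := by
      have h1 : A * (1 - (A / B)⁻¹) ≤ A * Real.log (A / B) := by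
        gcongr; exact Real.one_sub_inv_le_log_of_pos (div_pos hlpos hBpos)
      have h2 : A * (1 - (A / B)⁻¹) = l - s := by rw [← hAB]; field_simp
      have h3 : |l - s| ≤ |l - s| * (1 + |l| / s) :=
        le_mul_of_one_le_right (abs_nonneg _) (by linarith [div_nonneg (abs_nonneg l) hs.le])
      linarith [neg_abs_le (l - s)]
    have hC := abs_le.mp (le_refl |l * Real.log s|)
    rw [hid, abs_le]
    constructor <;> linarith [hC.1, hC.2]

/-! ### Summation over `k` -/

/-- Riemann-sum bound: grouping `k` by `k / n` compares the sum with `n ∑ (1 + q)^(-p)`. -/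
lemma sum_one_add_div_rpow {p : ℝ} (hp : 1 < p) : ∃ K : ℝ, 0 < K ∧ ∀ n : ℕ, 1 ≤ n →
    Summable (fun k : ℕ => (1 + (k : ℝ) / n) ^ (-p)) ∧
      ∑' k : ℕ, (1 + (k : ℝ) / n) ^ (-p) ≤ K * n := by
  have hsum : Summable (fun q : ℕ => (1 + (q : ℝ)) ^ (-p)) := by
    have := (summable_nat_add_iff 1).mpr (Real.summable_nat_rpow.mpr (show -p < -1 by linarith))
    refine this.congr fun q => ?_
    push_cast; rw [add_comm]
  have hnn : ∀ q : ℕ, 0 ≤ (1 + (q : ℝ)) ^ (-p) := fun q => by positivity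
  have hK0 : 0 ≤ ∑' q : ℕ, (1 + (q : ℝ)) ^ (-p) := tsum_nonneg hnn
  refine ⟨(∑' q : ℕ, (1 + (q : ℝ)) ^ (-p)) + 1, by linarith, fun n hn => ?_⟩
  have hn0 : (0 : ℝ) < n := by exact_mod_cast hn
  have hblock : ∀ N : ℕ, ∑ k ∈ Finset.range (n * N), (1 + (k : ℝ) / n) ^ (-p)
      ≤ n * ∑ q ∈ Finset.range N, (1 + (q : ℝ)) ^ (-p) := by
    intro N
    induction N with
    | zero => simp
    | succ N ih =>
      rw [Nat.mul_succ, Finset.sum_range_add, Finset.sum_range_succ, mul_add]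
      refine add_le_add ih ?_
      have : ∀ r ∈ Finset.range n, (1 + ((n * N + r : ℕ) : ℝ) / n) ^ (-p)
          ≤ (1 + (N : ℝ)) ^ (-p) := by
        intro r _
        refine Real.rpow_le_rpow_of_nonpos (by positivity) ?_ (by linarith)
        have : (N : ℝ) ≤ ((n * N + r : ℕ) : ℝ) / n := by
          rw [le_div_iff₀ hn0]; push_cast; nlinarith [(Nat.cast_nonneg r : (0 : ℝ) ≤ r)]
        linarith
      refine (Finset.sum_le_sum this).trans_eq ?_
      simp
  have hpart : ∀ m : ℕ, ∑ k ∈ Finset.range m, (1 + (k : ℝ) / n) ^ (-p)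
      ≤ (∑' q : ℕ, (1 + (q : ℝ)) ^ (-p) + 1) * n := by
    intro m
    calc ∑ k ∈ Finset.range m, (1 + (k : ℝ) / n) ^ (-p)
        ≤ ∑ k ∈ Finset.range (n * m), (1 + (k : ℝ) / n) ^ (-p) := by
          refine Finset.sum_le_sum_of_subset_of_nonneg
            (Finset.range_mono (Nat.le_mul_of_pos_left m hn)) fun k _ _ => by positivity
      _ ≤ n * ∑ q ∈ Finset.range m, (1 + (q : ℝ)) ^ (-p) := hblock m
      _ ≤ n * (∑' q : ℕ, (1 + (q : ℝ)) ^ (-p) + 1) := by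
          gcongr
          linarith [hsum.sum_le_tsum (Finset.range m) fun q _ => hnn q]
      _ = _ := mul_comm _ _
  have hnn' : ∀ k : ℕ, 0 ≤ (1 + (k : ℝ) / n) ^ (-p) := fun k => by positivity
  exact ⟨summable_of_sum_range_le hnn' hpart, Real.tsum_le_of_sum_range_le hnn' hpart⟩

section
variable {ι κ : Type*} [Fintype ι] [Fintype κ]
  {σv lv : ι → ℝ} {τv mv : κ → ℝ} {α : ι → ℕ → ℂ} {β : κ → ℕ → ℂ}

lemma dlGamma_re_le {R : ℝ} (hα : ∀ i n, ‖α i n‖ ≤ R) (hβ : ∀ j n, ‖β j n‖ ≤ R) (n : ℕ) :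
    (dlGamma α β n).re ≤ (Fintype.card ι + Fintype.card κ) * (R + 1 / 2) := by
  rw [dlGamma_re]
  have h1 : ∑ i, ((α i n).re - 1 / 2) ≤ ∑ _i : ι, (R + 1 / 2) :=
    Finset.sum_le_sum fun i _ => by
      linarith [(abs_le.mp ((abs_re_le_norm (α i n)).trans (hα i n))).2]
  have h2 : ∑ _j : κ, (-(R + 1 / 2)) ≤ ∑ j, ((β j n).re - 1 / 2) :=
    Finset.sum_le_sum fun j _ => by
      linarith [(abs_le.mp ((abs_re_le_norm (β j n)).trans (hβ j n))).1]
  simp only [Finset.sum_const, Finset.card_univ, nsmul_eq_mul] at h1 h2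
  linarith

lemma continuousOn_dlPhi {S : Set ℝ} (hl : ∀ i, ∀ x ∈ S, 0 < σv i * x + lv i)
    (hm : ∀ j, ∀ x ∈ S, 0 < τv j * x + mv j) : ContinuousOn (dlPhi σv lv τv mv) S := by
  unfold dlPhi
  refine ContinuousOn.mul (continuousOn_finsetProd _ fun i _ => ?_)
    (continuousOn_finsetProd _ fun j _ => ?_)
  · exact ContinuousOn.rpow (by fun_prop) (by fun_prop) fun x hx => Or.inl (hl i x hx).ne'
  · exact ContinuousOn.rpow (by fun_prop) (by fun_prop) fun x hx => Or.inl (hm j x hx).ne'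

/-- The sum over a bounded range: each of the `O(n)` summands is at most a constant times
`n ^ (Re γ) Φ_max ^ n`. -/
lemma dlSum_bound_finite {r0 r1 : ℝ} (hr : r0 < r1)
    (hbalσ : ∑ i, σv i = ∑ j, τv j) (hbalL : ∑ i, lv i = ∑ j, mv j)
    {R : ℝ} (hR : 0 ≤ R) (hα : ∀ i n, ‖α i n‖ ≤ R) (hβ : ∀ j n, ‖β j n‖ ≤ R)
    (hl0 : ∀ i, 0 < σv i * r0 + lv i) (hm0 : ∀ j, 0 < τv j * r0 + mv j)
    (hl1 : ∀ i, 0 < σv i * r1 + lv i) (hm1 : ∀ j, 0 < τv j * r1 + mv j) :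
    ∃ C1 : ℝ, 0 < C1 ∧ ∃ N0 : ℕ, ∀ n : ℕ, N0 ≤ n →
      ‖∑ k ∈ Finset.Ico ⌈r0 * n⌉ ⌈r1 * n⌉, dlG σv lv τv mv α β k n‖ ≤
        C1 * (n : ℝ) ^ ((dlGamma α β n).re + 1)
          * sSup (dlPhi σv lv τv mv '' Set.Icc r0 r1) ^ n := by
  choose cl Ml hcl hl using fun i => lin_bounds_Icc (hl0 i) (hl1 i)
  choose cm Mm hcm hm using fun j => lin_bounds_Icc (hm0 j) (hm1 j)
  obtain ⟨c1, hc1, hc1'⟩ := exists_pos_forall_le hcl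
  obtain ⟨c2, hc2, hc2'⟩ := exists_pos_forall_le hcm
  obtain ⟨M1, hM1, hM1'⟩ := exists_forall_le Ml
  obtain ⟨M2, hM2, hM2'⟩ := exists_forall_le Mm
  obtain ⟨C, hC, N0, hN0, h⟩ := norm_dlG_le (S := Set.Icc r0 r1) (w := fun _ => 0)
    (c := min c1 c2) (M := M1 + M2) hbalσ hbalL hR hα hβ (lt_min hc1 hc2)
    (fun i x hx => (min_le_left _ _).trans ((hc1' i).trans (hl i x hx).1))
    (fun j x hx => (min_le_right _ _).trans ((hc2' j).trans (hm j x hx).1))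
    (fun i x hx => by rw [sub_zero]; linarith [(hl i x hx).2, hM1' i])
    (fun j x hx => by rw [sub_zero]; linarith [(hm j x hx).2, hM2' j])
  have hlp : ∀ i, ∀ x ∈ Set.Icc r0 r1, 0 < σv i * x + lv i := fun i x hx =>
    (hcl i).trans_le (hl i x hx).1
  have hmp : ∀ j, ∀ x ∈ Set.Icc r0 r1, 0 < τv j * x + mv j := fun j x hx =>
    (hcm j).trans_le (hm j x hx).1
  have hbdd : BddAbove (dlPhi σv lv τv mv '' Set.Icc r0 r1) :=
    isCompact_Icc.bddAbove_image (continuousOn_dlPhi hlp hmp)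
  have hr' : 0 < r1 - r0 + 1 := by linarith
  refine ⟨C * (r1 - r0 + 1), by positivity, N0, fun n hn => ?_⟩
  have hn1 : 1 ≤ n := hN0.trans hn
  have hn1' : (1 : ℝ) ≤ n := by exact_mod_cast hn1
  have hn0 : (0 : ℝ) < n := by linarith
  set Φm := sSup (dlPhi σv lv τv mv '' Set.Icc r0 r1)
  have hΦm : 0 ≤ Φm := (dlPhi_pos (fun i => hlp i r0 (Set.left_mem_Icc.mpr hr.le))
    (fun j => hmp j r0 (Set.left_mem_Icc.mpr hr.le))).le.trans
      (le_csSup hbdd ⟨r0, Set.left_mem_Icc.mpr hr.le, rfl⟩)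
  have hterm : ∀ k ∈ Finset.Ico ⌈r0 * n⌉ ⌈r1 * n⌉, ‖dlG σv lv τv mv α β k n‖
      ≤ C * (n : ℝ) ^ (dlGamma α β n).re * Φm ^ n := by
    intro k hk
    rw [Finset.mem_Ico, Int.ceil_le, Int.lt_ceil] at hk
    have hx : (k : ℝ) / n ∈ Set.Icc r0 r1 :=
      ⟨by rw [le_div_iff₀ hn0]; exact hk.1, by rw [div_le_iff₀ hn0]; exact hk.2.le⟩
    refine (h n hn k hx).trans ?_
    rw [mul_zero, Real.exp_zero, one_mul]
    have h0 := dlPhi_pos (fun i => hlp i _ hx) (fun j => hmp j _ hx)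
    gcongr
    exact le_csSup hbdd ⟨_, hx, rfl⟩
  have hcard : ((⌈r1 * n⌉ - ⌈r0 * n⌉).toNat : ℝ) ≤ (r1 - r0 + 1) * n := by
    have hle : ⌈r0 * (n : ℝ)⌉ ≤ ⌈r1 * n⌉ := Int.ceil_mono (by gcongr)
    have e : ((⌈r1 * n⌉ - ⌈r0 * n⌉).toNat : ℝ) = (⌈r1 * n⌉ : ℝ) - ⌈r0 * n⌉ := by
      have := Int.toNat_of_nonneg (sub_nonneg.mpr hle)
      exact_mod_cast this
    rw [e]
    linarith [Int.ceil_lt_add_one (r1 * n), Int.le_ceil (r0 * n)]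
  calc ‖∑ k ∈ Finset.Ico ⌈r0 * n⌉ ⌈r1 * n⌉, dlG σv lv τv mv α β k n‖
      ≤ ∑ k ∈ Finset.Ico ⌈r0 * n⌉ ⌈r1 * n⌉, C * (n : ℝ) ^ (dlGamma α β n).re * Φm ^ n :=
        norm_sum_le_of_le _ hterm
    _ = (⌈r1 * n⌉ - ⌈r0 * n⌉).toNat * (C * (n : ℝ) ^ (dlGamma α β n).re * Φm ^ n) := by
        rw [Finset.sum_const, Int.card_Ico, nsmul_eq_mul]
    _ ≤ (r1 - r0 + 1) * n * (C * (n : ℝ) ^ (dlGamma α β n).re * Φm ^ n) := by gcongr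
    _ = _ := by rw [Real.rpow_add_one hn0.ne']; ring

/-- On a half-line, `log Φ(x)` is at most its linear asymptote up to a constant. -/
lemma log_dlPhi_le_linear {r0 : ℝ} (hr0 : 0 ≤ r0)
    (hbalσ : ∑ i, σv i = ∑ j, τv j) (hbalL : ∑ i, lv i = ∑ j, mv j)
    (hσ : ∀ i, 0 < σv i) (hτ : ∀ j, 0 < τv j)
    (hl0 : ∀ i, 0 < σv i * r0 + lv i) (hm0 : ∀ j, 0 < τv j * r0 + mv j) :
    ∃ K : ℝ, ∀ x ∈ Set.Ici r0, Real.log (dlPhi σv lv τv mv x)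
      ≤ x * (∑ i, σv i * Real.log (σv i) - ∑ j, τv j * Real.log (τv j)) + K := by
  choose cl Ml hcl hl using fun i => lin_bounds_Ici (hσ i) hr0 (hl0 i)
  choose cm Mm hcm hm using fun j => lin_bounds_Ici (hτ j) hr0 (hm0 j)
  refine ⟨∑ i, Ml i + ∑ j, Mm j, fun x hx => ?_⟩
  rw [log_dlPhi (fun i => (hcl i).trans_le (hl i x hx).1)
    (fun j => (hcm j).trans_le (hm j x hx).1)]
  have h1 : ∑ i, (σv i * x + lv i) * Real.log (σv i * x + lv i)
      ≤ ∑ i, ((σv i * x + lv i) * Real.log (1 + x) + x * (σv i * Real.log (σv i)) + Ml i) :=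
    Finset.sum_le_sum fun i _ => by linarith [(abs_le.mp (hl i x hx).2.2).2]
  have h2 : ∑ j, ((τv j * x + mv j) * Real.log (1 + x) + x * (τv j * Real.log (τv j)) - Mm j)
      ≤ ∑ j, (τv j * x + mv j) * Real.log (τv j * x + mv j) :=
    Finset.sum_le_sum fun j _ => by linarith [(abs_le.mp (hm j x hx).2.2).1]
  have hbal := sum_lin_eq hbalσ hbalL x
  rw [Finset.sum_add_distrib, Finset.sum_add_distrib, ← Finset.sum_mul, ← Finset.mul_sum,
    hbal] at h1
  rw [Finset.sum_sub_distrib, Finset.sum_add_distrib, ← Finset.sum_mul, ← Finset.mul_sum] at h2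
  linarith

lemma exists_mul_log_add_mul_le {P D : ℝ} (hP : 0 < P) (hD : D < 0) :
    ∃ K : ℝ, ∀ x : ℝ, 0 ≤ x → P * Real.log (1 + x) + x * D ≤ K := by
  refine ⟨-D - P * Real.log (-D / P), fun x hx => ?_⟩
  have he : 0 < -D / P := div_pos (neg_pos.mpr hD) hP
  have h := Real.log_le_sub_one_of_pos (mul_pos he (show 0 < 1 + x by linarith))
  rw [Real.log_mul he.ne' (by linarith)] at h
  have h' := mul_le_mul_of_nonneg_left h hP.le
  have e : P * (-D / P * (1 + x) - 1) = -D * (1 + x) - P := by field_simp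
  rw [e] at h'
  linarith

/-- The sum over a half-line: the factor `(1 + x) ^ (Re γ) Φ(x) ^ n` is at most
`(1 + x) ^ (-p) Φ_max ^ n` up to a constant for some `p > 1`. This is the convergence condition if
`∏ σ ^ σ = ∏ τ ^ τ`; otherwise `Φ` decays exponentially. -/
lemma dlSum_bound_infinite {r0 : ℝ} (hr0 : 0 ≤ r0)
    (hbalσ : ∑ i, σv i = ∑ j, τv j) (hbalL : ∑ i, lv i = ∑ j, mv j)
    {R : ℝ} (hR : 0 ≤ R) (hα : ∀ i n, ‖α i n‖ ≤ R) (hβ : ∀ j n, ‖β j n‖ ≤ R)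
    (hσ : ∀ i, 0 < σv i) (hτ : ∀ j, 0 < τv j)
    (hl0 : ∀ i, 0 < σv i * r0 + lv i) (hm0 : ∀ j, 0 < τv j * r0 + mv j)
    (hinf : ∏ i, σv i ^ σv i ≤ ∏ j, τv j ^ τv j)
    (hconv : (∏ i, σv i ^ σv i) = ∏ j, τv j ^ τv j →
      ∃ s : ℝ, 0 < s ∧ ∀ n : ℕ, (dlGamma α β n).re ≤ -1 - s) :
    ∃ C1 : ℝ, 0 < C1 ∧ ∃ N0 : ℕ, ∀ n : ℕ, N0 ≤ n →
      ‖∑' k : ℕ, dlG σv lv τv mv α β (⌈r0 * n⌉ + k) n‖ ≤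
        C1 * (n : ℝ) ^ ((dlGamma α β n).re + 1)
          * sSup (dlPhi σv lv τv mv '' Set.Ici r0) ^ n := by
  obtain ⟨K, hK⟩ := log_dlPhi_le_linear hr0 hbalσ hbalL hσ hτ hl0 hm0
  choose cl Ml hcl hl using fun i => lin_bounds_Ici (hσ i) hr0 (hl0 i)
  choose cm Mm hcm hm using fun j => lin_bounds_Ici (hτ j) hr0 (hm0 j)
  obtain ⟨c1, hc1, hc1'⟩ := exists_pos_forall_le hcl
  obtain ⟨c2, hc2, hc2'⟩ := exists_pos_forall_le hcm
  obtain ⟨M1, hM1, hM1'⟩ := exists_forall_le Ml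
  obtain ⟨M2, hM2, hM2'⟩ := exists_forall_le Mm
  obtain ⟨C, hC, N0, hN0, h⟩ := norm_dlG_le (S := Set.Ici r0) (w := fun x => Real.log (1 + x))
    (c := min c1 c2) (M := M1 + M2) hbalσ hbalL hR hα hβ (lt_min hc1 hc2)
    (fun i x hx => (min_le_left _ _).trans ((hc1' i).trans (hl i x hx).1))
    (fun j x hx => (min_le_right _ _).trans ((hc2' j).trans (hm j x hx).1))
    (fun i x hx => by linarith [(hl i x hx).2.1, hM1' i])
    (fun j x hx => by linarith [(hm j x hx).2.1, hM2' j])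
  have hpos : ∀ x ∈ Set.Ici r0, 0 < dlPhi σv lv τv mv x := fun x hx =>
    dlPhi_pos (fun i => (hcl i).trans_le (hl i x hx).1) (fun j => (hcm j).trans_le (hm j x hx).1)
  set D := ∑ i, σv i * Real.log (σv i) - ∑ j, τv j * Real.log (τv j) with hD
  have hpσ : 0 < ∏ i, σv i ^ σv i := Finset.prod_pos fun i _ => Real.rpow_pos_of_pos (hσ i) _
  have hpτ : 0 < ∏ j, τv j ^ τv j := Finset.prod_pos fun j _ => Real.rpow_pos_of_pos (hτ j) _
  have hDlog : D = Real.log (∏ i, σv i ^ σv i) - Real.log (∏ j, τv j ^ τv j) := by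
    rw [Real.log_prod (fun i _ => (Real.rpow_pos_of_pos (hσ i) _).ne'),
      Real.log_prod (fun j _ => (Real.rpow_pos_of_pos (hτ j) _).ne'), hD]
    congr 1
    · exact Finset.sum_congr rfl fun i _ => (Real.log_rpow (hσ i) _).symm
    · exact Finset.sum_congr rfl fun j _ => (Real.log_rpow (hτ j) _).symm
  have hD0 : D ≤ 0 := by rw [hDlog]; linarith [Real.log_le_log hpσ hinf]
  have hbdd : BddAbove (dlPhi σv lv τv mv '' Set.Ici r0) := by
    refine ⟨Real.exp K, ?_⟩
    rintro _ ⟨x, hx, rfl⟩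
    rw [← Real.log_le_iff_le_exp (hpos x hx)]
    have : x * D ≤ 0 := mul_nonpos_of_nonneg_of_nonpos (hr0.trans hx) hD0
    linarith [hK x hx]
  set Φm := sSup (dlPhi σv lv τv mv '' Set.Ici r0)
  have hle : ∀ x ∈ Set.Ici r0, dlPhi σv lv τv mv x ≤ Φm := fun x hx => le_csSup hbdd ⟨x, hx, rfl⟩
  have hΦm : 0 < Φm := (hpos r0 Set.self_mem_Ici).trans_le (hle r0 Set.self_mem_Ici)
  obtain ⟨p, K', hp, hK', hw⟩ : ∃ p K' : ℝ, 1 < p ∧ 0 < K' ∧ ∀ n : ℕ, 1 ≤ n → ∀ x ∈ Set.Ici r0,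
      Real.exp ((dlGamma α β n).re * Real.log (1 + x)) * dlPhi σv lv τv mv x ^ n
        ≤ K' * (1 + x) ^ (-p) * Φm ^ n := by
    rcases hinf.eq_or_lt with heq | hlt
    · obtain ⟨s, hs, hγ⟩ := hconv heq
      refine ⟨1 + s, 1, by linarith, one_pos, fun n hn x hx => ?_⟩
      have hx0 : 0 ≤ x := hr0.trans hx
      rw [one_mul, Real.rpow_def_of_pos (by linarith)]
      have hlog := Real.log_nonneg (show 1 ≤ 1 + x by linarith)
      have hφ := (hpos x hx).le
      rw [mul_comm (Real.log (1 + x))]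
      gcongr
      · linarith [hγ n]
      · exact hle x hx
    · have hDneg : D < 0 := by rw [hDlog]; linarith [Real.log_lt_log hpσ hlt]
      set P := (Fintype.card ι + Fintype.card κ) * (R + 1 / 2) with hP
      have hP0 : 0 ≤ P := by positivity
      obtain ⟨L, hL⟩ := exists_mul_log_add_mul_le (show 0 < P + 2 by linarith) hDneg
      refine ⟨2, Real.exp (L + K) / Φm, by norm_num, by positivity, fun n hn x hx => ?_⟩
      have hx0 : 0 ≤ x := hr0.trans hx
      -- One factor `Φ(x)` supplies the decay; the other `n - 1` are bounded by `Φ_max`.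
      obtain ⟨m, rfl⟩ : ∃ m, n = m + 1 := ⟨n - 1, by omega⟩
      have hφ := hpos x hx
      have hone : Real.exp ((dlGamma α β (m + 1)).re * Real.log (1 + x)) * dlPhi σv lv τv mv x
          ≤ Real.exp (L + K) * (1 + x) ^ (-2 : ℝ) := by
        rw [Real.rpow_def_of_pos (by linarith), ← Real.exp_log hφ, ← Real.exp_add,
          ← Real.exp_add]
        refine Real.exp_le_exp.mpr ?_
        have hγ : (dlGamma α β (m + 1)).re * Real.log (1 + x) ≤ P * Real.log (1 + x) := by
          have := Real.log_nonneg (show 1 ≤ 1 + x by linarith)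
          have := dlGamma_re_le hα hβ (m + 1)
          gcongr
        linarith [hL x hx0, hK x hx]
      calc Real.exp ((dlGamma α β (m + 1)).re * Real.log (1 + x))
            * dlPhi σv lv τv mv x ^ (m + 1)
          = Real.exp ((dlGamma α β (m + 1)).re * Real.log (1 + x)) * dlPhi σv lv τv mv x
            * dlPhi σv lv τv mv x ^ m := by ring
        _ ≤ Real.exp (L + K) * (1 + x) ^ (-2 : ℝ) * Φm ^ m := by
            gcongr
            exact hle x hx
        _ = Real.exp (L + K) / Φm * (1 + x) ^ (-2 : ℝ) * Φm ^ (m + 1) := by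
            rw [pow_succ]; field_simp
  obtain ⟨K2, hK2, hsum⟩ := sum_one_add_div_rpow hp
  refine ⟨C * K' * K2, by positivity, N0, fun n hn => ?_⟩
  have hn1 : 1 ≤ n := hN0.trans hn
  have hn0 : (0 : ℝ) < n := by exact_mod_cast hn1
  obtain ⟨hs1, hs2⟩ := hsum n hn1
  have hterm : ∀ k : ℕ, ‖dlG σv lv τv mv α β (⌈r0 * n⌉ + k) n‖
      ≤ C * (n : ℝ) ^ (dlGamma α β n).re * K' * Φm ^ n * (1 + (k : ℝ) / n) ^ (-p) := by
    intro k
    have hceil := Int.le_ceil (r0 * n)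
    have hk0 : (0 : ℝ) ≤ k := Nat.cast_nonneg k
    have hx : ((⌈r0 * n⌉ + k : ℤ) : ℝ) / n ∈ Set.Ici r0 := by
      rw [Set.mem_Ici, le_div_iff₀ hn0]; push_cast; linarith
    have hkx : (k : ℝ) / n ≤ ((⌈r0 * n⌉ + k : ℤ) : ℝ) / n := by
      gcongr; push_cast; linarith [mul_nonneg hr0 hn0.le]
    calc ‖dlG σv lv τv mv α β (⌈r0 * n⌉ + k) n‖
        ≤ _ := h n hn _ hx
      _ ≤ C * (n : ℝ) ^ (dlGamma α β n).re
          * (K' * (1 + ((⌈r0 * n⌉ + k : ℤ) : ℝ) / n) ^ (-p) * Φm ^ n) := by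
          exact mul_le_mul_of_nonneg_left (hw n hn1 _ hx) (by positivity)
      _ ≤ C * (n : ℝ) ^ (dlGamma α β n).re * (K' * (1 + (k : ℝ) / n) ^ (-p) * Φm ^ n) := by
          have : (1 + ((⌈r0 * n⌉ + k : ℤ) : ℝ) / n) ^ (-p) ≤ (1 + (k : ℝ) / n) ^ (-p) :=
            Real.rpow_le_rpow_of_nonpos (by positivity) (by linarith) (by linarith)
          gcongr
      _ = _ := by ring
  refine (tsum_of_norm_bounded (hs1.hasSum.mul_left _) hterm).trans ?_
  calc C * (n : ℝ) ^ (dlGamma α β n).re * K' * Φm ^ n * ∑' k : ℕ, (1 + (k : ℝ) / n) ^ (-p)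
      ≤ C * (n : ℝ) ^ (dlGamma α β n).re * K' * Φm ^ n * (K2 * n) := by gcongr
    _ = _ := by rw [Real.rpow_add_one hn0.ne']; ring

end


/-! ### The regular bound -/

/-- In the discrete Laplace setup, under balancedness, boundedness,
admissibility, continuity at infinity and convergence (when `r₁ = ∞`), and
regularity (`I₀ ∪ I₁ ∪ J₀ ∪ J₁ = ∅`), there are `C₁ > 0` and `N₀` such that
`|g(n)| ≤ C₁·n^{Re γ(n)+1}·Φ_max^n` for all `n ≥ N₀`. -/
theorem discrete_laplace_regular_bound {ι κ : Type*} [Fintype ι] [Fintype κ]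
    (σv lv : ι → ℝ) (τv mv : κ → ℝ) (α : ι → ℕ → ℂ) (β : κ → ℕ → ℂ)
    (r0 : ℝ) (r1 : EReal)
    (hr0 : 0 ≤ r0) (hr01 : (r0 : EReal) < r1)
    (hbalσ : ∑ i, σv i = ∑ j, τv j) (hbalL : ∑ i, lv i = ∑ j, mv j)
    (R : ℝ) (hR : 0 < R)
    (hα : ∀ i n, ‖α i n‖ ≤ R) (hβ : ∀ j n, ‖β j n‖ ≤ R)
    (hσ : ∀ i, σv i ≠ 0) (hτ : ∀ j, τv j ≠ 0)
    (hl0 : ∀ i, 0 ≤ σv i * r0 + lv i) (hm0 : ∀ j, 0 ≤ τv j * r0 + mv j)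
    (hl1 : ∀ i, (∀ y : ℝ, r1 = (y : EReal) → 0 ≤ σv i * y + lv i) ∧ (r1 = ⊤ → 0 < σv i))
    (hm1 : ∀ j, (∀ y : ℝ, r1 = (y : EReal) → 0 ≤ τv j * y + mv j) ∧ (r1 = ⊤ → 0 < τv j))
    (hinf : r1 = ⊤ → ∏ i, σv i ^ σv i ≤ ∏ j, τv j ^ τv j)
    (hconv : r1 = ⊤ → (∏ i, σv i ^ σv i) = ∏ j, τv j ^ τv j →
      ∃ s : ℝ, 0 < s ∧ ∀ n : ℕ, (dlGamma α β n).re ≤ -1 - s)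
    (hregI0 : ∀ i, σv i * r0 + lv i ≠ 0) (hregJ0 : ∀ j, τv j * r0 + mv j ≠ 0)
    (hregI1 : ∀ i, ∀ y : ℝ, r1 = (y : EReal) → σv i * y + lv i ≠ 0)
    (hregJ1 : ∀ j, ∀ y : ℝ, r1 = (y : EReal) → τv j * y + mv j ≠ 0) :
    ∃ C1 : ℝ, 0 < C1 ∧ ∃ N0 : ℕ, ∀ n : ℕ, N0 ≤ n →
      ‖dlSum σv lv τv mv α β r0 r1 n‖ ≤
        C1 * (n : ℝ) ^ ((dlGamma α β n).re + 1) * dlPhiMax σv lv τv mv r0 r1 ^ n := by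
  have hl0' : ∀ i, 0 < σv i * r0 + lv i := fun i => (hl0 i).lt_of_ne' (hregI0 i)
  have hm0' : ∀ j, 0 < τv j * r0 + mv j := fun j => (hm0 j).lt_of_ne' (hregJ0 j)
  unfold dlSum dlPhiMax
  induction r1 using EReal.rec with
  | bot => exact absurd hr01 not_lt_bot
  | top =>
    simp only [if_true]
    exact dlSum_bound_infinite hr0 hbalσ hbalL hR.le hα hβ (fun i => (hl1 i).2 rfl)
      (fun j => (hm1 j).2 rfl) hl0' hm0' (hinf rfl) (hconv rfl)
  | coe r =>
    simp only [EReal.coe_ne_top, if_false, EReal.toReal_coe]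
    exact dlSum_bound_finite (EReal.coe_lt_coe_iff.mp hr01) hbalσ hbalL hR.le hα hβ hl0' hm0'
      (fun i => ((hl1 i).1 r rfl).lt_of_ne' (hregI1 i r rfl))
      (fun j => ((hm1 j).1 r rfl).lt_of_ne' (hregJ1 j r rfl))
end

section
/- In the discrete Laplace setup of the context, assume balancedness, boundedness, admissibility and genericness, and (when r₁ = +∞) continuity at infinity and the convergence condition (but no properness assumption). Then for any d > Φ_max := max_{r₀ ≤ x ≤ r₁} Φ(x) there exist K > 0 and N ∈ ℕ such that |g(n)| ≤ K · dⁿ · (δ₀(n)^{−1} + δ₁(n)^{−1}) for all n ≥ N. -/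
/-!
The summand `G(k;n)` is estimated term by term. By Stirling's formula, `Γ(x + a)` has absolute value
at most a constant times `x^x e^{-x} (1 + x)^{Re a - 1/2}` when `x` is large, `1 / Γ(x + b)` is at
most a constant times the inverse of such a quantity for every `x ≥ 0` because `1 / Γ` is entire, and
for small `x` the numerator factor loses at most the inverse distance of `x + a` to the poles
(`exists_norm_Gamma_le_of_large`, `exists_norm_inv_Gamma_le`, `exists_norm_Gamma_le`). By
balancedness the factors `e^{-x}` and all powers of `n` cancel in the quotient, so that
`|G(k;n)|` is bounded by `Φ(k/n)^n` times a power-law correction `exp (dlPower …)` times the loss at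
the poles (`sum_stirlingExponent`, `exists_norm_dlG_le`).

The loss at the poles concerns only the indices in `I₀` (for `k` in the left half of the range) or
in `I₁` (for `k` in the right half): all other arguments grow linearly in `n`. For `i ∈ I₀` the
argument is `α_i^{(0)}(n) + |σ_i| q` with an integer `q ≥ 0`, and for `i ∈ I₁` it is
`α_i^{(1)}(n) + |σ_i| q` with `q ≥ 1`; hence its distance to `ℤ≤0` is at least the distance that
enters `δ₀(n)` or `δ₁(n)` (`exists_norm_dlG_le_left`, `exists_norm_dlG_le_right`).

As long as `k ≤ T n`, the power-law correction and the number of terms are polynomial in `n` and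
are absorbed by the gap `Φ_max < d` (`exists_bulk_bound`). This settles finite `r₁`. For `r₁ = ∞`
the terms with `k > T n` remain (`exists_tail`). If `∏ σ_i^{σ_i} < ∏ τ_j^{τ_j}`, then `Φ` decays
exponentially at infinity and these terms are dominated by a geometric series. In the case of
equality, the power-law correction is at most a constant times `k^{Re γ(n)} ≤ k^{-1-s}`, which is
summable.
-/

open Complex

open Classical in
/-- The index set `I₀ = {i : l_i(r₀) = 0}` (also used for `J₀`). -/
noncomputable def dlI0 {ι : Type*} [Fintype ι] (σv lv : ι → ℝ) (r0 : ℝ) : Finset ι :=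
  Finset.univ.filter fun i => σv i * r0 + lv i = 0

open Classical in
/-- The index set `I₁ = {i : l_i(r₁) = 0}` (empty when `r₁ = ∞`). -/
noncomputable def dlI1 {ι : Type*} [Fintype ι] (σv lv : ι → ℝ) (r1 : EReal) : Finset ι :=
  Finset.univ.filter fun i => r1 ≠ ⊤ ∧ σv i * r1.toReal + lv i = 0

/-- The "bad" set `ℤ≤0 + |σ|·ℤ≤−ν ⊂ ℂ`. -/
def dlBad (s : ℝ) (ν : ℕ) : Set ℂ :=
  {z | ∃ m m' : ℤ, m ≤ 0 ∧ m' ≤ -(ν : ℤ) ∧ z = (m : ℂ) + ((|s| : ℝ) : ℂ) * (m' : ℂ)}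

/-- `α_i^{(0)}(n) = α_i(n) + σ_i(⌈r₀n⌉ − r₀n)`. -/
noncomputable def dlAlpha0 {ι : Type*} (σv : ι → ℝ) (α : ι → ℕ → ℂ) (r0 : ℝ)
    (i : ι) (n : ℕ) : ℂ :=
  α i n + ((σv i * ((⌈r0 * n⌉ : ℝ) - r0 * n) : ℝ) : ℂ)

/-- `α_i^{(1)}(n) = α_i(n) + σ_i(⌈r₁n⌉ − r₁n)` (for finite `r₁`). -/
noncomputable def dlAlpha1 {ι : Type*} (σv : ι → ℝ) (α : ι → ℕ → ℂ) (r1 : EReal)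
    (i : ι) (n : ℕ) : ℂ :=
  α i n + ((σv i * ((⌈r1.toReal * n⌉ : ℝ) - r1.toReal * n) : ℝ) : ℂ)

/-- `δ₀(n) = min{1, ∏_{i∈I₀} dist(α_i^{(0)}(n), ℤ≤0 + |σ_i|ℤ≤0)}`. -/
noncomputable def dlDelta0 {ι : Type*} [Fintype ι] (σv lv : ι → ℝ) (α : ι → ℕ → ℂ)
    (r0 : ℝ) (n : ℕ) : ℝ :=
  min 1 (∏ i ∈ dlI0 σv lv r0, Metric.infDist (dlAlpha0 σv α r0 i n) (dlBad (σv i) 0))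

/-- `δ₁(n) = min{1, ∏_{i∈I₁} dist(α_i^{(1)}(n), ℤ≤0 + |σ_i|ℤ≤−1)}`. -/
noncomputable def dlDelta1 {ι : Type*} [Fintype ι] (σv lv : ι → ℝ) (α : ι → ℕ → ℂ)
    (r1 : EReal) (n : ℕ) : ℝ :=
  min 1 (∏ i ∈ dlI1 σv lv r1, Metric.infDist (dlAlpha1 σv α r1 i n) (dlBad (σv i) 1))

/-! ### Two-sided bounds for the gamma function -/

/-- The logarithm of the Stirling profile `x^x e^{-x} (1 + x)^{a - 1/2}` of `Γ(x + a)`. With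
`1 + x` in place of `x` in the last factor it stays finite at `x = 0`. -/
noncomputable def stirlingExponent (x a : ℝ) : ℝ :=
  (a - 1 / 2) * Real.log (1 + x) + (x * Real.log x - x)

/-- Propagation along unit translations: a property of the strip `1 ≤ Re z ≤ 2` that is stable
under `z ↦ z + 1` holds on the half-plane `1 ≤ Re z`. -/
lemma forall_of_strip {P : ℂ → Prop} (h0 : ∀ z : ℂ, 1 ≤ z.re → z.re ≤ 2 → P z)
    (h1 : ∀ z : ℂ, 1 ≤ z.re → P z → P (z + 1)) (z : ℂ) (hz : 1 ≤ z.re) : P z := by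
  obtain ⟨n, hn⟩ := exists_nat_ge (z.re - 2)
  induction n generalizing z with
  | zero => exact h0 z hz (by simp at hn; linarith)
  | succ n ih =>
    by_cases h : z.re ≤ 2
    · exact h0 z hz h
    · push Not at h
      have := h1 (z - 1) (by simp; linarith) (ih (z - 1) (by simp; linarith)
        (by push_cast at hn; simp; linarith))
      simpa using this

lemma norm_Gamma_le {z : ℂ} (hz : 0 < z.re) : ‖Complex.Gamma z‖ ≤ Real.Gamma z.re := by
  rw [Complex.Gamma_eq_integral hz, Real.Gamma_eq_integral hz, Complex.GammaIntegral]
  refine (MeasureTheory.norm_integral_le_integral_norm _).trans (le_of_eq ?_)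
  refine MeasureTheory.setIntegral_congr_fun measurableSet_Ioi fun x hx => ?_
  simp only [Set.mem_Ioi] at hx
  simp [Complex.norm_cpow_eq_rpow_re_of_pos hx, Complex.norm_exp]

lemma real_Gamma_continuousOn : ContinuousOn Real.Gamma (Set.Ioi 0) := fun x hx =>
  (Real.differentiableAt_Gamma (fun m => by
    have : (0 : ℝ) ≤ m := Nat.cast_nonneg m
    simp only [Set.mem_Ioi] at hx
    linarith)).continuousAt.continuousWithinAt

/-- `|Γ(z)| / Γ(Re z)` does not decrease under `z ↦ z + 1`, so its minimum over a compact part of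
the strip `1 ≤ Re z ≤ 2` bounds it from below. -/
lemma exists_Gamma_re_le (R : ℝ) : ∃ C : ℝ, 0 < C ∧ ∀ z : ℂ, 1 ≤ z.re → |z.im| ≤ R →
    Real.Gamma z.re ≤ C * ‖Complex.Gamma z‖ := by
  have hc : IsCompact (Set.Icc (1 : ℝ) 2 ×ℂ Set.Icc (-R) R) :=
    isCompact_Icc.reProdIm isCompact_Icc
  have hcont : ContinuousOn (fun z : ℂ => Real.Gamma z.re * ‖(Complex.Gamma z)⁻¹‖)
      (Set.Icc (1 : ℝ) 2 ×ℂ Set.Icc (-R) R) := by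
    refine ContinuousOn.mul ?_ (Complex.differentiable_one_div_Gamma.continuous.norm.continuousOn)
    refine real_Gamma_continuousOn.comp Complex.continuous_re.continuousOn fun z hz => ?_
    have := hz.1.1
    simp only [Set.mem_Ioi]
    linarith
  obtain ⟨C, hC⟩ := hc.bddAbove_image hcont
  refine ⟨max C 1, by positivity, fun z hz him => ?_⟩
  refine forall_of_strip (P := fun z => |z.im| ≤ R →
    Real.Gamma z.re ≤ max C 1 * ‖Complex.Gamma z‖) ?_ ?_ z hz him
  · intro z h1 h2 him
    have hG : 0 < ‖Complex.Gamma z‖ :=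
      norm_pos_iff.2 (Complex.Gamma_ne_zero_of_re_pos (by linarith))
    have := hC ⟨z, ⟨⟨h1, h2⟩, abs_le.1 him⟩, rfl⟩
    simp only [norm_inv] at this
    rw [← div_eq_mul_inv, div_le_iff₀ hG] at this
    exact this.trans (by gcongr; exact le_max_left _ _)
  · intro z h1 hz him
    have hre : 0 < z.re := by linarith
    have hz0 : z ≠ 0 := by rintro rfl; simp at hre
    rw [Complex.Gamma_add_one z hz0, Complex.add_re, Complex.one_re, Real.Gamma_add_one hre.ne',
      norm_mul]
    have h3 := hz (by simpa using him)
    have h4 := (le_abs_self z.re).trans (Complex.abs_re_le_norm z)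
    calc z.re * Real.Gamma z.re ≤ ‖z‖ * (max C 1 * ‖Complex.Gamma z‖) := by
          gcongr
      _ = _ := by ring

/-- The logarithmic mean dominates the geometric mean. -/
lemma log_le_sub_one_div_sqrt {p q : ℝ} (hp : 0 < p) (hpq : p ≤ q) :
    Real.log q - Real.log p ≤ (q - p) / Real.sqrt (p * q) := by
  have hq : 0 < q := hp.trans_le hpq
  set s := (Real.log q - Real.log p) / 2 with hs
  have h0 : 0 ≤ s := by
    have := Real.log_le_log hp hpq
    simp only [hs]; linarith
  have h1 : s ≤ Real.sinh s := Real.self_le_sinh_iff.2 h0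
  rw [Real.sinh_eq] at h1
  have e1 : Real.exp s * Real.sqrt (p * q) = q := by
    rw [Real.sqrt_eq_rpow, Real.rpow_def_of_pos (by positivity), ← Real.exp_add,
      Real.log_mul hp.ne' hq.ne', hs]
    conv_rhs => rw [← Real.exp_log hq]
    congr 1; ring
  have e2 : Real.exp (-s) * Real.sqrt (p * q) = p := by
    rw [Real.sqrt_eq_rpow, Real.rpow_def_of_pos (by positivity), ← Real.exp_add,
      Real.log_mul hp.ne' hq.ne', hs]
    conv_rhs => rw [← Real.exp_log hp]
    congr 1; ring
  rw [le_div_iff₀ (by positivity)]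
  have : (2 * s) * Real.sqrt (p * q) ≤ (Real.exp s - Real.exp (-s)) * Real.sqrt (p * q) := by
    gcongr; linarith
  have h2 : 2 * s = Real.log q - Real.log p := by rw [hs]; ring
  rw [← h2]
  linarith [sub_mul (Real.exp s) (Real.exp (-s)) (Real.sqrt (p * q))]

/-- The logarithmic defect of Stirling's formula; it changes by a summable amount under
`x ↦ x + 1`. -/
noncomputable def stirlingDefect (x : ℝ) : ℝ :=
  Real.log (Real.Gamma x) - ((x - 1 / 2) * Real.log x - x)

lemma stirlingDefect_succ {x : ℝ} (hx : 0 < x) :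
    stirlingDefect (x + 1) = stirlingDefect x +
      (1 - (x + 1 / 2) * (Real.log (x + 1) - Real.log x)) := by
  unfold stirlingDefect
  rw [Real.Gamma_add_one hx.ne', Real.log_mul hx.ne' (Real.Gamma_pos_of_pos hx).ne']
  ring

lemma stirlingDefect_succ_le {x : ℝ} (hx : 0 < x) :
    stirlingDefect (x + 1) ≤ stirlingDefect x := by
  have h := Real.le_log_one_add_of_nonneg (x := 1 / x) (by positivity)
  have e : 1 + 1 / x = (x + 1) / x := by field_simp
  rw [e, Real.log_div (by positivity) hx.ne'] at h
  have e2 : 2 * (1 / x) / (1 / x + 2) = 1 / (x + 1 / 2) := by field_simp; ring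
  rw [e2, div_le_iff₀ (by positivity)] at h
  rw [stirlingDefect_succ hx]
  linarith

lemma le_stirlingDefect_succ {x : ℝ} (hx : 0 < x) :
    stirlingDefect x - 1 / (8 * x) ≤ stirlingDefect (x + 1) - 1 / (8 * (x + 1)) := by
  have h := log_le_sub_one_div_sqrt hx (show x ≤ x + 1 by linarith)
  rw [stirlingDefect_succ hx]
  have e : 1 / (8 * x) - 1 / (8 * (x + 1)) = 1 / (8 * (x * (x + 1))) := by field_simp; ring
  have hp : 0 < x * (x + 1) := by positivity
  set p := x * (x + 1) with hpdef
  have h2 : (x + 1 / 2) / Real.sqrt p ≤ 1 + 1 / (8 * p) := by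
    rw [div_le_iff₀ (by positivity)]
    refine abs_le_of_sq_le_sq' ?_ (by positivity) |>.2
    rw [mul_pow, Real.sq_sqrt hp.le]
    have : (x + 1 / 2) ^ 2 = p + 1 / 4 := by rw [hpdef]; ring
    rw [this]
    have : (1 + 1 / (8 * p)) ^ 2 * p = p + 1 / 4 + 1 / (64 * p) := by field_simp; ring
    rw [this]
    have : 0 < 1 / (64 * p) := by positivity
    linarith
  have h3 : (x + 1 / 2) * (Real.log (x + 1) - Real.log x) ≤ (x + 1 / 2) / Real.sqrt p := by
    calc _ ≤ (x + 1 / 2) * ((x + 1 - x) / Real.sqrt p) := by gcongr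
      _ = _ := by ring
  linarith

/-- Stirling's formula for the real gamma function, up to a bounded factor. -/
lemma exists_stirlingDefect_bound : ∃ C : ℝ, 0 ≤ C ∧ ∀ x : ℝ, 1 ≤ x → |stirlingDefect x| ≤ C := by
  have hcont : ContinuousOn stirlingDefect (Set.Icc 1 2) := by
    unfold stirlingDefect
    have hG : ContinuousOn Real.Gamma (Set.Icc 1 2) :=
      real_Gamma_continuousOn.mono fun x hx => by
        simp only [Set.mem_Ioi]; linarith [hx.1]
    have hl : ContinuousOn Real.log (Set.Icc 1 2) :=
      Real.continuousOn_log.mono fun x hx => by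
        simp only [Set.mem_compl_iff, Set.mem_singleton_iff]; linarith [hx.1]
    refine (hG.log fun x hx => ?_).sub (((by fun_prop : ContinuousOn (fun x : ℝ => x - 1 / 2)
      (Set.Icc 1 2)).mul hl).sub continuousOn_id)
    exact (Real.Gamma_pos_of_pos (by linarith [hx.1])).ne'
  obtain ⟨C, hC⟩ := isCompact_Icc.exists_bound_of_continuousOn hcont
  have hC0 : 0 ≤ C := (norm_nonneg _).trans (hC 1 (by simp))
  refine ⟨C + 1, by linarith, fun x hx => ?_⟩
  have := forall_of_strip (P := fun z => stirlingDefect z.re ≤ C ∧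
    -C - 1 / 8 ≤ stirlingDefect z.re - 1 / (8 * z.re)) ?_ ?_ (x : ℂ) (by simpa using hx)
  · simp only [Complex.ofReal_re] at this
    have h8 : 0 ≤ 1 / (8 * x) := by positivity
    rw [abs_le]
    constructor <;> linarith [this.1, this.2]
  · intro z h1 h2
    have h3 := hC z.re ⟨h1, h2⟩
    rw [Real.norm_eq_abs, abs_le] at h3
    have h8 : 1 / (8 * z.re) ≤ 1 / 8 := by
      apply one_div_le_one_div_of_le <;> linarith
    exact ⟨h3.2, by linarith [h3.1]⟩
  · intro z h1 hz
    have hp : 0 < z.re := by linarith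
    simp only [Complex.add_re, Complex.one_re]
    exact ⟨(stirlingDefect_succ_le hp).trans hz.1, hz.2.trans (le_stirlingDefect_succ hp)⟩

lemma abs_log_one_add_le {u : ℝ} (hu : |u| ≤ 1 / 2) : |Real.log (1 + u)| ≤ 2 * |u| := by
  rw [abs_le] at hu
  have hp : 0 < 1 + u := by linarith
  have h1 := Real.log_le_sub_one_of_pos hp
  have h2 := Real.one_sub_inv_le_log_of_pos hp
  have e : 1 - (1 + u)⁻¹ = u / (1 + u) := by field_simp; ring
  rw [e] at h2
  have h3 : -(2 * |u|) ≤ u / (1 + u) := by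
    rw [le_div_iff₀ hp]
    nlinarith [neg_abs_le u, abs_nonneg u, le_abs_self u]
  rw [abs_le]
  constructor
  · linarith
  · linarith [le_abs_self u, abs_nonneg u]

/-- `Γ(x + a)` agrees with its Stirling profile up to a factor bounded in both directions, uniformly
in bounded `a`. -/
lemma exists_log_Gamma_bound {R : ℝ} (hR : 0 < R) : ∃ C : ℝ, 0 ≤ C ∧ ∀ x a : ℝ,
    2 * R + 2 ≤ x → |a| ≤ R → |Real.log (Real.Gamma (x + a)) - stirlingExponent x a| ≤ C := by
  obtain ⟨C, hC0, hC⟩ := exists_stirlingDefect_bound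
  refine ⟨C + 4 * R + R + (R + 1 / 2), by positivity, fun x a hx ha => ?_⟩
  have ha' := abs_le.1 ha
  have hx0 : 0 < x := by linarith
  have h1 := hC (x + a) (by linarith [ha'.1])
  have l1 : Real.log (x + a) = Real.log x + Real.log (1 + a / x) := by
    rw [← Real.log_mul hx0.ne', mul_add, mul_div_cancel₀ _ hx0.ne', mul_one]
    have : |a / x| ≤ 1 / 2 := by
      rw [abs_div, abs_of_pos hx0, div_le_iff₀ hx0]; linarith
    linarith [(abs_le.1 this).1]
  have l2 : Real.log (1 + x) = Real.log x + Real.log (1 + 1 / x) := by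
    rw [← Real.log_mul hx0.ne' (by positivity)]
    congr 1
    field_simp
    ring
  have b1 : |Real.log (1 + a / x)| ≤ 2 * (R / x) := by
    refine (abs_log_one_add_le ?_).trans ?_
    · rw [abs_div, abs_of_pos hx0, div_le_iff₀ hx0]; linarith
    · rw [abs_div, abs_of_pos hx0]; gcongr
  have b2 : |Real.log (1 + 1 / x)| ≤ 1 := by
    refine (abs_log_one_add_le ?_).trans ?_ <;>
    · rw [abs_of_pos (by positivity)]
      have : 1 / x ≤ 1 / 2 := by apply one_div_le_one_div_of_le <;> linarith
      linarith
  have c1 : |(x + a - 1 / 2) * Real.log (1 + a / x)| ≤ 4 * R := by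
    rw [abs_mul]
    have : |x + a - 1 / 2| ≤ 2 * x := by rw [abs_le]; constructor <;> linarith
    calc _ ≤ (2 * x) * (2 * (R / x)) := by gcongr
      _ = 4 * R := by field_simp; ring
  have c2 : |(a - 1 / 2) * Real.log (1 + 1 / x)| ≤ R + 1 / 2 := by
    rw [abs_mul]
    have : |a - 1 / 2| ≤ R + 1 / 2 := by rw [abs_le]; constructor <;> linarith
    calc _ ≤ (R + 1 / 2) * 1 := by gcongr
      _ = _ := by ring
  have e : Real.log (Real.Gamma (x + a)) - stirlingExponent x a =
      stirlingDefect (x + a) + (x + a - 1 / 2) * Real.log (1 + a / x) - a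
        - (a - 1 / 2) * Real.log (1 + 1 / x) := by
    unfold stirlingDefect stirlingExponent
    rw [l1, l2]
    ring
  rw [e]
  rw [abs_le] at *
  constructor <;> linarith [h1.1, h1.2, c1.1, c1.2, c2.1, c2.2]

lemma exists_abs_stirlingExponent_le (R X : ℝ) : ∃ C : ℝ, 0 ≤ C ∧ ∀ x a : ℝ, 0 ≤ x → x ≤ X →
    |a| ≤ R → |stirlingExponent x a| ≤ C := by
  have hc : IsCompact (Set.Icc 0 X ×ˢ Set.Icc (-R) R) := isCompact_Icc.prod isCompact_Icc
  have hcont : ContinuousOn (fun p : ℝ × ℝ => stirlingExponent p.1 p.2)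
      (Set.Icc 0 X ×ˢ Set.Icc (-R) R) := by
    unfold stirlingExponent
    refine ContinuousOn.add (ContinuousOn.mul (by fun_prop) ?_) (ContinuousOn.sub ?_ (by fun_prop))
    · refine ContinuousOn.log (by fun_prop) fun p hp => ?_
      have := hp.1.1
      linarith
    · exact (Real.continuous_mul_log.comp continuous_fst).continuousOn
  obtain ⟨C, hC⟩ := hc.exists_bound_of_continuousOn hcont
  refine ⟨max C 0, le_max_right _ _, fun x a h0 h1 ha => ?_⟩
  exact (hC (x, a) ⟨⟨h0, h1⟩, abs_le.1 ha⟩).trans (le_max_left _ _)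

lemma exists_norm_Gamma_le_of_large {R : ℝ} (hR : 0 < R) : ∃ C : ℝ, 0 < C ∧ ∀ (x : ℝ) (a : ℂ),
    2 * R + 2 ≤ x → ‖a‖ ≤ R →
    ‖Complex.Gamma (x + a)‖ ≤ C * Real.exp (stirlingExponent x a.re) := by
  obtain ⟨C, hC0, hC⟩ := exists_log_Gamma_bound hR
  refine ⟨Real.exp C, Real.exp_pos _, fun x a hx ha => ?_⟩
  have har := (Complex.abs_re_le_norm a).trans ha
  have hpos : 0 < x + a.re := by linarith [(abs_le.1 har).1]
  refine (norm_Gamma_le (by simpa using hpos)).trans ?_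
  have h := (abs_le.1 (hC x a.re hx har)).2
  rw [← Real.exp_add, Complex.add_re, Complex.ofReal_re,
    ← Real.exp_log (Real.Gamma_pos_of_pos hpos)]
  gcongr
  linarith

/-- No distance to the poles is needed for `1 / Γ`, which is entire. -/
lemma exists_norm_inv_Gamma_le {R : ℝ} (hR : 0 < R) : ∃ C : ℝ, 0 < C ∧ ∀ (x : ℝ) (b : ℂ),
    0 ≤ x → ‖b‖ ≤ R →
    ‖(Complex.Gamma (x + b))⁻¹‖ ≤ C * Real.exp (-stirlingExponent x b.re) := by
  obtain ⟨C, hC0, hC⟩ := exists_log_Gamma_bound hR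
  obtain ⟨B, hB0, hB⟩ := exists_Gamma_re_le R
  obtain ⟨E, hE0, hE⟩ := exists_abs_stirlingExponent_le R (2 * R + 2)
  obtain ⟨M, hM⟩ := (isCompact_closedBall (0 : ℂ) (3 * R + 2)).exists_bound_of_continuousOn
    Complex.differentiable_one_div_Gamma.continuous.continuousOn
  have hM0 : 0 ≤ M := (norm_nonneg _).trans (hM 0 (by simp; positivity))
  refine ⟨B * Real.exp C + M * Real.exp E, by positivity, fun x b hx hb => ?_⟩
  have hbr := (Complex.abs_re_le_norm b).trans hb
  rw [add_mul]
  rcases le_total (2 * R + 2) x with h | h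
  · have hpos : 1 ≤ x + b.re := by linarith [(abs_le.1 hbr).1]
    have hG : 0 < ‖Complex.Gamma (x + b)‖ :=
      norm_pos_iff.2 (Complex.Gamma_ne_zero_of_re_pos (by simp; linarith))
    have h1 := hB (x + b) (by simpa using hpos)
      (by simpa using (Complex.abs_im_le_norm b).trans hb)
    have h2 := (abs_le.1 (hC x b.re h hbr)).1
    have h3 : Real.exp (stirlingExponent x b.re - C) ≤ Real.Gamma (x + b.re) := by
      rw [← Real.exp_log (Real.Gamma_pos_of_pos (by linarith : 0 < x + b.re))]
      gcongr
      linarith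
    simp only [Complex.add_re, Complex.ofReal_re] at h1
    have h4 := h3.trans h1
    have : ‖(Complex.Gamma (x + b))⁻¹‖ ≤
        B * Real.exp C * Real.exp (-stirlingExponent x b.re) := by
      rw [norm_inv, inv_le_iff_one_le_mul₀ hG]
      calc (1 : ℝ) = Real.exp C * Real.exp (-stirlingExponent x b.re) *
            Real.exp (stirlingExponent x b.re - C) := by
            rw [← Real.exp_add, ← Real.exp_add, ← Real.exp_zero]; congr 1; ring
        _ ≤ Real.exp C * Real.exp (-stirlingExponent x b.re) * (B * ‖Complex.Gamma (x + b)‖) := by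
            gcongr
        _ = _ := by ring
    have : 0 ≤ M * Real.exp E * Real.exp (-stirlingExponent x b.re) := by positivity
    linarith
  · have h1 := hM (x + b) (by
      simp only [mem_closedBall_zero_iff]
      refine (norm_add_le _ _).trans ?_
      simp only [Complex.norm_real, Real.norm_eq_abs, abs_of_nonneg hx]
      linarith)
    have h2 := (abs_le.1 (hE x b.re hx h hbr)).2
    have h3 : 1 ≤ Real.exp E * Real.exp (-stirlingExponent x b.re) := by
      rw [← Real.exp_add]; apply Real.one_le_exp; linarith
    have h4 : M ≤ M * Real.exp E * Real.exp (-stirlingExponent x b.re) := by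
      rw [mul_assoc]; exact le_mul_of_one_le_right hM0 h3
    have : 0 ≤ B * Real.exp C * Real.exp (-stirlingExponent x b.re) := by positivity
    linarith

/-- On a bounded set, `|Γ|` is at most a constant over the distance to the poles. The recursion
`Γ(z) = Γ(z + 1) / z` moves the bound one strip to the left. -/
lemma exists_norm_Gamma_le_of_bounded (N : ℕ) : ∀ M : ℝ, ∃ C : ℝ, 0 ≤ C ∧ ∀ (z : ℂ) (ρ : ℝ),
    1 - (N : ℝ) ≤ z.re → ‖z‖ ≤ M → 0 < ρ → ρ ≤ 1 → (∀ m : ℕ, ρ ≤ ‖z + m‖) →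
    ‖Complex.Gamma z‖ ≤ C * ρ⁻¹ := by
  have key : ∀ A B : ℝ, 0 < A → ∃ C : ℝ, 0 ≤ C ∧
      ∀ z : ℂ, A ≤ z.re → z.re ≤ B → ‖Complex.Gamma z‖ ≤ C := by
    intro A B hA
    obtain ⟨C, hC⟩ := (isCompact_Icc (a := A) (b := B)).exists_bound_of_continuousOn
      (real_Gamma_continuousOn.mono fun x hx => by simp only [Set.mem_Ioi]; linarith [hx.1])
    refine ⟨max C 0, le_max_right _ _, fun z h1 h2 => ?_⟩
    exact (norm_Gamma_le (by linarith)).trans (((le_abs_self _).trans (hC z.re ⟨h1, h2⟩)).trans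
      (le_max_left _ _))
  induction N with
  | zero =>
    intro M
    obtain ⟨C, hC0, hC⟩ := key 1 M one_pos
    refine ⟨C, hC0, fun z ρ h1 h2 h3 h4 _ => ?_⟩
    refine (hC z (by simpa using h1) (((le_abs_self _).trans (Complex.abs_re_le_norm z)).trans
      h2)).trans ?_
    exact le_mul_of_one_le_right hC0 (by rw [one_le_inv₀ h3]; exact h4)
  | succ N ih =>
    intro M
    obtain ⟨C, hC0, hC⟩ := ih (M + 1)
    obtain ⟨D, hD0, hD⟩ := key (1 / 2) (3 / 2) (by norm_num)
    refine ⟨2 * C + D, by positivity, fun z ρ h1 h2 h3 h4 h5 => ?_⟩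
    have hz : ρ ≤ ‖z‖ := by simpa using h5 0
    have hzp : 0 < ‖z‖ := h3.trans_le hz
    have hz0 : z ≠ 0 := norm_pos_iff.1 hzp
    have e : ‖Complex.Gamma z‖ = ‖Complex.Gamma (z + 1)‖ * ‖z‖⁻¹ := by
      rw [Complex.Gamma_add_one z hz0, norm_mul]; field_simp
    rw [e, add_mul]
    rcases le_total (1 / 2) ‖z‖ with h | h
    · have h6 := hC (z + 1) ρ (by push_cast at h1; simp; linarith)
        ((norm_add_le _ _).trans (by simpa using h2)) h3 h4 (fun m => by
          have := h5 (m + 1)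
          push_cast at this
          rwa [add_comm (m : ℂ), ← add_assoc] at this)
      have h7 : ‖z‖⁻¹ ≤ 2 := by
        rw [inv_le_comm₀ hzp two_pos]; linarith
      have : ‖Complex.Gamma (z + 1)‖ * ‖z‖⁻¹ ≤ C * ρ⁻¹ * 2 := by gcongr
      have : 0 ≤ D * ρ⁻¹ := by positivity
      linarith
    · have h6 := abs_le.1 ((Complex.abs_re_le_norm z).trans h)
      have h7 := hD (z + 1) (by simp; linarith [h6.1]) (by simp; linarith [h6.2])
      have : ‖Complex.Gamma (z + 1)‖ * ‖z‖⁻¹ ≤ D * ρ⁻¹ := by gcongr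
      have : 0 ≤ 2 * C * ρ⁻¹ := by positivity
      linarith

/-- The Stirling bound down to `x = 0`, at the cost of the inverse distance `ρ⁻¹` to the poles. -/
lemma exists_norm_Gamma_le {R : ℝ} (hR : 0 < R) : ∃ C : ℝ, 0 < C ∧ ∀ (x : ℝ) (a : ℂ) (ρ : ℝ),
    0 ≤ x → ‖a‖ ≤ R → 0 < ρ → ρ ≤ 1 → (∀ m : ℕ, ρ ≤ ‖(x + a : ℂ) + m‖) →
    ‖Complex.Gamma (x + a)‖ ≤ C * ρ⁻¹ * Real.exp (stirlingExponent x a.re) := by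
  obtain ⟨C, hC0, hC⟩ := exists_norm_Gamma_le_of_large hR
  obtain ⟨E, hE0, hE⟩ := exists_abs_stirlingExponent_le R (2 * R + 2)
  obtain ⟨N, hN⟩ := exists_nat_ge (R + 1)
  obtain ⟨D, hD0, hD⟩ := exists_norm_Gamma_le_of_bounded N (3 * R + 2)
  refine ⟨C + D * Real.exp E, by positivity, fun x a ρ hx ha h0 h1 hm => ?_⟩
  have har := (Complex.abs_re_le_norm a).trans ha
  rw [add_mul, add_mul]
  rcases le_total (2 * R + 2) x with h | h
  · have h2 := hC x a h ha
    have h3 : C * Real.exp (stirlingExponent x a.re) ≤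
        C * ρ⁻¹ * Real.exp (stirlingExponent x a.re) := by
      gcongr
      exact le_mul_of_one_le_right hC0.le (by rwa [one_le_inv₀ h0])
    have : 0 ≤ D * Real.exp E * ρ⁻¹ * Real.exp (stirlingExponent x a.re) := by positivity
    linarith
  · have h2 := hD (x + a) ρ (by simp; linarith [(abs_le.1 har).1]) (by
      refine (norm_add_le _ _).trans ?_
      simp only [Complex.norm_real, Real.norm_eq_abs, abs_of_nonneg hx]
      linarith) h0 h1 hm
    have h3 : 1 ≤ Real.exp E * Real.exp (stirlingExponent x a.re) := by
      rw [← Real.exp_add]; apply Real.one_le_exp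
      linarith [(abs_le.1 (hE x a.re hx h har)).1]
    have h4 : D * ρ⁻¹ ≤ D * Real.exp E * ρ⁻¹ * Real.exp (stirlingExponent x a.re) := by
      calc _ ≤ D * ρ⁻¹ * (Real.exp E * Real.exp (stirlingExponent x a.re)) :=
            le_mul_of_one_le_right (by positivity) h3
        _ = _ := by ring
    have : 0 ≤ C * ρ⁻¹ * Real.exp (stirlingExponent x a.re) := by positivity
    linarith

/-! ### The size of one summand -/

/-- `log Φ`, with the junk value `Real.log 0 = 0` playing the role of the convention `0⁰ = 1`. -/
noncomputable def dlLogPhi {ι κ : Type*} [Fintype ι] [Fintype κ]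
    (σv lv : ι → ℝ) (τv mv : κ → ℝ) (t : ℝ) : ℝ :=
  ∑ i, (σv i * t + lv i) * Real.log (σv i * t + lv i) -
    ∑ j, (τv j * t + mv j) * Real.log (τv j * t + mv j)

/-- The logarithm of the power-law correction to `Φ(k/n)^n` in the size of `G(k;n)`. -/
noncomputable def dlPower {ι κ : Type*} [Fintype ι] [Fintype κ]
    (σv lv : ι → ℝ) (τv mv : κ → ℝ) (α : ι → ℕ → ℂ) (β : κ → ℕ → ℂ) (k : ℤ) (n : ℕ) : ℝ :=
  ∑ i, ((α i n).re - 1 / 2) * Real.log (1 + (σv i * k + lv i * n)) -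
    ∑ j, ((β j n).re - 1 / 2) * Real.log (1 + (τv j * k + mv j * n))

lemma dlPhi_eq_exp {ι κ : Type*} [Fintype ι] [Fintype κ]
    (σv lv : ι → ℝ) (τv mv : κ → ℝ) {t : ℝ} (hl : ∀ i, 0 ≤ σv i * t + lv i)
    (hm : ∀ j, 0 ≤ τv j * t + mv j) :
    dlPhi σv lv τv mv t = Real.exp (dlLogPhi σv lv τv mv t) := by
  have h1 : ∀ x : ℝ, 0 ≤ x → x ^ x = Real.exp (x * Real.log x) := fun x hx => by
    rcases hx.eq_or_lt with rfl | h
    · simp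
    · rw [Real.rpow_def_of_pos h, mul_comm]
  rw [dlPhi, dlLogPhi, Real.exp_sub, Real.exp_sum, Real.exp_sum, div_eq_mul_inv,
    ← Finset.prod_inv_distrib]
  congr 1
  · exact Finset.prod_congr rfl fun i _ => h1 _ (hl i)
  · exact Finset.prod_congr rfl fun j _ => by rw [Real.rpow_neg (hm j), h1 _ (hm j)]

lemma dlLogPhi_continuous {ι κ : Type*} [Fintype ι] [Fintype κ]
    (σv lv : ι → ℝ) (τv mv : κ → ℝ) : Continuous (dlLogPhi σv lv τv mv) := by
  unfold dlLogPhi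
  refine Continuous.sub (continuous_finsetSum _ fun i _ => ?_)
    (continuous_finsetSum _ fun i _ => ?_)
  · exact Real.continuous_mul_log.comp (by fun_prop : Continuous fun t => σv i * t + lv i)
  · exact Real.continuous_mul_log.comp (by fun_prop : Continuous fun t => τv i * t + mv i)

/-- Balancedness cancels the factors `n^{l_i}` and `e^{-x}` of Stirling's formula, leaving
`n log Φ(k/n)` and the power-law correction. -/
lemma sum_stirlingExponent {ι κ : Type*} [Fintype ι] [Fintype κ]
    (σv lv : ι → ℝ) (τv mv : κ → ℝ) (α : ι → ℕ → ℂ) (β : κ → ℕ → ℂ)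
    (hbalσ : ∑ i, σv i = ∑ j, τv j) (hbalL : ∑ i, lv i = ∑ j, mv j) (k : ℤ) (n : ℕ)
    (hn : 1 ≤ n) :
    ∑ i, stirlingExponent (σv i * k + lv i * n) (α i n).re -
      ∑ j, stirlingExponent (τv j * k + mv j * n) (β j n).re =
    dlPower σv lv τv mv α β k n + n * dlLogPhi σv lv τv mv (k / n) := by
  have hn0 : (0 : ℝ) < n := by exact_mod_cast hn
  have h1 : ∀ s l : ℝ, (s * k + l * n) * Real.log (s * k + l * n) - (s * k + l * n) =
      n * ((s * (k / n) + l) * Real.log (s * (k / n) + l)) +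
        (Real.log n - 1) * (s * k + l * n) := by
    intro s l
    have e : s * k + l * n = n * (s * (k / n) + l) := by field_simp
    rw [e]
    rcases eq_or_ne (s * (k / n) + l) 0 with h | h
    · rw [h]; simp
    · rw [Real.log_mul hn0.ne' h]; ring
  have h2 : ∑ i, (σv i * k + lv i * n) = ∑ j, (τv j * k + mv j * n) := by
    simp only [Finset.sum_add_distrib, ← Finset.sum_mul, hbalσ, hbalL]
  simp only [stirlingExponent, h1, Finset.sum_add_distrib, ← Finset.mul_sum, h2, dlPower, dlLogPhi]
  ring

open Classical in
/-- Only the numerator factors in `A` may come close to a pole; each of them costs the inverse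
distance to the poles. -/
lemma exists_norm_dlG_le {ι κ : Type*} [Fintype ι] [Fintype κ]
    (σv lv : ι → ℝ) (τv mv : κ → ℝ) (α : ι → ℕ → ℂ) (β : κ → ℕ → ℂ)
    (hbalσ : ∑ i, σv i = ∑ j, τv j) (hbalL : ∑ i, lv i = ∑ j, mv j)
    {R : ℝ} (hR : 0 < R) (hα : ∀ i n, ‖α i n‖ ≤ R) (hβ : ∀ j n, ‖β j n‖ ≤ R) :
    ∃ C : ℝ, 0 < C ∧ ∀ (A : Finset ι) (ρ : ι → ℝ) (k : ℤ) (n : ℕ), 1 ≤ n →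
      (∀ i, 0 ≤ σv i * k + lv i * n) → (∀ j, 0 ≤ τv j * k + mv j * n) →
      (∀ i, i ∉ A → 2 * R + 2 ≤ σv i * k + lv i * n) →
      (∀ i ∈ A, 0 < ρ i ∧ ρ i ≤ 1 ∧
        ∀ m : ℕ, ρ i ≤ ‖(((σv i * k + lv i * n : ℝ) : ℂ) + α i n) + m‖) →
      ‖dlG σv lv τv mv α β k n‖ ≤ C * (∏ i ∈ A, (ρ i)⁻¹) *
        Real.exp (dlPower σv lv τv mv α β k n + n * dlLogPhi σv lv τv mv (k / n)) := by
  obtain ⟨C, hC0, hC⟩ := exists_norm_Gamma_le hR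
  obtain ⟨D, hD0, hD⟩ := exists_norm_Gamma_le_of_large hR
  obtain ⟨B, hB0, hB⟩ := exists_norm_inv_Gamma_le hR
  refine ⟨(C + D) ^ Fintype.card ι * B ^ Fintype.card κ, by positivity,
    fun A ρ k n hn hx hy hlarge hA => ?_⟩
  have h1 : ∀ i, ‖Complex.Gamma (((σv i * k + lv i * n : ℝ) : ℂ) + α i n)‖ ≤
      (C + D) * (if i ∈ A then (ρ i)⁻¹ else 1) *
        Real.exp (stirlingExponent (σv i * k + lv i * n) (α i n).re) := by
    intro i
    split_ifs with h
    · obtain ⟨h0, h1, hm⟩ := hA i h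
      refine (hC _ _ (ρ i) (hx i) (hα i n) h0 h1 hm).trans ?_
      gcongr
      linarith
    · refine (hD _ _ (hlarge i h) (hα i n)).trans ?_
      rw [mul_one]
      gcongr
      linarith
  have h2 : ∀ j, ‖(Complex.Gamma (((τv j * k + mv j * n : ℝ) : ℂ) + β j n))⁻¹‖ ≤
      B * Real.exp (-stirlingExponent (τv j * k + mv j * n) (β j n).re) :=
    fun j => hB _ _ (hy j) (hβ j n)
  rw [dlG, div_eq_mul_inv, ← Finset.prod_inv_distrib, norm_mul, norm_prod, norm_prod,
    ← sum_stirlingExponent σv lv τv mv α β hbalσ hbalL k n hn]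
  refine (mul_le_mul (Finset.prod_le_prod (fun i _ => norm_nonneg _) fun i _ => h1 i)
    (Finset.prod_le_prod (fun i _ => norm_nonneg _) fun i _ => h2 i)
    (Finset.prod_nonneg fun i _ => norm_nonneg _)
    (Finset.prod_nonneg fun i _ => (norm_nonneg _).trans (h1 i))).trans (le_of_eq ?_)
  simp only [Finset.prod_mul_distrib, Finset.prod_const, Finset.card_univ, ← Real.exp_sum,
    Finset.prod_ite_mem, Finset.univ_inter, Finset.sum_neg_distrib, sub_eq_add_neg, Real.exp_add]
  ring

/-! ### Distance to the poles -/

lemma dlBad_isClosed (s : ℝ) (ν : ℕ) : IsClosed (dlBad s ν) := by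
  rcases eq_or_ne s 0 with rfl | hs
  · -- a degenerate lattice: the image of a subset of `ℤ`
    have : dlBad 0 ν = ((↑) : ℤ → ℂ) '' Set.Iic 0 := by
      ext z
      simp only [dlBad, abs_zero, Complex.ofReal_zero, zero_mul, add_zero, Set.mem_ofPred_eq,
        Set.mem_image, Set.mem_Iic]
      exact ⟨fun ⟨m, _, h, _, e⟩ => ⟨m, h, e.symm⟩, fun ⟨m, h, e⟩ => ⟨m, -ν, h, le_rfl, e.symm⟩⟩
    rw [this]
    exact Complex.isClosedEmbedding_intCast.isClosedMap _ (isClosed_discrete _)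
  -- all coefficients are nonpositive, so bounded parts of the set are finite
  have hfin : ∀ r : ℝ, (dlBad s ν ∩ Metric.ball 0 r).Finite := by
    intro r
    obtain ⟨M, hM⟩ := exists_nat_ge r
    obtain ⟨M', hM'⟩ := exists_nat_ge (r / |s|)
    refine ((Set.finite_Icc (-(M : ℤ)) 0).prod (Set.finite_Icc (-(M' : ℤ)) 0)).image
      (fun p : ℤ × ℤ => (p.1 : ℂ) + ((|s| : ℝ) : ℂ) * (p.2 : ℂ)) |>.subset ?_
    rintro z ⟨⟨m, m', hm, hm', rfl⟩, hz⟩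
    have hs' : 0 < |s| := abs_pos.2 hs
    have h0 : m' ≤ 0 := by omega
    have hre := (Complex.abs_re_le_norm _).trans_lt (mem_ball_zero_iff.1 hz)
    simp only [Complex.add_re, Complex.intCast_re, Complex.mul_re, Complex.ofReal_re,
      Complex.ofReal_im, zero_mul, sub_zero] at hre
    have h1 : (m : ℝ) ≤ 0 := by exact_mod_cast hm
    have h2 : (m' : ℝ) ≤ 0 := by exact_mod_cast h0
    have h3 := (abs_lt.1 hre).1
    have h4 : |s| * (m' : ℝ) ≤ 0 := mul_nonpos_of_nonneg_of_nonpos hs'.le h2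
    refine ⟨(m, m'), ⟨⟨?_, hm⟩, ⟨?_, h0⟩⟩, rfl⟩
    · have : (-(M : ℝ)) ≤ m := by linarith
      exact_mod_cast this
    · have : (-(M' : ℝ)) ≤ m' := by
        rw [div_le_iff₀ hs'] at hM'
        nlinarith
      exact_mod_cast this
  rw [← closure_subset_iff_isClosed]
  intro z hz
  have h1 : z ∈ closure (dlBad s ν ∩ Metric.ball 0 (‖z‖ + 1)) := by
    rw [Set.inter_comm]
    exact Metric.isOpen_ball.inter_closure ⟨by simp, hz⟩
  rw [(hfin _).isClosed.closure_eq] at h1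
  exact h1.1

open Classical in
/-- The bound for one summand near an end of the summation range. There, up to a nonnegative
multiple of `|σ_i|`, the arguments of the critical gamma factors are `a_i`, so their distance to
the poles is at least the distance from `a_i` to `dlBad`. -/
lemma exists_norm_dlG_le_infDist {ι κ : Type*} [Fintype ι] [Fintype κ]
    (σv lv : ι → ℝ) (τv mv : κ → ℝ) (α : ι → ℕ → ℂ) (β : κ → ℕ → ℂ)
    (hbalσ : ∑ i, σv i = ∑ j, τv j) (hbalL : ∑ i, lv i = ∑ j, mv j)
    {R : ℝ} (hR : 0 < R) (hα : ∀ i n, ‖α i n‖ ≤ R) (hβ : ∀ j n, ‖β j n‖ ≤ R)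
    (ν : ℕ) (A : Finset ι) (a : ι → ℕ → ℂ) (R' : ℝ) (ha : ∀ i n, ‖a i n‖ ≤ R')
    (hbad : ∀ n, ∀ i ∈ A, a i n ∉ dlBad (σv i) ν) :
    ∃ C : ℝ, 0 < C ∧ ∀ (k : ℤ) (n : ℕ), 1 ≤ n →
      (∀ i, 0 ≤ σv i * k + lv i * n) → (∀ j, 0 ≤ τv j * k + mv j * n) →
      (∀ i, i ∉ A → 2 * R + 2 ≤ σv i * k + lv i * n) →
      (∀ i ∈ A, ∃ q : ℤ, (ν : ℤ) ≤ q ∧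
        ((σv i * k + lv i * n : ℝ) : ℂ) + α i n = a i n + ((|σv i| : ℝ) : ℂ) * q) →
      ‖dlG σv lv τv mv α β k n‖ ≤
        C * (min 1 (∏ i ∈ A, Metric.infDist (a i n) (dlBad (σv i) ν)))⁻¹ *
        Real.exp (dlPower σv lv τv mv α β k n + n * dlLogPhi σv lv τv mv (k / n)) := by
  obtain ⟨C, hC0, hC⟩ := exists_norm_dlG_le σv lv τv mv α β hbalσ hbalL hR hα hβ
  -- an upper bound for all the distances involved, used to normalise them to at most `1`
  set D : ℝ := 1 + |R'| + ∑ i, |σv i| * ν with hD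
  have hsum : 0 ≤ ∑ i, |σv i| * (ν : ℝ) := Finset.sum_nonneg fun i _ => by positivity
  have hD1 : 1 ≤ D := by have := abs_nonneg R'; linarith
  have hDpos : 0 < D := by linarith
  refine ⟨C * D ^ A.card, by positivity, fun k n hn hx hy hl hA => ?_⟩
  have hmem : ∀ (s : ℝ) (m q : ℤ), m ≤ 0 → q ≤ -(ν : ℤ) →
      (m : ℂ) + ((|s| : ℝ) : ℂ) * (q : ℂ) ∈ dlBad s ν := fun s m q h1 h2 => ⟨m, q, h1, h2, rfl⟩
  have hpos : ∀ i ∈ A, 0 < Metric.infDist (a i n) (dlBad (σv i) ν) := fun i hi =>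
    ((dlBad_isClosed _ _).notMem_iff_infDist_pos ⟨_, hmem _ 0 (-ν) le_rfl le_rfl⟩).1 (hbad n i hi)
  have hle : ∀ i, Metric.infDist (a i n) (dlBad (σv i) ν) ≤ D := by
    intro i
    refine (Metric.infDist_le_dist_of_mem (hmem (σv i) 0 (-ν) le_rfl le_rfl)).trans ?_
    refine (dist_le_norm_add_norm _ _).trans ?_
    have h1 : |σv i| * (ν : ℝ) ≤ ∑ i, |σv i| * (ν : ℝ) :=
      Finset.single_le_sum (f := fun i => |σv i| * (ν : ℝ)) (fun i _ => by positivity)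
        (Finset.mem_univ i)
    have h2 : ‖((0 : ℤ) : ℂ) + ((|σv i| : ℝ) : ℂ) * ((-ν : ℤ) : ℂ)‖ = |σv i| * ν := by
      simp
    rw [h2]
    have := (ha i n).trans (le_abs_self R')
    linarith
  refine (hC A (fun i => Metric.infDist (a i n) (dlBad (σv i) ν) / D) k n hn hx hy hl
    fun i hi => ⟨div_pos (hpos i hi) hDpos, (div_le_one hDpos).2 (hle i), fun m => ?_⟩).trans ?_
  · obtain ⟨q, hq, e⟩ := hA i hi
    rw [e]
    refine (div_le_self Metric.infDist_nonneg hD1).trans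
      ((Metric.infDist_le_dist_of_mem (hmem (σv i) (-m) (-q) (by simp) (by omega))).trans
      (le_of_eq ?_))
    rw [dist_eq_norm]
    congr 1
    push_cast
    ring
  · have hP : 0 < ∏ i ∈ A, Metric.infDist (a i n) (dlBad (σv i) ν) := Finset.prod_pos hpos
    have e : ∏ i ∈ A, (Metric.infDist (a i n) (dlBad (σv i) ν) / D)⁻¹ =
        D ^ A.card * (∏ i ∈ A, Metric.infDist (a i n) (dlBad (σv i) ν))⁻¹ := by
      rw [Finset.prod_inv_distrib, Finset.prod_div_distrib, Finset.prod_const, inv_div,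
        div_eq_mul_inv]
    rw [e, ← mul_assoc]
    gcongr
    exact min_le_right _ _

/-! ### Subexponential and asymptotic estimates -/

/-- The logarithm is sublinear, with an arbitrarily small slope `η`. -/
lemma exists_mul_log_le {p L η : ℝ} (hp : 0 ≤ p) (hL : 0 ≤ L) (hη : 0 < η) :
    ∃ C : ℝ, 0 ≤ C ∧ ∀ y : ℝ, 0 ≤ y → p * Real.log (1 + L * y) ≤ η * y + C := by
  set A := p * L / η + 1 with hA
  have hA1 : 1 ≤ A := by rw [hA]; have : 0 ≤ p * L / η := by positivity
                         linarith
  have hA0 : 0 < A := by linarith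
  have hlA : 0 ≤ Real.log A := Real.log_nonneg hA1
  refine ⟨p + p * Real.log A, by positivity, fun y hy => ?_⟩
  have hz : 0 < 1 + L * y := by positivity
  have h1 := Real.log_le_sub_one_of_pos (show 0 < (1 + L * y) / A by positivity)
  rw [Real.log_div hz.ne' hA0.ne'] at h1
  have h2 : (1 + L * y) / A ≤ 1 + L * y / A := by
    rw [add_div]
    gcongr
    exact (div_le_one hA0).2 hA1
  have h3 : p * (L * y / A) ≤ η * y := by
    have : p * L ≤ η * A := by rw [hA, mul_add, mul_div_cancel₀ _ hη.ne']; linarith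
    rw [← mul_div_assoc, div_le_iff₀ hA0]
    nlinarith
  have h4 : p * Real.log (1 + L * y) ≤ p * (L * y / A + Real.log A) := by
    gcongr
    linarith
  linarith

/-- The power-law correction is subexponential in any quantity `y` that controls all the
arguments of the gamma functions. -/
lemma exists_dlPower_le {ι κ : Type*} [Fintype ι] [Fintype κ]
    (σv lv : ι → ℝ) (τv mv : κ → ℝ) (α : ι → ℕ → ℂ) (β : κ → ℕ → ℂ)
    {R : ℝ} (hR : 0 < R) (hα : ∀ i n, ‖α i n‖ ≤ R) (hβ : ∀ j n, ‖β j n‖ ≤ R)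
    {S η : ℝ} (hS : 0 ≤ S) (hη : 0 < η) :
    ∃ C : ℝ, 0 ≤ C ∧ ∀ (k : ℤ) (n : ℕ) (y : ℝ), 0 ≤ y →
      (∀ i, 0 ≤ σv i * k + lv i * n) → (∀ j, 0 ≤ τv j * k + mv j * n) →
      (∀ i, σv i * k + lv i * n ≤ S * y) → (∀ j, τv j * k + mv j * n ≤ S * y) →
      dlPower σv lv τv mv α β k n ≤ η * y + C := by
  obtain ⟨C, hC0, hC⟩ := exists_mul_log_le
    (p := (R + 1) * (Fintype.card ι + Fintype.card κ)) (by positivity) hS hη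
  refine ⟨C, hC0, fun k n y hy hx hy' hxS hyS => le_trans ?_ (hC y hy)⟩
  have key : ∀ a x : ℝ, |a| ≤ R → 0 ≤ x → x ≤ S * y →
      |(a - 1 / 2) * Real.log (1 + x)| ≤ (R + 1) * Real.log (1 + S * y) := by
    intro a x ha h0 h1
    rw [abs_mul]
    have h2 : |a - 1 / 2| ≤ R + 1 := by
      rw [abs_le] at ha ⊢; constructor <;> linarith [ha.1, ha.2]
    have h3 : |Real.log (1 + x)| ≤ Real.log (1 + S * y) := by
      rw [abs_of_nonneg (Real.log_nonneg (by linarith))]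
      exact Real.log_le_log (by linarith) (by linarith)
    gcongr
  rw [dlPower]
  have h1 : ∑ i, ((α i n).re - 1 / 2) * Real.log (1 + (σv i * k + lv i * n)) ≤
      ∑ _i : ι, (R + 1) * Real.log (1 + S * y) := Finset.sum_le_sum fun i _ =>
    (abs_le.1 (key _ _ ((Complex.abs_re_le_norm _).trans (hα i n)) (hx i) (hxS i))).2
  have h2 : ∑ _j : κ, -((R + 1) * Real.log (1 + S * y)) ≤
      ∑ j, ((β j n).re - 1 / 2) * Real.log (1 + (τv j * k + mv j * n)) :=
    Finset.sum_le_sum fun j _ =>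
    (abs_le.1 (key _ _ ((Complex.abs_re_le_norm _).trans (hβ j n)) (hy' j) (hyS j))).1
  simp only [Finset.sum_const, Finset.card_univ, nsmul_eq_mul] at h1 h2
  linarith

/-- For `0 ≤ k ≤ T n`, the power-law correction and a factor `1 + T n`, which accounts for the
number of terms, are absorbed by the gap between a bound `B` for `Φ` and `d`. -/
lemma exists_bulk_bound {ι κ : Type*} [Fintype ι] [Fintype κ]
    (σv lv : ι → ℝ) (τv mv : κ → ℝ) (α : ι → ℕ → ℂ) (β : κ → ℕ → ℂ)
    {R : ℝ} (hR : 0 < R) (hα : ∀ i n, ‖α i n‖ ≤ R) (hβ : ∀ j n, ‖β j n‖ ≤ R)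
    {T B d : ℝ} (hT : 0 ≤ T) (hB : 0 < B) (hBd : B < d) :
    ∃ K : ℝ, 0 < K ∧ ∀ (k : ℤ) (n : ℕ), 1 ≤ n → 0 ≤ k → (k : ℝ) ≤ T * n →
      (∀ i, 0 ≤ σv i * k + lv i * n) → (∀ j, 0 ≤ τv j * k + mv j * n) →
      Real.exp (dlLogPhi σv lv τv mv (k / n)) ≤ B →
      (1 + T * n) * Real.exp (dlPower σv lv τv mv α β k n + n * dlLogPhi σv lv τv mv (k / n)) ≤
        K * d ^ n := by
  set η := Real.log (d / B) / 2 with hηdef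
  have hd : 0 < d := hB.trans hBd
  have hη : 0 < η := by
    have := Real.log_pos ((one_lt_div hB).2 hBd)
    rw [hηdef]; linarith
  set S := ∑ i, (|σv i| * T + |lv i|) + ∑ j, (|τv j| * T + |mv j|) with hS
  have hS1 : 0 ≤ ∑ i, (|σv i| * T + |lv i|) := Finset.sum_nonneg fun i _ => by positivity
  have hS2 : 0 ≤ ∑ j, (|τv j| * T + |mv j|) := Finset.sum_nonneg fun i _ => by positivity
  obtain ⟨C, hC0, hC⟩ := exists_dlPower_le σv lv τv mv α β hR hα hβ (S := S) (by linarith) hη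
  obtain ⟨D, hD0, hD⟩ := exists_mul_log_le (p := 1) zero_le_one hT hη
  refine ⟨Real.exp (C + D), Real.exp_pos _, fun k n hn hk hkT hx hy hphi => ?_⟩
  have hn0 : (0 : ℝ) ≤ n := Nat.cast_nonneg n
  have hk0 : (0 : ℝ) ≤ k := by exact_mod_cast hk
  have key : ∀ s l : ℝ, s * k + l * n ≤ (|s| * T + |l|) * n := by
    intro s l
    have h1 : s * k ≤ |s| * (T * n) := by
      gcongr; exact le_abs_self s
    have h2 : l * n ≤ |l| * n := by gcongr; exact le_abs_self l
    linarith
  have h1 := hC k n n hn0 hx hy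
    (fun i => (key _ _).trans (by
      gcongr
      have := Finset.single_le_sum (f := fun i => |σv i| * T + |lv i|)
        (fun i _ => by positivity) (Finset.mem_univ i)
      linarith))
    (fun j => (key _ _).trans (by
      gcongr
      have := Finset.single_le_sum (f := fun i => |τv i| * T + |mv i|)
        (fun i _ => by positivity) (Finset.mem_univ j)
      linarith))
  have h2 := hD n hn0
  have hpos : 0 < 1 + T * n := by positivity
  have h3 : dlLogPhi σv lv τv mv (k / n) ≤ Real.log B := (Real.le_log_iff_exp_le hB).2 hphi
  have h4 : n * dlLogPhi σv lv τv mv (k / n) ≤ n * Real.log B := by gcongr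
  have h5 : 2 * η = Real.log d - Real.log B := by
    rw [hηdef, Real.log_div hd.ne' hB.ne']; ring
  calc _ = Real.exp (Real.log (1 + T * n) +
        (dlPower σv lv τv mv α β k n + n * dlLogPhi σv lv τv mv (k / n))) := by
        rw [Real.exp_add (Real.log _), Real.exp_log hpos]
    _ ≤ Real.exp (C + D + n * Real.log d) := by
        refine Real.exp_le_exp.2 ?_
        have : n * (2 * η) = n * Real.log d - n * Real.log B := by rw [h5]; ring
        linarith
    _ = _ := by rw [Real.exp_add, Real.exp_nat_mul, Real.exp_log hd]

/-- The expansion of `l(t) log l(t)` as `t → ∞`, up to a bounded error. -/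
lemma abs_mul_log_affine_le {s l t : ℝ} (hs : 0 < s) (ht : 0 < t) (hlt : 2 * |l| / s ≤ t) :
    |(s * t + l) * Real.log (s * t + l) -
      (s * (t * Real.log t) + l * Real.log t + s * Real.log s * t)| ≤
      |l * Real.log s| + 4 * |l| := by
  have hst : 0 < s * t := by positivity
  have h2l : 2 * |l| ≤ s * t := by rw [div_le_iff₀ hs] at hlt; linarith
  have hu : |l / (s * t)| ≤ 1 / 2 := by
    rw [abs_div, abs_of_pos hst, div_le_iff₀ hst]; linarith
  have e1 : Real.log (s * t + l) = Real.log s + Real.log t + Real.log (1 + l / (s * t)) := by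
    rw [← Real.log_mul hs.ne' ht.ne', ← Real.log_mul hst.ne']
    · congr 1; field_simp
    · linarith [(abs_le.1 hu).1]
  have h1 := abs_log_one_add_le hu
  have h2 : |s * t + l| ≤ 2 * (s * t) := by
    rw [abs_le]; constructor <;> linarith [le_abs_self l, neg_abs_le l]
  have h3 : |(s * t + l) * Real.log (1 + l / (s * t))| ≤ 4 * |l| := by
    rw [abs_mul]
    calc _ ≤ (2 * (s * t)) * (2 * |l / (s * t)|) := by gcongr
      _ = 4 * |l| := by rw [abs_div, abs_of_pos hst]; field_simp; ring
  have e2 : (s * t + l) * Real.log (s * t + l) -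
      (s * (t * Real.log t) + l * Real.log t + s * Real.log s * t) =
      l * Real.log s + (s * t + l) * Real.log (1 + l / (s * t)) := by rw [e1]; ring
  rw [e2]
  exact (abs_add_le _ _).trans (by linarith)

/-- When all slopes are positive, the affine forms `l_i(t)` and `m_j(t)` are comparable to `t` beyond
this threshold. -/
noncomputable def dlThreshold {ι κ : Type*} [Fintype ι] [Fintype κ]
    (σv lv : ι → ℝ) (τv mv : κ → ℝ) : ℝ :=
  1 + ∑ i, 2 * |lv i| / |σv i| + ∑ j, 2 * |mv j| / |τv j|

lemma one_le_dlThreshold {ι κ : Type*} [Fintype ι] [Fintype κ]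
    (σv lv : ι → ℝ) (τv mv : κ → ℝ) : 1 ≤ dlThreshold σv lv τv mv := by
  have h1 : 0 ≤ ∑ i, 2 * |lv i| / |σv i| := Finset.sum_nonneg fun i _ => by positivity
  have h2 : 0 ≤ ∑ i, 2 * |mv i| / |τv i| := Finset.sum_nonneg fun i _ => by positivity
  unfold dlThreshold
  linarith

lemma le_dlThreshold_left {ι κ : Type*} [Fintype ι] [Fintype κ]
    (σv lv : ι → ℝ) (τv mv : κ → ℝ) (hσ : ∀ i, 0 < σv i) (i : ι) :
    2 * |lv i| / σv i ≤ dlThreshold σv lv τv mv := by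
  have h1 := Finset.single_le_sum (f := fun i => 2 * |lv i| / |σv i|)
    (fun i _ => by positivity) (Finset.mem_univ i)
  have h2 : 0 ≤ ∑ i, 2 * |mv i| / |τv i| := Finset.sum_nonneg fun i _ => by positivity
  simp only [abs_of_pos (hσ i)] at h1
  unfold dlThreshold
  linarith

lemma le_dlThreshold_right {ι κ : Type*} [Fintype ι] [Fintype κ]
    (σv lv : ι → ℝ) (τv mv : κ → ℝ) (hτ : ∀ j, 0 < τv j) (j : κ) :
    2 * |mv j| / τv j ≤ dlThreshold σv lv τv mv := by
  have h1 := Finset.single_le_sum (f := fun i => 2 * |mv i| / |τv i|)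
    (fun i _ => by positivity) (Finset.mem_univ j)
  have h2 : 0 ≤ ∑ i, 2 * |lv i| / |σv i| := Finset.sum_nonneg fun i _ => by positivity
  simp only [abs_of_pos (hτ j)] at h1
  unfold dlThreshold
  linarith

/-- By balancedness the `t log t` and `log t` terms of `log Φ(t)` cancel as `t → ∞`. -/
lemma exists_dlLogPhi_le {ι κ : Type*} [Fintype ι] [Fintype κ]
    (σv lv : ι → ℝ) (τv mv : κ → ℝ)
    (hbalσ : ∑ i, σv i = ∑ j, τv j) (hbalL : ∑ i, lv i = ∑ j, mv j)
    (hσ : ∀ i, 0 < σv i) (hτ : ∀ j, 0 < τv j) :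
    ∃ C : ℝ, 0 ≤ C ∧ ∀ t : ℝ, dlThreshold σv lv τv mv ≤ t →
      dlLogPhi σv lv τv mv t ≤
        (∑ i, σv i * Real.log (σv i) - ∑ j, τv j * Real.log (τv j)) * t + C := by
  refine ⟨∑ i, (|lv i * Real.log (σv i)| + 4 * |lv i|) +
    ∑ j, (|mv j * Real.log (τv j)| + 4 * |mv j|),
    add_nonneg (Finset.sum_nonneg fun i _ => by positivity)
      (Finset.sum_nonneg fun i _ => by positivity), fun t ht => ?_⟩
  have ht0 : 0 < t := by linarith [one_le_dlThreshold σv lv τv mv]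
  have h1 := Finset.sum_le_sum (s := Finset.univ) fun i _ =>
    (abs_le.1 (abs_mul_log_affine_le (hσ i) ht0
      ((le_dlThreshold_left σv lv τv mv hσ i).trans ht))).2
  have h2 := Finset.sum_le_sum (s := Finset.univ) fun j _ =>
    (abs_le.1 (abs_mul_log_affine_le (hτ j) ht0
      ((le_dlThreshold_right σv lv τv mv hτ j).trans ht))).1
  simp only [Finset.sum_sub_distrib, Finset.sum_add_distrib, ← Finset.sum_mul, hbalσ, hbalL,
    Finset.sum_neg_distrib] at h1 h2 ⊢
  rw [dlLogPhi, sub_mul]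
  linarith

/-! ### The tail of the infinite sum -/

/-- For `k ≥ T n` the arguments of the gamma functions are comparable to `k`, uniformly in `n`. -/
lemma abs_mul_log_sub_log_le {a s l T k n P : ℝ} (hs : 0 < s) (hT : 1 ≤ T)
    (hlT : 2 * |l| / s ≤ T) (hn : 1 ≤ n) (hk : T * n ≤ k) (ha : |a| ≤ P) :
    |a * Real.log (1 + (s * k + l * n)) - a * Real.log k| ≤
      P * (|Real.log (s / 2)| + |Real.log (1 + s + |l|)|) := by
  have hnk : n ≤ k := by nlinarith
  have hk0 : 0 < k := by linarith
  have hl : 2 * |l| ≤ s * T := by rw [div_le_iff₀ hs] at hlT; linarith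
  have hln : |l| * n ≤ s / 2 * k := by
    calc |l| * n ≤ s / 2 * T * n := by gcongr; linarith
      _ = s / 2 * (T * n) := by ring
      _ ≤ _ := by gcongr
  have h1 : -(|l| * n) ≤ l * n := by
    have := neg_abs_le l
    nlinarith
  have h2 : l * n ≤ |l| * k :=
    (mul_le_mul_of_nonneg_right (le_abs_self l) (by linarith)).trans (by gcongr)
  have h3 : s / 2 * k ≤ 1 + (s * k + l * n) := by linarith
  have h4 : 1 + (s * k + l * n) ≤ (1 + s + |l|) * k := by linarith
  have h5 := Real.log_le_log (by positivity) h3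
  have h6 := Real.log_le_log (by nlinarith [mul_pos hs hk0]) h4
  rw [Real.log_mul (by positivity) hk0.ne'] at h5 h6
  rw [← mul_sub, abs_mul]
  have h7 : |Real.log (1 + (s * k + l * n)) - Real.log k| ≤
      |Real.log (s / 2)| + |Real.log (1 + s + |l|)| := by
    rw [abs_le]
    constructor
    · linarith [neg_abs_le (Real.log (s / 2)), abs_nonneg (Real.log (1 + s + |l|))]
    · linarith [le_abs_self (Real.log (1 + s + |l|)), abs_nonneg (Real.log (s / 2))]
  have := (abs_nonneg a).trans ha
  gcongr

/-- Far out in the sum the power-law correction is at most a constant times `k ^ Re γ(n)`. -/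
lemma exists_dlPower_le_gamma {ι κ : Type*} [Fintype ι] [Fintype κ]
    (σv lv : ι → ℝ) (τv mv : κ → ℝ) (α : ι → ℕ → ℂ) (β : κ → ℕ → ℂ)
    {R : ℝ} (hα : ∀ i n, ‖α i n‖ ≤ R) (hβ : ∀ j n, ‖β j n‖ ≤ R)
    (hσ : ∀ i, 0 < σv i) (hτ : ∀ j, 0 < τv j) :
    ∃ C : ℝ, ∀ k n : ℕ, 1 ≤ n → dlThreshold σv lv τv mv * n ≤ k →
      dlPower σv lv τv mv α β k n ≤ (dlGamma α β n).re * Real.log k + C := by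
  refine ⟨∑ i, (R + 1) * (|Real.log (σv i / 2)| + |Real.log (1 + σv i + |lv i|)|) +
    ∑ j, (R + 1) * (|Real.log (τv j / 2)| + |Real.log (1 + τv j + |mv j|)|), fun k n hn hk => ?_⟩
  have hn1 : (1 : ℝ) ≤ n := by exact_mod_cast hn
  have hT := one_le_dlThreshold σv lv τv mv
  have hhalf : ∀ z : ℂ, ‖z‖ ≤ R → |z.re - 1 / 2| ≤ R + 1 := fun z hz => by
    have := (Complex.abs_re_le_norm z).trans hz
    rw [abs_le] at this ⊢; constructor <;> linarith [this.1, this.2]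
  have h1 := Finset.sum_le_sum (s := Finset.univ) fun i _ => (abs_le.1
    (abs_mul_log_sub_log_le (hσ i) hT (le_dlThreshold_left σv lv τv mv hσ i) hn1 hk
      (hhalf _ (hα i n)))).2
  have h2 := Finset.sum_le_sum (s := Finset.univ) fun j _ => (abs_le.1
    (abs_mul_log_sub_log_le (hτ j) hT (le_dlThreshold_right σv lv τv mv hτ j) hn1 hk
      (hhalf _ (hβ j n)))).1
  have e : (dlGamma α β n).re =
      ∑ i, ((α i n).re - 1 / 2) - ∑ j, ((β j n).re - 1 / 2) := by
    simp only [dlGamma, Complex.add_re, Complex.sub_re, Complex.re_sum, Complex.ofReal_re,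
      Finset.sum_sub_distrib, Finset.sum_const, Finset.card_univ, nsmul_eq_mul]
    ring
  simp only [Finset.sum_sub_distrib, ← Finset.sum_mul, Finset.sum_neg_distrib] at h1 h2 e
  rw [dlPower, e]
  simp only [Int.cast_natCast] at h1 h2 ⊢
  linarith

/-- When `∏ σ^σ = ∏ τ^τ` the tail converges because of the polynomial factor. -/
lemma exists_tail_of_eq {ι κ : Type*} [Fintype ι] [Fintype κ]
    (σv lv : ι → ℝ) (τv mv : κ → ℝ) (α : ι → ℕ → ℂ) (β : κ → ℕ → ℂ)
    {R : ℝ} (hα : ∀ i n, ‖α i n‖ ≤ R) (hβ : ∀ j n, ‖β j n‖ ≤ R)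
    (hσ : ∀ i, 0 < σv i) (hτ : ∀ j, 0 < τv j) {s B : ℝ} (hs : 0 < s)
    (hγ : ∀ n, (dlGamma α β n).re ≤ -1 - s) :
    ∃ c : ℕ → ℝ, (∀ k, 0 ≤ c k) ∧ Summable c ∧ ∀ k n : ℕ, 1 ≤ n →
      dlThreshold σv lv τv mv * n ≤ k → Real.exp (dlLogPhi σv lv τv mv (k / n)) ≤ B →
      Real.exp (dlPower σv lv τv mv α β k n + n * dlLogPhi σv lv τv mv (k / n)) ≤ c k * B ^ n := by
  obtain ⟨C, hC⟩ := exists_dlPower_le_gamma σv lv τv mv α β hα hβ hσ hτ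
  refine ⟨fun k => Real.exp C * (k : ℝ) ^ (-1 - s), fun k => by positivity,
    (Real.summable_nat_rpow.2 (by linarith)).mul_left _, fun k n hn hk h2 => ?_⟩
  have hn1 : (1 : ℝ) ≤ n := by exact_mod_cast hn
  have hT := one_le_dlThreshold σv lv τv mv
  have hk1 : (1 : ℝ) ≤ k := by nlinarith
  have h1 : dlPower σv lv τv mv α β k n ≤ C + (-1 - s) * Real.log k := by
    have := mul_le_mul_of_nonneg_right (hγ n) (Real.log_nonneg hk1)
    linarith [hC k n hn hk]
  beta_reduce
  rw [Real.exp_add, Real.exp_nat_mul, Real.rpow_def_of_pos (by linarith), ← Real.exp_add]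
  gcongr
  linarith

/-- When `∏ σ^σ < ∏ τ^τ` the tail is dominated by a geometric series. -/
lemma exists_tail_of_lt {ι κ : Type*} [Fintype ι] [Fintype κ]
    (σv lv : ι → ℝ) (τv mv : κ → ℝ) (α : ι → ℕ → ℂ) (β : κ → ℕ → ℂ)
    (hbalσ : ∑ i, σv i = ∑ j, τv j) (hbalL : ∑ i, lv i = ∑ j, mv j)
    {R : ℝ} (hR : 0 < R) (hα : ∀ i n, ‖α i n‖ ≤ R) (hβ : ∀ j n, ‖β j n‖ ≤ R)
    (hσ : ∀ i, 0 < σv i) (hτ : ∀ j, 0 < τv j) {B : ℝ} (hB : 0 < B)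
    (hlt : ∑ i, σv i * Real.log (σv i) - ∑ j, τv j * Real.log (τv j) < 0) :
    ∃ T : ℝ, dlThreshold σv lv τv mv ≤ T ∧
    ∃ c : ℕ → ℝ, (∀ k, 0 ≤ c k) ∧ Summable c ∧ ∀ k n : ℕ, 1 ≤ n → T * n ≤ k →
      (∀ i, 0 ≤ σv i * (k : ℤ) + lv i * n) → (∀ j, 0 ≤ τv j * (k : ℤ) + mv j * n) →
      Real.exp (dlPower σv lv τv mv α β k n + n * dlLogPhi σv lv τv mv (k / n)) ≤ c k * B ^ n := by
  set q := ∑ i, σv i * Real.log (σv i) - ∑ j, τv j * Real.log (τv j) with hq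
  obtain ⟨C₂, hC₂0, hC₂⟩ := exists_dlLogPhi_le σv lv τv mv hbalσ hbalL hσ hτ
  set S := ∑ i, (|σv i| + |lv i|) + ∑ j, (|τv j| + |mv j|) with hS
  have hS1 : 0 ≤ ∑ i, (|σv i| + |lv i|) := Finset.sum_nonneg fun i _ => by positivity
  have hS2 : 0 ≤ ∑ j, (|τv j| + |mv j|) := Finset.sum_nonneg fun i _ => by positivity
  obtain ⟨C₁, -, hC₁⟩ := exists_dlPower_le σv lv τv mv α β hR hα hβ (S := S) (by linarith)
    (show 0 < -q / 4 by linarith)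
  have hT := one_le_dlThreshold σv lv τv mv
  -- beyond `T`, half of the exponential decay already compensates the constants
  refine ⟨max (dlThreshold σv lv τv mv) (2 * (C₂ - Real.log B) / (-q)), le_max_left _ _,
    fun k => Real.exp C₁ * Real.exp (q / 4) ^ k, fun k => by positivity,
    (summable_geometric_of_lt_one (Real.exp_pos _).le
      (by rw [← Real.exp_zero]; exact Real.exp_lt_exp.2 (by linarith))).mul_left _, fun k n hn hk hx hy => ?_⟩
  have hn1 : (1 : ℝ) ≤ n := by exact_mod_cast hn
  have hk1 : dlThreshold σv lv τv mv * n ≤ k :=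
    (mul_le_mul_of_nonneg_right (le_max_left _ _) (by linarith)).trans hk
  have hk2 : 2 * (C₂ - Real.log B) / (-q) * n ≤ k :=
    (mul_le_mul_of_nonneg_right (le_max_right _ _) (by linarith)).trans hk
  have hnk : (n : ℝ) ≤ k := by nlinarith
  have hk0 : (0 : ℝ) ≤ k := by linarith
  have key : ∀ s l : ℝ, s * (k : ℤ) + l * n ≤ (|s| + |l|) * k := by
    intro s l
    have h1 : s * k ≤ |s| * k := by gcongr; exact le_abs_self s
    have h2 : l * n ≤ |l| * k :=
      (mul_le_mul_of_nonneg_right (le_abs_self l) (by linarith)).trans (by gcongr)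
    push_cast
    linarith
  have h1 := hC₁ k n k hk0 hx hy
    (fun i => (key _ _).trans (by
      gcongr
      have := Finset.single_le_sum (f := fun i => |σv i| + |lv i|)
        (fun i _ => by positivity) (Finset.mem_univ i)
      linarith))
    (fun j => (key _ _).trans (by
      gcongr
      have := Finset.single_le_sum (f := fun i => |τv i| + |mv i|)
        (fun i _ => by positivity) (Finset.mem_univ j)
      linarith))
  have h2 := hC₂ (k / n) (by rw [le_div_iff₀ (by linarith)]; exact hk1)
  have h3 : n * dlLogPhi σv lv τv mv (k / n) ≤ q * k + n * C₂ := by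
    calc _ ≤ n * (q * (k / n) + C₂) := by gcongr
      _ = _ := by field_simp
  have h4 : n * (C₂ - Real.log B) ≤ (-q) / 2 * k := by
    rw [div_mul_eq_mul_div, div_le_iff₀ (by linarith)] at hk2
    linarith
  beta_reduce
  rw [show B ^ n = Real.exp (n * Real.log B) by rw [Real.exp_nat_mul, Real.exp_log hB]]
  rw [← Real.exp_nat_mul, ← Real.exp_add, ← Real.exp_add]
  refine Real.exp_le_exp.2 ?_
  linarith

lemma log_prod_rpow_self {ι : Type*} [Fintype ι] (σv : ι → ℝ) (hσ : ∀ i, 0 < σv i) :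
    ∏ i, σv i ^ σv i = Real.exp (∑ i, σv i * Real.log (σv i)) := by
  rw [Real.exp_sum]
  refine Finset.prod_congr rfl fun i _ => ?_
  rw [Real.rpow_def_of_pos (hσ i), mul_comm]

/-! ### Bounds for single summands and assembly -/

lemma exists_forall_le_mul_nat {ι : Type*} [Fintype ι] (A : Finset ι) (c : ι → ℝ)
    (hc : ∀ i, i ∉ A → 0 < c i) (X : ℝ) :
    ∃ N : ℕ, ∀ n : ℕ, N ≤ n → ∀ i, i ∉ A → X ≤ c i * n := by
  have h : ∀ᶠ n : ℕ in Filter.atTop, ∀ i, i ∉ A → X ≤ c i * n := by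
    refine Filter.eventually_all.2 fun i => ?_
    by_cases hi : i ∈ A
    · exact Filter.Eventually.of_forall fun n h => absurd hi h
    · have := (tendsto_natCast_atTop_atTop (R := ℝ)).const_mul_atTop (hc i hi)
      filter_upwards [this.eventually_ge_atTop X] with n hn _ using hn
  exact Filter.eventually_atTop.1 h

lemma dlDelta0_nonneg {ι : Type*} [Fintype ι] (σv lv : ι → ℝ) (α : ι → ℕ → ℂ)
    (r0 : ℝ) (n : ℕ) : 0 ≤ dlDelta0 σv lv α r0 n :=
  le_min zero_le_one (Finset.prod_nonneg fun _ _ => Metric.infDist_nonneg)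

lemma dlDelta1_nonneg {ι : Type*} [Fintype ι] (σv lv : ι → ℝ) (α : ι → ℕ → ℂ)
    (r1 : EReal) (n : ℕ) : 0 ≤ dlDelta1 σv lv α r1 n :=
  le_min zero_le_one (Finset.prod_nonneg fun _ _ => Metric.infDist_nonneg)

lemma norm_add_mul_ceil_sub_le {z : ℂ} {R s x : ℝ} (hz : ‖z‖ ≤ R) :
    ‖z + ((s * ((⌈x⌉ : ℝ) - x) : ℝ) : ℂ)‖ ≤ R + |s| := by
  refine (norm_add_le _ _).trans (add_le_add hz ?_)
  rw [Complex.norm_real, Real.norm_eq_abs, abs_mul]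
  have h1 := Int.le_ceil x
  have h2 := Int.ceil_lt_add_one x
  have h3 : |(⌈x⌉ : ℝ) - x| ≤ 1 := by rw [abs_le]; constructor <;> linarith
  exact mul_le_of_le_one_right (abs_nonneg s) h3

/-- Summands near the left end of the range: the gamma functions with `i ∈ I₀` may come close to
their poles, and the loss is exactly `δ₀(n)⁻¹`. -/
lemma exists_norm_dlG_le_left {ι κ : Type*} [Fintype ι] [Fintype κ]
    (σv lv : ι → ℝ) (τv mv : κ → ℝ) (α : ι → ℕ → ℂ) (β : κ → ℕ → ℂ)
    (hbalσ : ∑ i, σv i = ∑ j, τv j) (hbalL : ∑ i, lv i = ∑ j, mv j)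
    {R : ℝ} (hR : 0 < R) (hα : ∀ i n, ‖α i n‖ ≤ R) (hβ : ∀ j n, ‖β j n‖ ≤ R)
    (r0 : ℝ) (hl0 : ∀ i, 0 ≤ σv i * r0 + lv i)
    (hσ0 : ∀ i ∈ dlI0 σv lv r0, 0 < σv i)
    (hgen0 : ∀ n : ℕ, ∀ i ∈ dlI0 σv lv r0, dlAlpha0 σv α r0 i n ∉ dlBad (σv i) 0) :
    ∃ C : ℝ, 0 < C ∧ ∃ N : ℕ, ∀ (k : ℤ) (n : ℕ), 1 ≤ n → N ≤ n → ⌈r0 * n⌉ ≤ k →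
      (∀ i, (σv i * r0 + lv i) / 2 * n ≤ σv i * k + lv i * n) →
      (∀ j, 0 ≤ τv j * k + mv j * n) →
      ‖dlG σv lv τv mv α β k n‖ ≤ C * (dlDelta0 σv lv α r0 n)⁻¹ *
        Real.exp (dlPower σv lv τv mv α β k n + n * dlLogPhi σv lv τv mv (k / n)) := by
  obtain ⟨C, hC0, hC⟩ := exists_norm_dlG_le_infDist σv lv τv mv α β hbalσ hbalL hR hα hβ 0
    (dlI0 σv lv r0) (dlAlpha0 σv α r0) (R + ∑ i, |σv i|)
    (fun i n => (norm_add_mul_ceil_sub_le (hα i n)).trans (by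
      have := Finset.single_le_sum (f := fun i => |σv i|)
        (fun i _ => abs_nonneg _) (Finset.mem_univ i)
      linarith)) hgen0
  have hmem : ∀ i, i ∈ dlI0 σv lv r0 ↔ σv i * r0 + lv i = 0 := fun i => by simp [dlI0]
  obtain ⟨N, hN⟩ := exists_forall_le_mul_nat (dlI0 σv lv r0) (fun i => (σv i * r0 + lv i) / 2)
    (fun i hi => half_pos (lt_of_le_of_ne (hl0 i) fun h => hi ((hmem i).2 h.symm))) (2 * R + 2)
  refine ⟨C, hC0, N, fun k n hn hNn hk hx hy => ?_⟩
  refine hC k n hn (fun i => ?_) hy (fun i hi => (hN n hNn i hi).trans (hx i)) (fun i hi => ?_)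
  · refine le_trans ?_ (hx i)
    have := hl0 i
    positivity
  · refine ⟨k - ⌈r0 * n⌉, by simpa using hk, ?_⟩
    have h1 : lv i = -(σv i * r0) := by linarith [(hmem i).1 hi]
    rw [abs_of_pos (hσ0 i hi), dlAlpha0, h1]
    push_cast
    ring

/-- Summands near the right end of the range, with loss `δ₁(n)⁻¹`. -/
lemma exists_norm_dlG_le_right {ι κ : Type*} [Fintype ι] [Fintype κ]
    (σv lv : ι → ℝ) (τv mv : κ → ℝ) (α : ι → ℕ → ℂ) (β : κ → ℕ → ℂ)
    (hbalσ : ∑ i, σv i = ∑ j, τv j) (hbalL : ∑ i, lv i = ∑ j, mv j)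
    {R : ℝ} (hR : 0 < R) (hα : ∀ i n, ‖α i n‖ ≤ R) (hβ : ∀ j n, ‖β j n‖ ≤ R)
    (r1 : ℝ) (hl1 : ∀ i, 0 ≤ σv i * r1 + lv i)
    (hσ1 : ∀ i ∈ dlI1 σv lv r1, σv i < 0)
    (hgen1 : ∀ n : ℕ, ∀ i ∈ dlI1 σv lv r1, dlAlpha1 σv α r1 i n ∉ dlBad (σv i) 1) :
    ∃ C : ℝ, 0 < C ∧ ∃ N : ℕ, ∀ (k : ℤ) (n : ℕ), 1 ≤ n → N ≤ n → k < ⌈r1 * n⌉ →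
      (∀ i, (σv i * r1 + lv i) / 2 * n ≤ σv i * k + lv i * n) →
      (∀ j, 0 ≤ τv j * k + mv j * n) →
      ‖dlG σv lv τv mv α β k n‖ ≤ C * (dlDelta1 σv lv α r1 n)⁻¹ *
        Real.exp (dlPower σv lv τv mv α β k n + n * dlLogPhi σv lv τv mv (k / n)) := by
  obtain ⟨C, hC0, hC⟩ := exists_norm_dlG_le_infDist σv lv τv mv α β hbalσ hbalL hR hα hβ 1
    (dlI1 σv lv r1) (dlAlpha1 σv α r1) (R + ∑ i, |σv i|)
    (fun i n => (norm_add_mul_ceil_sub_le (hα i n)).trans (by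
      have := Finset.single_le_sum (f := fun i => |σv i|)
        (fun i _ => abs_nonneg _) (Finset.mem_univ i)
      linarith)) hgen1
  have hmem : ∀ i, i ∈ dlI1 σv lv r1 ↔ σv i * r1 + lv i = 0 := fun i => by simp [dlI1]
  obtain ⟨N, hN⟩ := exists_forall_le_mul_nat (dlI1 σv lv r1) (fun i => (σv i * r1 + lv i) / 2)
    (fun i hi => half_pos (lt_of_le_of_ne (hl1 i) fun h => hi ((hmem i).2 h.symm))) (2 * R + 2)
  refine ⟨C, hC0, N, fun k n hn hNn hk hx hy => ?_⟩
  refine hC k n hn (fun i => ?_) hy (fun i hi => (hN n hNn i hi).trans (hx i)) (fun i hi => ?_)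
  · refine le_trans ?_ (hx i)
    have := hl1 i
    positivity
  · refine ⟨⌈r1 * n⌉ - k, by push_cast; lia, ?_⟩
    have h1 : lv i = -(σv i * r1) := by linarith [(hmem i).1 hi]
    rw [abs_of_neg (hσ1 i hi), dlAlpha1, h1, EReal.toReal_coe]
    push_cast
    ring

/-- The theorem for a finite right end point. -/
lemma crude_bound_finite {ι κ : Type*} [Fintype ι] [Fintype κ]
    (σv lv : ι → ℝ) (τv mv : κ → ℝ) (α : ι → ℕ → ℂ) (β : κ → ℕ → ℂ)
    (r0 r1 : ℝ) (hr0 : 0 ≤ r0) (hr01 : r0 < r1)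
    (hbalσ : ∑ i, σv i = ∑ j, τv j) (hbalL : ∑ i, lv i = ∑ j, mv j)
    {R : ℝ} (hR : 0 < R) (hα : ∀ i n, ‖α i n‖ ≤ R) (hβ : ∀ j n, ‖β j n‖ ≤ R)
    (hσ : ∀ i, σv i ≠ 0)
    (hl0 : ∀ i, 0 ≤ σv i * r0 + lv i) (hm0 : ∀ j, 0 ≤ τv j * r0 + mv j)
    (hl1 : ∀ i, 0 ≤ σv i * r1 + lv i) (hm1 : ∀ j, 0 ≤ τv j * r1 + mv j)
    (hgen0 : ∀ n : ℕ, ∀ i ∈ dlI0 σv lv r0, dlAlpha0 σv α r0 i n ∉ dlBad (σv i) 0)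
    (hgen1 : ∀ n : ℕ, ∀ i ∈ dlI1 σv lv r1, dlAlpha1 σv α r1 i n ∉ dlBad (σv i) 1)
    (d : ℝ) (hd : dlPhiMax σv lv τv mv r0 r1 < d) :
    ∃ K : ℝ, 0 < K ∧ ∃ N : ℕ, ∀ n : ℕ, N ≤ n →
      ‖dlSum σv lv τv mv α β r0 r1 n‖ ≤
        K * d ^ n * ((dlDelta0 σv lv α r0 n)⁻¹ + (dlDelta1 σv lv α r1 n)⁻¹) := by
  have hmem0 : ∀ i, i ∈ dlI0 σv lv r0 ↔ σv i * r0 + lv i = 0 := fun i => by simp [dlI0]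
  have hmem1 : ∀ i, i ∈ dlI1 σv lv r1 ↔ σv i * r1 + lv i = 0 := fun i => by simp [dlI1]
  obtain ⟨C₀, hC₀0, N₀, hC₀⟩ := exists_norm_dlG_le_left σv lv τv mv α β hbalσ hbalL hR hα hβ r0
    hl0 (fun i hi => by
      have h1 := (hmem0 i).1 hi
      have h2 : 0 ≤ σv i * (r1 - r0) := by linarith [hl1 i]
      exact lt_of_le_of_ne (nonneg_of_mul_nonneg_left h2 (by linarith)) (hσ i).symm) hgen0
  obtain ⟨C₁, hC₁0, N₁, hC₁⟩ := exists_norm_dlG_le_right σv lv τv mv α β hbalσ hbalL hR hα hβ r1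
    hl1 (fun i hi => by
      have h1 := (hmem1 i).1 hi
      have h2 : 0 ≤ (-σv i) * (r1 - r0) := by linarith [hl0 i]
      have h3 := nonneg_of_mul_nonneg_left h2 (by linarith)
      exact lt_of_le_of_ne (by linarith) (hσ i)) hgen1
  set B := dlPhiMax σv lv τv mv r0 r1 with hBdef
  have hconv : ∀ s l t : ℝ, 0 ≤ s * r0 + l → 0 ≤ s * r1 + l → r0 ≤ t → t ≤ r1 →
      0 ≤ s * t + l := by
    intro s l t h0 h1 ht0 ht1
    have e : (r1 - r0) * (s * t + l) = (r1 - t) * (s * r0 + l) + (t - r0) * (s * r1 + l) := by ring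
    refine (mul_nonneg_iff_of_pos_left (sub_pos.2 hr01)).1 ?_
    rw [e]
    exact add_nonneg (mul_nonneg (by linarith) h0) (mul_nonneg (by linarith) h1)
  have himg : dlPhi σv lv τv mv '' Set.Icc r0 r1 =
      (fun t => Real.exp (dlLogPhi σv lv τv mv t)) '' Set.Icc r0 r1 :=
    Set.image_congr fun t ht => dlPhi_eq_exp σv lv τv mv
      (fun i => hconv _ _ _ (hl0 i) (hl1 i) ht.1 ht.2)
      (fun j => hconv _ _ _ (hm0 j) (hm1 j) ht.1 ht.2)
  have hB' : B = sSup ((fun t => Real.exp (dlLogPhi σv lv τv mv t)) '' Set.Icc r0 r1) := by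
    rw [hBdef, dlPhiMax, if_neg (EReal.coe_ne_top r1), EReal.toReal_coe, himg]
  have hBle : ∀ t, r0 ≤ t → t ≤ r1 → Real.exp (dlLogPhi σv lv τv mv t) ≤ B := by
    intro t h0 h1
    rw [hB']
    exact le_csSup (isCompact_Icc.bddAbove_image
      (Real.continuous_exp.comp (dlLogPhi_continuous σv lv τv mv)).continuousOn)
      ⟨t, ⟨h0, h1⟩, rfl⟩
  have hB0 : 0 < B := (Real.exp_pos _).trans_le (hBle r0 le_rfl hr01.le)
  have hr1 : 0 < r1 := hr0.trans_lt hr01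
  obtain ⟨K, hK0, hK⟩ := exists_bulk_bound σv lv τv mv α β hR hα hβ hr1.le hB0 hd
  refine ⟨(C₀ + C₁) * K, by positivity, max 1 (max N₀ N₁), fun n hn => ?_⟩
  have hn1 : 1 ≤ n := (le_max_left _ _).trans hn
  have hnN₀ : N₀ ≤ n := ((le_max_left _ _).trans (le_max_right _ _)).trans hn
  have hnN₁ : N₁ ≤ n := ((le_max_right _ _).trans (le_max_right _ _)).trans hn
  have hn0 : (0 : ℝ) < n := by exact_mod_cast hn1
  have hδ₀ := inv_nonneg.2 (dlDelta0_nonneg σv lv α r0 n)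
  have hδ₁ := inv_nonneg.2 (dlDelta1_nonneg σv lv α r1 n)
  set D := (dlDelta0 σv lv α r0 n)⁻¹ + (dlDelta1 σv lv α r1 n)⁻¹ with hD
  have hden : 0 < 1 + r1 * n := by positivity
  have hterm : ∀ k ∈ Finset.Ico ⌈r0 * n⌉ ⌈r1 * n⌉, ‖dlG σv lv τv mv α β k n‖ ≤
      (C₀ + C₁) * D * (K * d ^ n / (1 + r1 * n)) := by
    intro k hk
    rw [Finset.mem_Ico] at hk
    have hk0 : r0 * n ≤ k := Int.ceil_le.1 hk.1
    have hk1 : (k : ℝ) < r1 * n := Int.lt_ceil.1 hk.2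
    have hkn : (0 : ℤ) ≤ k := by
      have : (0 : ℝ) ≤ k := le_trans (by positivity) hk0
      exact_mod_cast this
    have ht0 : r0 ≤ k / n := (le_div_iff₀ hn0).2 hk0
    have ht1 : k / n ≤ r1 := (div_le_iff₀ hn0).2 hk1.le
    have hnn : ∀ s l : ℝ, 0 ≤ s * r0 + l → 0 ≤ s * r1 + l → 0 ≤ s * k + l * n := by
      intro s l h0 h1
      have e : s * k + l * n = (s * (k / n) + l) * n := by field_simp
      rw [e]
      exact mul_nonneg (hconv s l _ h0 h1 ht0 ht1) hn0.le
    have hx : ∀ i, 0 ≤ σv i * k + lv i * n := fun i => hnn _ _ (hl0 i) (hl1 i)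
    have hy : ∀ j, 0 ≤ τv j * k + mv j * n := fun j => hnn _ _ (hm0 j) (hm1 j)
    set E := Real.exp (dlPower σv lv τv mv α β k n + n * dlLogPhi σv lv τv mv (k / n)) with hE
    have hE0 : 0 ≤ E := (Real.exp_pos _).le
    have hEK : E ≤ K * d ^ n / (1 + r1 * n) := by
      rw [le_div_iff₀ hden, mul_comm]
      exact hK k n hn1 hkn hk1.le hx hy (hBle _ ht0 ht1)
    refine le_trans ?_ (mul_le_mul_of_nonneg_left hEK (by positivity))
    have e : ∀ i, (r1 - r0) * (σv i * k + lv i * n) =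
        (r1 * n - k) * (σv i * r0 + lv i) + (k - r0 * n) * (σv i * r1 + lv i) := fun i => by ring
    have hr : 0 < r1 - r0 := by linarith
    -- the midpoint of the range separates the influence of the two end points
    rcases le_total (k : ℝ) ((r0 + r1) / 2 * n) with hmid | hmid
    · refine (hC₀ k n hn1 hnN₀ hk.1 (fun i => ?_) hy).trans ?_
      · refine le_of_mul_le_mul_left ?_ hr
        rw [e]
        have h1 := mul_nonneg (show 0 ≤ k - r0 * n by linarith) (hl1 i)
        have h2 := mul_le_mul_of_nonneg_right
          (show (r1 - r0) / 2 * n ≤ r1 * n - k by linarith) (hl0 i)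
        linarith
      · gcongr
        · linarith
        · linarith
    · refine (hC₁ k n hn1 hnN₁ hk.2 (fun i => ?_) hy).trans ?_
      · refine le_of_mul_le_mul_left ?_ hr
        rw [e]
        have h1 := mul_nonneg (show 0 ≤ r1 * n - k by linarith) (hl0 i)
        have h2 := mul_le_mul_of_nonneg_right
          (show (r1 - r0) / 2 * n ≤ k - r0 * n by linarith) (hl1 i)
        linarith
      · gcongr
        · linarith
        · linarith
  rw [dlSum, if_neg (EReal.coe_ne_top r1), EReal.toReal_coe]
  refine (norm_sum_le_of_le _ hterm).trans ?_
  have hd0 : 0 < d := hB0.trans hd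
  rw [Finset.sum_const, Int.card_Ico, nsmul_eq_mul]
  have hcard : ((⌈r1 * n⌉ - ⌈r0 * n⌉).toNat : ℝ) ≤ 1 + r1 * n := by
    have h1 : (0 : ℤ) ≤ ⌈r1 * n⌉ - ⌈r0 * n⌉ := by
      have := Int.ceil_le_ceil (mul_le_mul_of_nonneg_right hr01.le hn0.le)
      linarith
    have h2 : ((⌈r1 * n⌉ - ⌈r0 * n⌉).toNat : ℝ) = (⌈r1 * n⌉ : ℝ) - ⌈r0 * n⌉ := by
      rw [← Int.cast_natCast, Int.toNat_of_nonneg h1]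
      push_cast
      rfl
    rw [h2]
    have h3 := Int.ceil_lt_add_one (r1 * n)
    have h4 := Int.le_ceil (r0 * n)
    have h5 : 0 ≤ r0 * n := by positivity
    linarith
  calc _ ≤ (1 + r1 * n) * ((C₀ + C₁) * D * (K * d ^ n / (1 + r1 * n))) := by gcongr
    _ = _ := by field_simp

/-- The two tail estimates combined: either way the summands with `k ≥ T n` are dominated by a
fixed summable sequence times `B ^ n`. -/
lemma exists_tail {ι κ : Type*} [Fintype ι] [Fintype κ]
    (σv lv : ι → ℝ) (τv mv : κ → ℝ) (α : ι → ℕ → ℂ) (β : κ → ℕ → ℂ)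
    (hbalσ : ∑ i, σv i = ∑ j, τv j) (hbalL : ∑ i, lv i = ∑ j, mv j)
    {R : ℝ} (hR : 0 < R) (hα : ∀ i n, ‖α i n‖ ≤ R) (hβ : ∀ j n, ‖β j n‖ ≤ R)
    (hσ : ∀ i, 0 < σv i) (hτ : ∀ j, 0 < τv j) {B : ℝ} (hB : 0 < B)
    (hinf : ∏ i, σv i ^ σv i ≤ ∏ j, τv j ^ τv j)
    (hconv : (∏ i, σv i ^ σv i) = ∏ j, τv j ^ τv j →
      ∃ s : ℝ, 0 < s ∧ ∀ n : ℕ, (dlGamma α β n).re ≤ -1 - s) :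
    ∃ T : ℝ, 0 ≤ T ∧
    ∃ c : ℕ → ℝ, (∀ k, 0 ≤ c k) ∧ Summable c ∧ ∀ k n : ℕ, 1 ≤ n → T * n ≤ k →
      (∀ i, 0 ≤ σv i * (k : ℤ) + lv i * n) → (∀ j, 0 ≤ τv j * (k : ℤ) + mv j * n) →
      Real.exp (dlLogPhi σv lv τv mv (k / n)) ≤ B →
      Real.exp (dlPower σv lv τv mv α β k n + n * dlLogPhi σv lv τv mv (k / n)) ≤ c k * B ^ n := by
  have hT := one_le_dlThreshold σv lv τv mv
  rcases hinf.eq_or_lt with heq | hlt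
  · obtain ⟨s, hs, hγ⟩ := hconv heq
    obtain ⟨c, hc0, hcs, hc⟩ := exists_tail_of_eq σv lv τv mv α β hα hβ hσ hτ (B := B) hs hγ
    exact ⟨_, by linarith, c, hc0, hcs, fun k n hn hk _ _ h => hc k n hn hk h⟩
  · rw [log_prod_rpow_self σv hσ, log_prod_rpow_self τv hτ, Real.exp_lt_exp] at hlt
    obtain ⟨T, hTT, c, hc0, hcs, hc⟩ := exists_tail_of_lt σv lv τv mv α β hbalσ hbalL hR hα hβ
      hσ hτ hB (sub_neg.2 hlt)
    exact ⟨T, by linarith, c, hc0, hcs, fun k n hn hk hx hy _ => hc k n hn hk hx hy⟩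

/-- Continuity at infinity makes `Φ` bounded on `[r₀, ∞)`, so that the supremum defining `Φ_max`
is a genuine one. -/
lemma bddAbove_exp_dlLogPhi {ι κ : Type*} [Fintype ι] [Fintype κ]
    (σv lv : ι → ℝ) (τv mv : κ → ℝ)
    (hbalσ : ∑ i, σv i = ∑ j, τv j) (hbalL : ∑ i, lv i = ∑ j, mv j)
    (hσ : ∀ i, 0 < σv i) (hτ : ∀ j, 0 < τv j)
    (hinf : ∏ i, σv i ^ σv i ≤ ∏ j, τv j ^ τv j) (r0 : ℝ) :
    BddAbove ((fun t => Real.exp (dlLogPhi σv lv τv mv t)) '' Set.Ici r0) := by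
  rw [log_prod_rpow_self σv hσ, log_prod_rpow_self τv hτ, Real.exp_le_exp] at hinf
  obtain ⟨C, -, hC⟩ := exists_dlLogPhi_le σv lv τv mv hbalσ hbalL hσ hτ
  obtain ⟨M, hM⟩ := (isCompact_Icc (a := r0) (b := dlThreshold σv lv τv mv)).bddAbove_image
    (Real.continuous_exp.comp (dlLogPhi_continuous σv lv τv mv)).continuousOn
  refine ⟨max M (Real.exp C), ?_⟩
  rintro _ ⟨t, ht, rfl⟩
  rcases le_total t (dlThreshold σv lv τv mv) with h | h
  · exact (hM ⟨t, ⟨ht, h⟩, rfl⟩).trans (le_max_left _ _)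
  · refine le_trans (Real.exp_le_exp.2 ?_) (le_max_right _ _)
    have h1 := hC t h
    have h2 := mul_nonneg (sub_nonneg.2 hinf)
      (show 0 ≤ t by linarith [one_le_dlThreshold σv lv τv mv])
    linarith

/-- The theorem for `r₁ = ∞`. -/
lemma crude_bound_infinite {ι κ : Type*} [Fintype ι] [Fintype κ]
    (σv lv : ι → ℝ) (τv mv : κ → ℝ) (α : ι → ℕ → ℂ) (β : κ → ℕ → ℂ)
    (r0 : ℝ) (hr0 : 0 ≤ r0)
    (hbalσ : ∑ i, σv i = ∑ j, τv j) (hbalL : ∑ i, lv i = ∑ j, mv j)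
    {R : ℝ} (hR : 0 < R) (hα : ∀ i n, ‖α i n‖ ≤ R) (hβ : ∀ j n, ‖β j n‖ ≤ R)
    (hl0 : ∀ i, 0 ≤ σv i * r0 + lv i) (hm0 : ∀ j, 0 ≤ τv j * r0 + mv j)
    (hσ : ∀ i, 0 < σv i) (hτ : ∀ j, 0 < τv j)
    (hgen0 : ∀ n : ℕ, ∀ i ∈ dlI0 σv lv r0, dlAlpha0 σv α r0 i n ∉ dlBad (σv i) 0)
    (hinf : ∏ i, σv i ^ σv i ≤ ∏ j, τv j ^ τv j)
    (hconv : (∏ i, σv i ^ σv i) = ∏ j, τv j ^ τv j →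
      ∃ s : ℝ, 0 < s ∧ ∀ n : ℕ, (dlGamma α β n).re ≤ -1 - s)
    (d : ℝ) (hd : dlPhiMax σv lv τv mv r0 ⊤ < d) :
    ∃ K : ℝ, 0 < K ∧ ∃ N : ℕ, ∀ n : ℕ, N ≤ n →
      ‖dlSum σv lv τv mv α β r0 ⊤ n‖ ≤
        K * d ^ n * ((dlDelta0 σv lv α r0 n)⁻¹ + (dlDelta1 σv lv α ⊤ n)⁻¹) := by
  obtain ⟨C₀, hC₀0, N₀, hC₀⟩ := exists_norm_dlG_le_left σv lv τv mv α β hbalσ hbalL hR hα hβ r0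
    hl0 (fun i _ => hσ i) hgen0
  set B := dlPhiMax σv lv τv mv r0 ⊤ with hBdef
  have hmono : ∀ s l t : ℝ, 0 < s → r0 ≤ t → s * r0 + l ≤ s * t + l := by
    intro s l t hs ht
    gcongr
  have himg : dlPhi σv lv τv mv '' Set.Ici r0 =
      (fun t => Real.exp (dlLogPhi σv lv τv mv t)) '' Set.Ici r0 :=
    Set.image_congr fun t ht => dlPhi_eq_exp σv lv τv mv
      (fun i => (hl0 i).trans (hmono _ _ _ (hσ i) ht))
      (fun j => (hm0 j).trans (hmono _ _ _ (hτ j) ht))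
  have hB' : B = sSup ((fun t => Real.exp (dlLogPhi σv lv τv mv t)) '' Set.Ici r0) := by
    rw [hBdef, dlPhiMax, if_pos rfl, himg]
  have hBle : ∀ t, r0 ≤ t → Real.exp (dlLogPhi σv lv τv mv t) ≤ B := by
    intro t h0
    rw [hB']
    exact le_csSup (bddAbove_exp_dlLogPhi σv lv τv mv hbalσ hbalL hσ hτ hinf r0) ⟨t, h0, rfl⟩
  have hB0 : 0 < B := (Real.exp_pos _).trans_le (hBle r0 le_rfl)
  have hd0 : 0 < d := hB0.trans hd
  obtain ⟨T, hT0, c, hc0, hcs, hc⟩ := exists_tail σv lv τv mv α β hbalσ hbalL hR hα hβ hσ hτ hB0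
    hinf hconv
  obtain ⟨K, hK0, hK⟩ := exists_bulk_bound σv lv τv mv α β hR hα hβ hT0 hB0 hd
  have hcsum : 0 ≤ ∑' k, c k := tsum_nonneg hc0
  refine ⟨C₀ * (K + ∑' k, c k), by positivity, max 1 N₀, fun n hn => ?_⟩
  have hn1 : 1 ≤ n := (le_max_left _ _).trans hn
  have hnN₀ : N₀ ≤ n := (le_max_right _ _).trans hn
  have hn0 : (0 : ℝ) < n := by exact_mod_cast hn1
  have hδ₀ := inv_nonneg.2 (dlDelta0_nonneg σv lv α r0 n)
  have hδ₁ := inv_nonneg.2 (dlDelta1_nonneg σv lv α ⊤ n)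
  have hden : 0 < 1 + T * n := by positivity
  obtain ⟨m, hm⟩ : ∃ m : ℕ, ⌈r0 * n⌉ = m :=
    Int.eq_ofNat_of_zero_le (Int.ceil_nonneg (by positivity))
  set s := Finset.range (⌊T * n⌋₊ + 1) with hs
  -- summands with `k ≤ T n` get an equal share of the bulk bound, the others a share of the tail
  let b : ℕ → ℝ := fun j => if j ∈ s then K * d ^ n / (1 + T * n) else 0
  have hb0 : ∀ j, 0 ≤ b j := fun j => by
    simp only [b]; split_ifs <;> positivity
  have hbsum : HasSum b (∑ j ∈ s, b j) := hasSum_sum_of_ne_finset_zero fun j hj => if_neg hj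
  have hbsum_le : ∑ j ∈ s, b j ≤ K * d ^ n := by
    have h1 : ∑ j ∈ s, b j = (⌊T * n⌋₊ + 1 : ℝ) * (K * d ^ n / (1 + T * n)) := by
      rw [Finset.sum_congr rfl fun j hj => if_pos hj, Finset.sum_const, hs, Finset.card_range,
        nsmul_eq_mul]
      push_cast
      rfl
    rw [h1]
    have h2 := Nat.floor_le (show 0 ≤ T * n by positivity)
    calc _ ≤ (1 + T * n) * (K * d ^ n / (1 + T * n)) := by gcongr ?_ * _; linarith
      _ = _ := by field_simp
  have hcshift : Summable fun j => c (j + m) := (summable_nat_add_iff m).2 hcs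
  have hcshift_le : ∑' j, c (j + m) ≤ ∑' k, c k := by
    rw [← hcs.sum_add_tsum_nat_add m]
    exact le_add_of_nonneg_left (Finset.sum_nonneg fun k _ => hc0 k)
  have hterm : ∀ j : ℕ, ‖dlG σv lv τv mv α β (⌈r0 * n⌉ + j) n‖ ≤
      C₀ * (dlDelta0 σv lv α r0 n)⁻¹ * (b j + c (j + m) * d ^ n) := by
    intro j
    have ek : ⌈r0 * n⌉ + (j : ℤ) = ((j + m : ℕ) : ℤ) := by rw [hm]; push_cast; ring
    rw [ek]
    set k := j + m with hk
    have hk0 : r0 * n ≤ k := by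
      have h1 := Int.le_ceil (r0 * n)
      rw [hm, Int.cast_natCast] at h1
      rw [hk]
      push_cast
      linarith [Nat.cast_nonneg (α := ℝ) j]
    have ht0 : r0 ≤ k / n := (le_div_iff₀ hn0).2 hk0
    have hx' : ∀ s l : ℝ, 0 < s → (s * r0 + l) * n ≤ s * (k : ℤ) + l * n := by
      intro s l h
      have := mul_le_mul_of_nonneg_left hk0 h.le
      push_cast
      linarith
    have hx : ∀ i, 0 ≤ σv i * (k : ℤ) + lv i * n :=
      fun i => (mul_nonneg (hl0 i) hn0.le).trans (hx' _ _ (hσ i))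
    have hy : ∀ j, 0 ≤ τv j * (k : ℤ) + mv j * n :=
      fun j => (mul_nonneg (hm0 j) hn0.le).trans (hx' _ _ (hτ j))
    refine (hC₀ k n hn1 hnN₀ (by rw [hm, hk]; push_cast; lia) (fun i => ?_) hy).trans ?_
    · refine le_trans ?_ (hx' _ _ (hσ i))
      have := mul_nonneg (hl0 i) hn0.le
      linarith
    · gcongr
      rcases le_total (k : ℝ) (T * n) with hkT | hkT
      · have hj : j ∈ s := by
          rw [hs, Finset.mem_range, Nat.lt_succ_iff]
          refine Nat.le_floor (le_trans ?_ hkT)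
          rw [hk]; push_cast; linarith [Nat.cast_nonneg (α := ℝ) m]
        have h1 := hK k n hn1 (by positivity) (by simpa using hkT) hx hy
          (by simpa using hBle _ ht0)
        have h2 : b j = K * d ^ n / (1 + T * n) := if_pos hj
        have h3 := mul_nonneg (hc0 k) (pow_nonneg hd0.le n)
        rw [h2]
        refine le_add_of_le_of_nonneg ?_ h3
        rw [le_div_iff₀ hden, mul_comm]
        exact h1
      · have h1 := hc k n hn1 hkT hx hy (hBle _ ht0)
        refine le_add_of_nonneg_of_le (hb0 j) ?_
        have h2 : c k * B ^ n ≤ c k * d ^ n := by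
          have := hc0 k
          gcongr
        refine le_trans ?_ h2
        simpa using h1
  rw [dlSum, if_pos rfl]
  refine (tsum_of_norm_bounded
    ((hbsum.add (hcshift.hasSum.mul_right (d ^ n))).mul_left _) hterm).trans ?_
  calc _ ≤ C₀ * (dlDelta0 σv lv α r0 n)⁻¹ * (K * d ^ n + (∑' k, c k) * d ^ n) := by gcongr
    _ = C₀ * (K + ∑' k, c k) * d ^ n * (dlDelta0 σv lv α r0 n)⁻¹ := by ring
    _ ≤ _ := by
        gcongr
        linarith

/-- In the discrete Laplace setup, under balancedness, boundedness,
admissibility, genericness, continuity at infinity and convergence (when `r₁ = ∞`),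
but with no properness assumption: for any `d > Φ_max` there exist `K > 0` and `N`
such that `|g(n)| ≤ K·dⁿ·(δ₀(n)⁻¹ + δ₁(n)⁻¹)` for all `n ≥ N`. -/
theorem discrete_laplace_crude_bound {ι κ : Type*} [Fintype ι] [Fintype κ]
    (σv lv : ι → ℝ) (τv mv : κ → ℝ) (α : ι → ℕ → ℂ) (β : κ → ℕ → ℂ)
    (r0 : ℝ) (r1 : EReal)
    (hr0 : 0 ≤ r0) (hr01 : (r0 : EReal) < r1)
    (hbalσ : ∑ i, σv i = ∑ j, τv j) (hbalL : ∑ i, lv i = ∑ j, mv j)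
    (R : ℝ) (hR : 0 < R)
    (hα : ∀ i n, ‖α i n‖ ≤ R) (hβ : ∀ j n, ‖β j n‖ ≤ R)
    (hσ : ∀ i, σv i ≠ 0) (hτ : ∀ j, τv j ≠ 0)
    (hl0 : ∀ i, 0 ≤ σv i * r0 + lv i) (hm0 : ∀ j, 0 ≤ τv j * r0 + mv j)
    (hl1 : ∀ i, (∀ y : ℝ, r1 = (y : EReal) → 0 ≤ σv i * y + lv i) ∧ (r1 = ⊤ → 0 < σv i))
    (hm1 : ∀ j, (∀ y : ℝ, r1 = (y : EReal) → 0 ≤ τv j * y + mv j) ∧ (r1 = ⊤ → 0 < τv j))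
    (hgen0 : ∀ n : ℕ, ∀ i ∈ dlI0 σv lv r0, dlAlpha0 σv α r0 i n ∉ dlBad (σv i) 0)
    (hgen1 : ∀ n : ℕ, ∀ i ∈ dlI1 σv lv r1, dlAlpha1 σv α r1 i n ∉ dlBad (σv i) 1)
    (hinf : r1 = ⊤ → ∏ i, σv i ^ σv i ≤ ∏ j, τv j ^ τv j)
    (hconv : r1 = ⊤ → (∏ i, σv i ^ σv i) = ∏ j, τv j ^ τv j →
      ∃ s : ℝ, 0 < s ∧ ∀ n : ℕ, (dlGamma α β n).re ≤ -1 - s) :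
    ∀ d : ℝ, dlPhiMax σv lv τv mv r0 r1 < d →
      ∃ K : ℝ, 0 < K ∧ ∃ N : ℕ, ∀ n : ℕ, N ≤ n →
        ‖dlSum σv lv τv mv α β r0 r1 n‖ ≤
          K * d ^ n * ((dlDelta0 σv lv α r0 n)⁻¹ + (dlDelta1 σv lv α r1 n)⁻¹) := by
  intro d hd
  induction r1 using EReal.rec with
  | bot => exact absurd hr01 not_lt_bot
  | coe y =>
    exact crude_bound_finite σv lv τv mv α β r0 y hr0 (EReal.coe_lt_coe_iff.1 hr01) hbalσ hbalL hR
      hα hβ hσ hl0 hm0 (fun i => (hl1 i).1 y rfl) (fun j => (hm1 j).1 y rfl) hgen0 hgen1 d hd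
  | top =>
    exact crude_bound_infinite σv lv τv mv α β r0 hr0 hbalσ hbalL hR hα hβ hl0 hm0
      (fun i => (hl1 i).2 rfl) (fun j => (hm1 j).2 rfl) hgen0 (hinf rfl) (hconv rfl) d hd
end

section
/- For every z ∈ ℂ ∖ ℤ≤0 and every integer m with m ≥ 1 + |Re z|, one has |Γ(z)| ≤ 2·|Γ(z+m)| / dist(z, ℤ≤0), where dist(z, ℤ≤0) denotes the distance in ℂ from z to the set of nonpositive integers. -/
/-!
Iterating `Γ(s + 1) = s Γ(s)` gives `Γ(z + m) = Γ(z) ∏_{j < m} (z + j)`, so with `d` the distance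
from `z` to the nonpositive integers the claim is `d ≤ 2 ∏_{j < m} ‖z + j‖`. Each factor is at
least `d`, being the distance from `z` to `-j`, and at least `|Re z + j|`. Put `n = ⌊-Re z⌋₊`.
If `-Re z ≤ n`, every factor except `j = n` is at least `1`. Otherwise `n < -Re z < n + 1`, and
`m ≥ 1 + |Re z|` forces `n + 1 < m`; every factor except `j = n` and `j = n + 1` is at least `1`,
and one of these two is at least `1/2`.
-/

lemma Gamma_add_natCast_eq_mul_prod (z : ℂ) (hz : ∀ j : ℕ, z + j ≠ 0) (m : ℕ) :
    Complex.Gamma (z + m) = Complex.Gamma z * ∏ j ∈ Finset.range m, (z + j) := by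
  induction m with
  | zero => simp
  | succ m ih =>
    rw [Finset.prod_range_succ, Nat.cast_succ, ← add_assoc, Complex.Gamma_add_one _ (hz m), ih]
    ring

/-- Factors that are at least `1` may be dropped from a lower bound for a product. -/
lemma prod_le_prod_range_of_one_le (f : ℕ → ℝ) (hf : ∀ j, 0 ≤ f j) (m : ℕ) (S : Finset ℕ)
    (hS : S ⊆ Finset.range m) (h : ∀ j, j ∉ S → 1 ≤ f j) :
    ∏ j ∈ S, f j ≤ ∏ j ∈ Finset.range m, f j := by
  rw [← Finset.prod_sdiff hS]
  refine le_mul_of_one_le_left (Finset.prod_nonneg fun j _ => hf j) ?_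
  have := Finset.prod_le_prod (s := Finset.range m \ S) (f := fun _ => (1 : ℝ)) (g := f)
    (fun _ _ => zero_le_one) (fun j hj => h j (Finset.mem_sdiff.1 hj).2)
  simpa using this

lemma le_two_mul_prod_norm_add (z : ℂ) (d : ℝ) (hd : 0 ≤ d) (hdz : ∀ j : ℕ, d ≤ ‖z + j‖)
    (m : ℕ) (hm : 1 + |z.re| ≤ (m : ℝ)) :
    d ≤ 2 * ∏ j ∈ Finset.range m, ‖z + j‖ := by
  have hre : ∀ j : ℕ, |z.re + j| ≤ ‖z + j‖ := fun j => by
    simpa using Complex.abs_re_le_norm (z + j)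
  have hx := neg_le_abs z.re
  have hx0 := abs_nonneg z.re
  set n := ⌊-z.re⌋₊ with hn
  have hlt : -z.re < n + 1 := Nat.lt_floor_add_one _
  have hle : n ≠ 0 → (n : ℝ) ≤ -z.re := fun h => (Nat.le_floor_iff' h).1 le_rfl
  have hlow : ∀ j : ℕ, j < n → 1 ≤ ‖z + j‖ := fun j hj => by
    have h1 := hle (by omega)
    have h2 : (j : ℝ) + 1 ≤ n := by exact_mod_cast hj
    have h3 := neg_le_abs (z.re + j)
    linarith [hre j]
  rcases le_or_gt (-z.re) n with h | h
  · have hnm : n < m := by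
      have : (n : ℝ) < m := by
        by_cases h0 : n = 0
        · rw [h0]; push_cast; linarith
        · linarith [hle h0]
      exact_mod_cast this
    have key := prod_le_prod_range_of_one_le (fun j => ‖z + j‖) (fun _ => norm_nonneg _) m {n}
      (by simpa using hnm) (fun j hj => by
        rcases lt_or_gt_of_ne (by simpa using hj) with h' | h'
        · exact hlow j h'
        · have h2 : (n : ℝ) + 1 ≤ j := by exact_mod_cast h'
          linarith [hre j, le_abs_self (z.re + j)])
    rw [Finset.prod_singleton] at key
    linarith [hdz n]
  · have hnm : n + 1 < m := by
      have : (n : ℝ) + 1 < m := by linarith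
      exact_mod_cast this
    have key := prod_le_prod_range_of_one_le (fun j => ‖z + j‖) (fun _ => norm_nonneg _) m
      {n, n + 1} (by intro j; simp; omega) (fun j hj => by
        simp only [Finset.mem_insert, Finset.mem_singleton, not_or] at hj
        rcases lt_or_gt_of_ne hj.1 with h' | h'
        · exact hlow j h'
        · have h2 : (n : ℝ) + 2 ≤ j := by exact_mod_cast (by omega : n + 2 ≤ j)
          linarith [hre j, le_abs_self (z.re + j)])
    rw [Finset.prod_pair (by omega)] at key
    have h1 := hdz n
    have h2 := hdz (n + 1)
    have h3 := hre n
    have h4 := hre (n + 1)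
    have h5 := neg_le_abs (z.re + n)
    have h6 := le_abs_self (z.re + (n + 1 : ℕ))
    have h7 : ((n + 1 : ℕ) : ℝ) = n + 1 := by push_cast; ring
    rcases le_total (1 / 2) ‖z + n‖ with h8 | h8
    · nlinarith
    · have h9 : 1 / 2 ≤ ‖z + (n + 1 : ℕ)‖ := by linarith
      nlinarith

/-- For every `z ∈ ℂ ∖ ℤ≤0` and every integer `m` with
`m ≥ 1 + |Re z|`, one has `|Γ(z)| ≤ 2·|Γ(z+m)| / dist(z, ℤ≤0)`. -/
theorem gamma_le_two_gamma_shift_div_infDist (z : ℂ)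
    (hz : ∀ k : ℤ, k ≤ 0 → z ≠ (k : ℂ)) (m : ℤ) (hm : 1 + |z.re| ≤ (m : ℝ)) :
    ‖Complex.Gamma z‖ ≤
      2 * ‖Complex.Gamma (z + (m : ℂ))‖ /
        Metric.infDist z {w : ℂ | ∃ k : ℤ, k ≤ 0 ∧ w = (k : ℂ)} := by
  have hm0 : 0 ≤ m := by
    have : (0 : ℝ) ≤ m := by linarith [abs_nonneg z.re]
    exact_mod_cast this
  lift m to ℕ using hm0
  push_cast at hm ⊢
  set T : Set ℂ := {w : ℂ | ∃ k : ℤ, k ≤ 0 ∧ w = (k : ℂ)} with hT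
  have hzj : ∀ j : ℕ, z + j ≠ 0 := fun j h =>
    hz (-j) (by omega) (by push_cast; exact eq_neg_of_add_eq_zero_left h)
  have hdz : ∀ j : ℕ, Metric.infDist z T ≤ ‖z + j‖ := fun j => by
    have hmem : (-(j : ℂ)) ∈ T := ⟨-j, by omega, by push_cast; rfl⟩
    simpa [dist_eq_norm] using Metric.infDist_le_dist_of_mem (x := z) hmem
  -- The integers are closed and discrete in `ℂ`, so a point outside `T` has positive distance.
  have hclosed : IsClosed T := by
    have : T = ((↑) : ℤ → ℂ) '' Set.Iic 0 := by
      ext w; simp [hT, eq_comm]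
    rw [this]
    exact Complex.isClosedEmbedding_intCast.isClosedMap _ (isClosed_discrete _)
  have hpos : 0 < Metric.infDist z T :=
    (hclosed.notMem_iff_infDist_pos ⟨0, 0, le_rfl, by simp⟩).1
      (by rintro ⟨k, hk, h⟩; exact hz k hk h)
  rw [le_div_iff₀ hpos, Gamma_add_natCast_eq_mul_prod z hzj, norm_mul, norm_prod]
  have := mul_le_mul_of_nonneg_left (le_two_mul_prod_norm_add z _ hpos.le hdz m hm)
    (norm_nonneg (Complex.Gamma z))
  linarith
end

section
/- Let a, b > 0, m ≥ 1 a real number, 0 < ε ≤ a/(4b), and let δ : ℝ → ℝ satisfy |δ(x)| ≤ (b/m)|x|³ for all |x| ≤ εm. Set ψ(x;a) := e^{−a x² + δ(x)} and φ(x;a) := e^{−a x²}. Then for all real x, y with |x| ≤ εm, |y| ≤ εm and |y − x| ≤ 1/m, one has |ψ(y;a) − φ(x;a)| ≤ (M₃(a,b)/m) · φ(x; a/4), where M₃(a,b) := M₁(a) + b·M₂(a) + b·M₁(a/2)·M₂(a), with M₁(a) := a · sup_{x∈ℝ} (2|x|+1)·e^{−(a/2)(x² − 4|x| − 2)} and M₂(a)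 := sup_{x∈ℝ} |x|³ e^{−(a/4)x²} (both finite). -/
/-!
Giving up half of the Gaussian decay pays for every polynomial factor and for the shift of the
argument by at most `1 / m ≤ 1`. By the mean value inequality for `exp`,
`|φ(y;a) - φ(x;a)| ≤ (M₁(a) / m) φ(x;a/2)` (`abs_gaussPhi_sub_le`), because
`|y² - x²| ≤ (2|x| + 1) / m`. The perturbation satisfies `|δ(y)| ≤ (a / 4) y²` on the range allowed
by `ε`, so the same inequality gives `|ψ(y;a) - φ(y;a)| ≤ (b / m) M₂(a) φ(y;a/2)`
(`abs_exp_perturbed_sub_le`). Moving `φ(y;a/2)` back to `x` by the first estimate, now with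
parameter `a / 2`, and adding the two bounds gives `M₃(a,b)`.
The suprema in `M₁`, `M₂` are real-valued, hence usable only once boundedness is known
(`bddAbove_gaussM1`, `bddAbove_gaussM2`).
-/

/-- `φ(x;a) := exp(−a x²)`. -/
noncomputable def gaussPhi (x a : ℝ) : ℝ := Real.exp (-a * x ^ 2)

/-- `M₁(a) := a · sup_{x∈ℝ} (2|x|+1)·exp(−(a/2)(x² − 4|x| − 2))`. -/
noncomputable def gaussM1 (a : ℝ) : ℝ :=
  a * ⨆ t : ℝ, (2 * |t| + 1) * Real.exp (-(a / 2) * (t ^ 2 - 4 * |t| - 2))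

/-- `M₂(a) := sup_{x∈ℝ} |x|³·exp(−(a/4)x²)`. -/
noncomputable def gaussM2 (a : ℝ) : ℝ :=
  ⨆ t : ℝ, |t| ^ 3 * Real.exp (-(a / 4) * t ^ 2)

/-- `M₃(a,b) := M₁(a) + b·M₂(a) + b·M₁(a/2)·M₂(a)`. -/
noncomputable def gaussM3 (a b : ℝ) : ℝ :=
  gaussM1 a + b * gaussM2 a + b * gaussM1 (a / 2) * gaussM2 a

/-- Mean value inequality for `exp`, with the maximum of the exponents replaced by an upper
bound `r`. -/
theorem abs_exp_sub_exp_le {p q r : ℝ} (hp : p ≤ r) (hq : q ≤ r) :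
    |Real.exp p - Real.exp q| ≤ |p - q| * Real.exp r := by
  have key : ∀ u v : ℝ, u ≤ r → Real.exp u - Real.exp v ≤ |u - v| * Real.exp r := by
    intro u v hu
    have h1 : Real.exp v = Real.exp u * Real.exp (v - u) := by
      rw [← Real.exp_add]; ring_nf
    have h2 : 1 - Real.exp (v - u) ≤ |u - v| := by
      linarith [Real.add_one_le_exp (v - u), le_abs_self (u - v)]
    calc Real.exp u - Real.exp v = (1 - Real.exp (v - u)) * Real.exp u := by rw [h1]; ring
      _ ≤ |u - v| * Real.exp u := by gcongr
      _ ≤ |u - v| * Real.exp r := by gcongr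
  rw [abs_sub_le_iff]
  exact ⟨key p q hp, by simpa only [abs_sub_comm] using key q p hq⟩

theorem bddAbove_gaussM1 {a : ℝ} (ha : 0 < a) :
    BddAbove (Set.range fun t : ℝ =>
      (2 * |t| + 1) * Real.exp (-(a / 2) * (t ^ 2 - 4 * |t| - 2))) := by
  refine ⟨(2 + 4 / a) * Real.exp (5 * a), ?_⟩
  rintro _ ⟨t, rfl⟩
  have hsq : |t| ^ 2 = t ^ 2 := sq_abs t
  -- Half of `t ^ 2` absorbs `4 * |t|`; the other half absorbs the linear factor.
  have h1 : -(a / 2) * (t ^ 2 - 4 * |t| - 2) ≤ 5 * a - a / 4 * t ^ 2 := by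
    nlinarith [mul_nonneg ha.le (sq_nonneg (|t| - 4))]
  have h2 : 2 * |t| + 1 ≤ (2 + 4 / a) * Real.exp (a / 4 * t ^ 2) := by
    have h3 := Real.add_one_le_exp (a / 4 * t ^ 2)
    calc 2 * |t| + 1 ≤ t ^ 2 + 2 := by nlinarith [sq_nonneg (|t| - 1)]
      _ ≤ (2 + 4 / a) * (a / 4 * t ^ 2 + 1) := by
        have : (2 + 4 / a) * (a / 4 * t ^ 2 + 1) = a / 2 * t ^ 2 + 2 + t ^ 2 + 4 / a := by
          field_simp; ring
        rw [this]
        have : 0 ≤ a / 2 * t ^ 2 + 4 / a := by positivity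
        linarith
      _ ≤ _ := by gcongr
  calc (2 * |t| + 1) * Real.exp (-(a / 2) * (t ^ 2 - 4 * |t| - 2))
      ≤ ((2 + 4 / a) * Real.exp (a / 4 * t ^ 2)) * Real.exp (5 * a - a / 4 * t ^ 2) := by
        gcongr
    _ = (2 + 4 / a) * Real.exp (5 * a) := by
        rw [mul_assoc, ← Real.exp_add]; ring_nf

theorem bddAbove_gaussM2 {a : ℝ} (ha : 0 < a) :
    BddAbove (Set.range fun t : ℝ => |t| ^ 3 * Real.exp (-(a / 4) * t ^ 2)) := by
  refine ⟨1 + 32 / a ^ 2, ?_⟩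
  rintro _ ⟨t, rfl⟩
  have h1 : |t| ^ 3 ≤ (1 + 32 / a ^ 2) * Real.exp (a / 4 * t ^ 2) := by
    have h3 := Real.quadratic_le_exp_of_nonneg (show 0 ≤ a / 4 * t ^ 2 by positivity)
    have hsq : |t| ^ 2 = t ^ 2 := sq_abs t
    have h4 : |t| ^ 3 ≤ 1 + t ^ 4 := by
      have : t ^ 4 = |t| ^ 4 := by rw [show 4 = 2 * 2 from rfl, pow_mul, pow_mul, hsq]
      rw [this]
      nlinarith [sq_nonneg (|t| ^ 2 - |t|), sq_nonneg (|t| - 1), sq_nonneg (|t| ^ 2 - 1),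
        abs_nonneg t]
    calc |t| ^ 3 ≤ 1 + t ^ 4 := h4
      _ ≤ (1 + 32 / a ^ 2) * (1 + (a / 4 * t ^ 2) ^ 2 / 2) := by
        have : (1 + 32 / a ^ 2) * (1 + (a / 4 * t ^ 2) ^ 2 / 2)
            = 1 + t ^ 4 + (32 / a ^ 2 + (a / 4 * t ^ 2) ^ 2 / 2) := by
          field_simp; ring
        rw [this]
        have : 0 ≤ 32 / a ^ 2 + (a / 4 * t ^ 2) ^ 2 / 2 := by positivity
        linarith
      _ ≤ _ := by
        gcongr
        have : 0 ≤ a / 4 * t ^ 2 := by positivity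
        linarith
  calc |t| ^ 3 * Real.exp (-(a / 4) * t ^ 2)
      ≤ ((1 + 32 / a ^ 2) * Real.exp (a / 4 * t ^ 2)) * Real.exp (-(a / 4) * t ^ 2) := by
        gcongr
    _ = 1 + 32 / a ^ 2 := by
        rw [mul_assoc, ← Real.exp_add]; simp

theorem gaussM1_nonneg {a : ℝ} (ha : 0 < a) : 0 ≤ gaussM1 a :=
  mul_nonneg ha.le (Real.iSup_nonneg fun _ => by positivity)

theorem gaussM2_nonneg (a : ℝ) : 0 ≤ gaussM2 a :=
  Real.iSup_nonneg fun _ => by positivity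

theorem gaussPhi_anti {x c d : ℝ} (h : c ≤ d) : gaussPhi x d ≤ gaussPhi x c := by
  unfold gaussPhi
  gcongr

theorem abs_gaussPhi_sub_le {a m x y : ℝ} (ha : 0 < a) (hm : 1 ≤ m) (hxy : |y - x| ≤ 1 / m) :
    |gaussPhi y a - gaussPhi x a| ≤ gaussM1 a / m * gaussPhi x (a / 2) := by
  have hm0 : 0 < m := by linarith
  have hm1 : 1 / m ≤ 1 := by rw [div_le_one hm0]; exact hm
  have hsum : |y + x| ≤ 2 * |x| + 1 := by
    calc |y + x| = |(y - x) + 2 * x| := by ring_nf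
      _ ≤ |y - x| + |2 * x| := abs_add_le _ _
      _ ≤ 2 * |x| + 1 := by rw [abs_mul, abs_two]; linarith
  have hsq : |y ^ 2 - x ^ 2| ≤ (2 * |x| + 1) / m := by
    calc |y ^ 2 - x ^ 2| = |y + x| * |y - x| := by rw [← abs_mul]; ring_nf
      _ ≤ (2 * |x| + 1) * (1 / m) := by gcongr
      _ = (2 * |x| + 1) / m := by ring
  have hsq1 : |y ^ 2 - x ^ 2| ≤ 2 * |x| + 1 :=
    hsq.trans (div_le_self (by positivity) hm)
  have hlow := (abs_le.mp hsq1).1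
  -- Both `x ^ 2` and `y ^ 2` are at least `x ^ 2 - 2 * |x| - 1`.
  have h1 := abs_exp_sub_exp_le (p := -a * y ^ 2) (q := -a * x ^ 2)
    (r := -a * (x ^ 2 - 2 * |x| - 1)) (by nlinarith) (by nlinarith [abs_nonneg x])
  have h2 : |-a * y ^ 2 - -a * x ^ 2| = a * |y ^ 2 - x ^ 2| := by
    rw [← mul_sub, abs_mul, abs_neg, abs_of_pos ha]
  have h3 : Real.exp (-a * (x ^ 2 - 2 * |x| - 1)) =
      Real.exp (-(a / 2) * (x ^ 2 - 4 * |x| - 2)) * Real.exp (-(a / 2) * x ^ 2) := by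
    rw [← Real.exp_add]; ring_nf
  have h4 := le_ciSup (bddAbove_gaussM1 ha) x
  rw [h2, h3] at h1
  unfold gaussPhi gaussM1
  refine h1.trans ?_
  calc a * |y ^ 2 - x ^ 2| *
        (Real.exp (-(a / 2) * (x ^ 2 - 4 * |x| - 2)) * Real.exp (-(a / 2) * x ^ 2))
      ≤ a * ((2 * |x| + 1) / m) *
        (Real.exp (-(a / 2) * (x ^ 2 - 4 * |x| - 2)) * Real.exp (-(a / 2) * x ^ 2)) := by
        gcongr
    _ = a * ((2 * |x| + 1) * Real.exp (-(a / 2) * (x ^ 2 - 4 * |x| - 2))) / m *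
        Real.exp (-(a / 2) * x ^ 2) := by ring
    _ ≤ _ := by gcongr

/-- Pointwise effect of the perturbation, with `d` in the role of `δ(y)`. -/
theorem abs_exp_perturbed_sub_le {a b m ε y d : ℝ} (ha : 0 < a) (hb : 0 < b) (hm : 0 < m)
    (hεa : ε ≤ a / (4 * b)) (hy : |y| ≤ ε * m) (hd : |d| ≤ b / m * |y| ^ 3) :
    |Real.exp (-a * y ^ 2 + d) - gaussPhi y a| ≤ b / m * gaussM2 a * gaussPhi y (a / 2) := by
  have hd2 : |d| ≤ a / 4 * y ^ 2 := by
    have hbε : b * ε ≤ a / 4 := by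
      calc b * ε ≤ b * (a / (4 * b)) := by gcongr
        _ = a / 4 := by field_simp
    calc |d| ≤ b / m * |y| ^ 3 := hd
      _ = b / m * y ^ 2 * |y| := by rw [← sq_abs y]; ring
      _ ≤ b / m * y ^ 2 * (ε * m) := by gcongr
      _ = b * ε * y ^ 2 := by field_simp
      _ ≤ a / 4 * y ^ 2 := by gcongr
  -- Of the decay `3 * a / 4` left after the perturbation, the share `a / 4` absorbs `|y| ^ 3`.
  have h1 := abs_exp_sub_exp_le (p := -a * y ^ 2 + d) (q := -a * y ^ 2)
    (r := -(a / 4) * y ^ 2 + -(a / 2) * y ^ 2)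
    (by linarith [le_abs_self d]) (by nlinarith [mul_nonneg ha.le (sq_nonneg y)])
  rw [add_sub_cancel_left, Real.exp_add (-(a / 4) * y ^ 2)] at h1
  have h2 := le_ciSup (bddAbove_gaussM2 ha) y
  unfold gaussPhi gaussM2
  refine h1.trans ?_
  calc |d| * (Real.exp (-(a / 4) * y ^ 2) * Real.exp (-(a / 2) * y ^ 2))
      ≤ b / m * |y| ^ 3 * (Real.exp (-(a / 4) * y ^ 2) * Real.exp (-(a / 2) * y ^ 2)) := by
        gcongr
    _ = b / m * (|y| ^ 3 * Real.exp (-(a / 4) * y ^ 2)) * Real.exp (-(a / 2) * y ^ 2) := by ring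
    _ ≤ _ := by gcongr

/-- Let `a, b > 0`, `m ≥ 1`, `0 < ε ≤ a/(4b)`, and
`|δ(x)| ≤ (b/m)|x|³` for `|x| ≤ εm`.  With `ψ(x;a) := exp(−a x² + δ(x))`,
for all `x, y` with `|x| ≤ εm`, `|y| ≤ εm`, `|y − x| ≤ 1/m`, one has
`|ψ(y;a) − φ(x;a)| ≤ (M₃(a,b)/m)·φ(x;a/4)`. -/
theorem perturbed_gauss_approx (a b m ε : ℝ) (ha : 0 < a) (hb : 0 < b)
    (hm : 1 ≤ m) (hε : 0 < ε) (hεa : ε ≤ a / (4 * b))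
    (δ : ℝ → ℝ) (hδ : ∀ x : ℝ, |x| ≤ ε * m → |δ x| ≤ b / m * |x| ^ 3)
    (x y : ℝ) (hx : |x| ≤ ε * m) (hy : |y| ≤ ε * m) (hxy : |y - x| ≤ 1 / m) :
    |Real.exp (-a * y ^ 2 + δ y) - gaussPhi x a| ≤
      gaussM3 a b / m * gaussPhi x (a / 4) := by
  have hm0 : 0 < m := by linarith
  have ha2 : 0 < a / 2 := by positivity
  have hM1 := gaussM1_nonneg ha
  have hM1h := gaussM1_nonneg ha2
  have hM2 := gaussM2_nonneg a
  have hpos : 0 ≤ gaussPhi x (a / 4) := (Real.exp_pos _).le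
  have hanti : gaussPhi x (a / 2) ≤ gaussPhi x (a / 4) := gaussPhi_anti (by linarith)
  have h1 := abs_exp_perturbed_sub_le ha hb hm0 hεa hy (hδ y hy)
  have h2 : |gaussPhi y a - gaussPhi x a| ≤ gaussM1 a / m * gaussPhi x (a / 4) :=
    (abs_gaussPhi_sub_le ha hm hxy).trans (by gcongr)
  have h3 : gaussPhi y (a / 2) ≤ (1 + gaussM1 (a / 2)) * gaussPhi x (a / 4) := by
    have h4 := (le_abs_self _).trans (abs_gaussPhi_sub_le ha2 hm hxy)
    rw [show a / 2 / 2 = a / 4 by ring] at h4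
    have h5 : gaussM1 (a / 2) / m * gaussPhi x (a / 4) ≤
        gaussM1 (a / 2) * gaussPhi x (a / 4) := by
      gcongr
      exact div_le_self hM1h hm
    linarith
  calc |Real.exp (-a * y ^ 2 + δ y) - gaussPhi x a|
      ≤ |Real.exp (-a * y ^ 2 + δ y) - gaussPhi y a| + |gaussPhi y a - gaussPhi x a| :=
        abs_sub_le _ _ _
    _ ≤ b / m * gaussM2 a * ((1 + gaussM1 (a / 2)) * gaussPhi x (a / 4)) +
        gaussM1 a / m * gaussPhi x (a / 4) := by
        refine add_le_add (h1.trans ?_) h2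
        gcongr
    _ = gaussM3 a b / m * gaussPhi x (a / 4) := by unfold gaussM3; ring
end
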